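/- arXiv:1311.0885 — 4 statements merged into one kernel-verified Lean document; each statement's English description precedes it below -/
import Mathlib

section
/- There exist constants c₁, c₂, c₃ > 0 and a natural number n₀ such that for every n ≥ n₀ there exist natural numbers r_X, r_Z and matrices A_X : Matrix (Fin r_X) (Fin n) (ZMod 2) and A_Z : Matrix (Fin r_Z) (Fin n) (ZMod 2) satisfying: (i) A_X · A_Zᵀ = 0; (ii) n − rank(A_X) − rank(A_Z) ≥ c₁·n; (iii) every vector v : Fin n → ZMod 2 with A_X·v = 0 that does not lie in the row space of A_Z has wt(v) ≥ c₂·n, and every v with A_Z·v = 0 that does not lie in the row space of A_X has wt(v) ≥ c₂·n; (iv) every row and every column of A_X and of A_Z has at most c₃·√n nonzero entries. -/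
/-- The weight of a vector over `ZMod 2`: its number of nonzero entries. -/
def wt {n : ℕ} (v : Fin n → ZMod 2) : ℕ :=
  (Finset.univ.filter fun i => v i ≠ 0).card


lemma css_count_light {I : Type*} [Fintype I] [DecidableEq I] (t : ℕ)
    (hN : Fintype.card I = 2 ^ 15 * t) :
    (Finset.univ.filter fun v : I → ZMod 2 => hammingNorm v ≤ t).card ≤ 2 ^ (32 * t) := by
  have key : ∑ v : I → ZMod 2, (1 / 4096 : ℝ) ^ hammingNorm v = (1 + 1 / 4096) ^ Fintype.card I := by
    have h1 : ∀ v : I → ZMod 2, (1 / 4096 : ℝ) ^ hammingNorm v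
        = ∏ i, (if v i ≠ 0 then (1 / 4096 : ℝ) else 1) := by
      intro v
      rw [Finset.prod_ite]
      simp [hammingNorm]
    simp_rw [h1]
    have := Finset.prod_univ_sum (fun _ : I => (Finset.univ : Finset (ZMod 2)))
      (fun _ x => if x ≠ 0 then (1 / 4096 : ℝ) else 1)
    rw [Fintype.piFinset_univ] at this
    rw [← this, Finset.prod_const, Finset.card_univ]
    congr 1
    have hu : (Finset.univ : Finset (ZMod 2)) = {0, 1} := by decide
    rw [hu, Finset.sum_pair (by decide)]
    norm_num
  have hb : ((1 : ℝ) + 1 / 4096) ^ Fintype.card I ≤ 2 ^ (16 * t) := by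
    have e : (1 : ℝ) + 1 / 4096 ≤ Real.exp (1 / 4096) := by
      have := Real.add_one_le_exp (1 / 4096 : ℝ); linarith
    have e4 : ((1 : ℝ) + 1 / 4096) ^ 4096 ≤ 4 := by
      calc ((1 : ℝ) + 1 / 4096) ^ 4096 ≤ (Real.exp (1 / 4096)) ^ 4096 := by gcongr
        _ = Real.exp 1 := by rw [← Real.exp_nat_mul]; norm_num
        _ ≤ 4 := by have := Real.exp_one_lt_d9; linarith
    rw [hN]
    calc ((1 : ℝ) + 1 / 4096) ^ (2 ^ 15 * t) = (((1 : ℝ) + 1 / 4096) ^ 4096) ^ (8 * t) := by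
          rw [← pow_mul]; congr 1; ring
      _ ≤ 4 ^ (8 * t) := by gcongr
      _ = 2 ^ (16 * t) := by
          rw [show (4 : ℝ) = 2 ^ 2 by norm_num, ← pow_mul]; congr 1; ring
  have hl : ((Finset.univ.filter fun v : I → ZMod 2 => hammingNorm v ≤ t).card : ℝ)
      * (1 / 4096) ^ t ≤ ∑ v : I → ZMod 2, (1 / 4096 : ℝ) ^ hammingNorm v := by
    rw [← nsmul_eq_mul]
    refine le_trans (Finset.card_nsmul_le_sum _ (fun v => (1 / 4096 : ℝ) ^ hammingNorm v) _ ?_)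
      (Finset.sum_le_sum_of_subset_of_nonneg (Finset.filter_subset _ _) ?_)
    · intro v hv
      exact pow_le_pow_of_le_one (by norm_num) (by norm_num) (Finset.mem_filter.mp hv).2
    · intros; positivity
  have : ((Finset.univ.filter fun v : I → ZMod 2 => hammingNorm v ≤ t).card : ℝ) ≤ 2 ^ (32 * t) := by
    rw [key] at hl
    have h2 := hl.trans hb
    rw [one_div, inv_pow, ← div_eq_mul_inv, div_le_iff₀ (by positivity)] at h2
    refine h2.trans ?_
    rw [show (4096 : ℝ) = 2 ^ 12 by norm_num, ← pow_mul, ← pow_add]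
    exact pow_le_pow_right₀ (by norm_num) (by omega)
  exact_mod_cast this

/-- The random family `Bf` behaves like a uniformly random matrix. -/
def CssUnif {Ω I J : Type*} [Fintype Ω] [Fintype I] [Fintype J]
    (Bf : Ω → Matrix I J (ZMod 2)) : Prop :=
  ∀ (k : ℕ) (w : Fin k → I → ZMod 2), LinearIndependent (ZMod 2) w →
    (Finset.univ.filter fun ω => ∀ i, (Bf ω).transpose.mulVec (w i) = 0).card
      * 2 ^ (Fintype.card J * k) ≤ Fintype.card Ω

lemma css_unif_of_shift {Ω I J N : Type*} [Fintype Ω] [Fintype I] [Fintype J] [Fintype N]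
    [DecidableEq J] [DecidableEq N]
    (Bf : Ω → Matrix I J (ZMod 2)) (ι : J → I) (σ : N → I)
    (hsum : ∀ f : I → ZMod 2, ∑ i, f i = ∑ j, f (ι j) + ∑ n, f (σ n))
    (hcov : ∀ f : I → ZMod 2, (∀ j, f (ι j) = 0) → (∀ n, f (σ n) = 0) → f = 0)
    (hsys : ∀ ω a b, Bf ω (ι a) b = if a = b then 1 else 0)
    (shift : Matrix N J (ZMod 2) → Ω → Ω)
    (hinj : ∀ Y, Function.Injective (shift Y))
    (hshift : ∀ Y ω n b, Bf (shift Y ω) (σ n) b = Bf ω (σ n) b + Y n b) :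
    CssUnif Bf := by
  intro k w hw
  have hB : ∀ ω (v : I → ZMod 2) b, (Bf ω).transpose.mulVec v b
      = v (ι b) + ∑ n, Bf ω (σ n) b * v (σ n) := by
    intro ω v b
    simp only [Matrix.mulVec, dotProduct, Matrix.transpose_apply]
    rw [hsum]
    simp [hsys]
  by_cases hne : ∃ ω0, ∀ i, (Bf ω0).transpose.mulVec (w i) = 0
  swap
  · have : (Finset.univ.filter fun ω => ∀ i, (Bf ω).transpose.mulVec (w i) = 0) = ∅ := by
      ext ω; simp only [Finset.mem_filter, Finset.mem_univ, true_and, Finset.notMem_empty, iff_false]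
      exact fun h => hne ⟨ω, h⟩
    rw [this]; simp
  obtain ⟨ω0, h0⟩ := hne
  have hwb : LinearIndependent (ZMod 2) (fun i (n : N) => w i (σ n)) := by
    rw [Fintype.linearIndependent_iff] at hw ⊢
    intro g hg
    apply hw g
    have hz : ∀ n, (∑ i, g i • w i) (σ n) = 0 := by
      intro n
      have := congrFun hg n
      simpa using this
    apply hcov _ _ hz
    intro j
    have h1 : (Bf ω0).transpose.mulVec (∑ i, g i • w i) = 0 := by
      rw [Matrix.mulVec_sum]
      simp [Matrix.mulVec_smul, h0]
    have h2 := hB ω0 (∑ i, g i • w i) j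
    rw [h1] at h2
    simp only [hz] at h2
    simpa using h2.symm
  obtain ⟨φ, hφ⟩ : ∃ φ : (N → ZMod 2) →ₗ[ZMod 2] (Fin k → ZMod 2),
      ∀ i, φ (fun n => w i (σ n)) = Pi.single i 1 := by
    have hk : LinearMap.ker (Fintype.linearCombination (ZMod 2) (fun i (n : N) => w i (σ n))) = ⊥ := by
      rw [LinearMap.ker_eq_bot]
      exact hwb.fintypeLinearCombination_injective
    obtain ⟨φ, hφ⟩ := LinearMap.exists_leftInverse_of_injective _ hk
    refine ⟨φ, fun i => ?_⟩
    have := LinearMap.congr_fun hφ (Pi.single i 1)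
    simpa [Fintype.linearCombination_apply_single] using this
  let Y : Matrix (Fin k) J (ZMod 2) → Matrix N J (ZMod 2) := fun M n b =>
    ∑ i, φ (Pi.single n 1) i * M i b
  have hY : ∀ M i b, ∑ n, Y M n b * w i (σ n) = M i b := by
    intro M i b
    have e : (fun n => w i (σ n)) = ∑ n, w i (σ n) • (Pi.single n 1 : N → ZMod 2) := by
      ext n
      simp [Finset.sum_apply, Pi.single_apply]
    have h1 := hφ i
    rw [e, map_sum] at h1
    simp only [map_smul] at h1
    simp only [Y, Finset.sum_mul]
    rw [Finset.sum_comm]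
    have h2 : ∀ i', ∑ n, w i (σ n) * φ (Pi.single n 1) i' = if i' = i then 1 else 0 := by
      intro i'
      have := congrFun h1 i'
      simpa [Finset.sum_apply, Pi.single_apply] using this
    calc ∑ i', ∑ n, φ (Pi.single n 1) i' * M i' b * w i (σ n)
        = ∑ i', (∑ n, w i (σ n) * φ (Pi.single n 1) i') * M i' b := by
          refine Finset.sum_congr rfl fun i' _ => ?_
          rw [Finset.sum_mul]
          refine Finset.sum_congr rfl fun n _ => ?_
          ring
      _ = M i b := by simp [h2]
  classical
  have hcard : Fintype.card (Matrix (Fin k) J (ZMod 2)) = 2 ^ (Fintype.card J * k) := by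
    have h1 : Fintype.card (Matrix (Fin k) J (ZMod 2)) = Fintype.card (Fin k → J → ZMod 2) :=
      Fintype.card_congr (Equiv.refl _)
    rw [h1, Fintype.card_fun, Fintype.card_fun, ZMod.card, Fintype.card_fin, pow_mul]
  rw [← hcard, ← Finset.card_univ, ← Finset.card_product, ← Finset.card_univ]
  refine Finset.card_le_card_of_injOn (fun p => shift (Y p.2) p.1) (by simp) ?_
  rintro ⟨ω, M⟩ h ⟨ω', M'⟩ h' heq
  simp only [Finset.coe_product, Set.mem_prod, Finset.mem_coe, Finset.mem_filter, Finset.mem_univ,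
    true_and, and_true] at h h'
  simp only at heq
  have hrec : ∀ (ω : Ω) M, (∀ i, (Bf ω).transpose.mulVec (w i) = 0) →
      ∀ i b, (Bf (shift (Y M) ω)).transpose.mulVec (w i) b = M i b := by
    intro ω M h i b
    rw [hB]
    simp only [hshift, add_mul, Finset.sum_add_distrib, hY]
    have := hB ω (w i) b
    rw [h i] at this
    rw [← add_assoc, ← this]; simp
  have hM : M = M' := by
    ext i b
    rw [← hrec ω M h i b, heq, hrec ω' M' h' i b]
  subst hM
  simp only [Prod.mk.injEq, and_true]
  exact hinj _ heq


def CssD {I J : Type*} [Fintype I] [Fintype J] (l : ℕ) (B : Matrix I J (ZMod 2)) : Prop :=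
  ∀ (r : ℕ), 1 ≤ r → r ≤ 1024 * l → ∀ S : Finset I, S.card ≤ l →
    ∀ ℓ : Fin r → I → ZMod 2, (∀ j, hammingNorm (ℓ j) ≤ l) →
    ∀ w : Fin ((r + 1) / 2) → I → ZMod 2, LinearIndependent (ZMod 2) w →
      (∀ i, ∃ c : Fin r → ZMod 2, ∀ a, a ∉ S → w i a = ∑ j, c j * ℓ j a) →
      ∃ i, B.transpose.mulVec (w i) ≠ 0

def CssE {I J : Type*} [Fintype I] [Fintype J] (l : ℕ) (B₁ B₂ : Matrix I J (ZMod 2)) : Prop :=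
  ∀ ψ : Matrix I I (ZMod 2), hammingNorm (fun p : I × I => ψ p.1 p.2) ≤ l * l →
    512 * l ≤ (B₁.transpose * ψ).rank → B₁.transpose * ψ * B₂ ≠ 0

lemma css_count_sets {I : Type*} [Fintype I] [DecidableEq I] (t : ℕ)
    (hN : Fintype.card I = 2 ^ 15 * t) :
    (Finset.univ.filter fun S : Finset I => S.card ≤ t).card ≤ 2 ^ (32 * t) := by
  refine le_trans ?_ (css_count_light t hN)
  refine Finset.card_le_card_of_injOn (fun S i => if i ∈ S then 1 else 0) ?_ ?_
  · intro S hS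
    simp only [Finset.coe_filter, Finset.mem_univ, true_and, Set.mem_ofPred_eq] at hS ⊢
    simpa [hammingNorm] using hS
  · intro S _ T _ h
    ext i
    have := congrFun h i
    by_cases h1 : i ∈ S <;> by_cases h2 : i ∈ T <;> simp [h1, h2] at this ⊢

open Classical in
lemma css_prob_D {Ω I J : Type*} [Fintype Ω] [Fintype I] [Fintype J] (l : ℕ) (hl : 1 ≤ l)
    (hI : Fintype.card I = 2 ^ 15 * l) (hJ : Fintype.card J = 2 ^ 12 * l)
    (Bf : Ω → Matrix I J (ZMod 2)) (hB : CssUnif Bf) :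
    (Finset.univ.filter fun ω => ¬ CssD l (Bf ω)).card * 8 ≤ Fintype.card Ω := by
  -- bad set for fixed r, S, ℓ
  let bad : (r : ℕ) → Finset I → (Fin r → I → ZMod 2) → Finset Ω := fun r S ℓ =>
    Finset.univ.filter fun ω => ∃ w : Fin ((r + 1) / 2) → I → ZMod 2, LinearIndependent (ZMod 2) w ∧
      (∀ i, ∃ c : Fin r → ZMod 2, ∀ a, a ∉ S → w i a = ∑ j, c j * ℓ j a) ∧
      ∀ i, (Bf ω).transpose.mulVec (w i) = 0
  have hbad : ∀ r S ℓ, S.card ≤ l → (bad r S ℓ).card * 2 ^ (Fintype.card J * ((r + 1) / 2))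
      ≤ 2 ^ ((r + 1) / 2 * r + (r + 1) / 2 * l) * Fintype.card Ω := by
    intro r S ℓ hS
    set k := (r + 1) / 2 with hk
    let W : ((Fin k → Fin r → ZMod 2) × (Fin k → S → ZMod 2)) → Fin k → I → ZMod 2 :=
      fun τ i a => if h : a ∈ S then τ.2 i ⟨a, h⟩ else ∑ j, τ.1 i j * ℓ j a
    let G : ((Fin k → Fin r → ZMod 2) × (Fin k → S → ZMod 2)) → Finset Ω := fun τ =>
      Finset.univ.filter fun ω => LinearIndependent (ZMod 2) (W τ) ∧
        ∀ i, (Bf ω).transpose.mulVec (W τ i) = 0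
    have hsub : bad r S ℓ ⊆ Finset.univ.biUnion G := by
      intro ω hω
      obtain ⟨w, hw, hc, hz⟩ := (Finset.mem_filter.mp hω).2
      choose c hc using hc
      have hWw : W (c, fun i a => w i a) = w := by
        ext i a
        by_cases h : a ∈ S
        · simp [W, h]
        · simp [W, h, hc i a h]
      simp only [Finset.mem_biUnion, Finset.mem_univ, true_and, G, Finset.mem_filter]
      exact ⟨(c, fun i a => w i a), by rw [hWw]; exact ⟨hw, hz⟩⟩
    have hG : ∀ τ, (G τ).card * 2 ^ (Fintype.card J * k) ≤ Fintype.card Ω := by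
      intro τ
      by_cases hi : LinearIndependent (ZMod 2) (W τ)
      · have := hB k (W τ) hi
        simpa [G, hi] using this
      · simp [G, hi]
    have hcard : Fintype.card ((Fin k → Fin r → ZMod 2) × (Fin k → S → ZMod 2))
        ≤ 2 ^ (k * r + k * l) := by
      rw [Fintype.card_prod, Fintype.card_fun, Fintype.card_fun, Fintype.card_fun, Fintype.card_fun,
        ZMod.card, Fintype.card_fin, Fintype.card_fin, Fintype.card_coe, ← pow_mul, ← pow_mul,
        ← pow_add]
      apply Nat.pow_le_pow_right (by norm_num)
      nlinarith
    calc (bad r S ℓ).card * 2 ^ (Fintype.card J * k)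
        ≤ (∑ τ, (G τ).card) * 2 ^ (Fintype.card J * k) := by
          gcongr
          exact (Finset.card_le_card hsub).trans Finset.card_biUnion_le
      _ = ∑ τ, (G τ).card * 2 ^ (Fintype.card J * k) := Finset.sum_mul _ _ _
      _ ≤ ∑ τ : ((Fin k → Fin r → ZMod 2) × (Fin k → S → ZMod 2)), Fintype.card Ω :=
          Finset.sum_le_sum fun τ _ => hG τ
      _ ≤ 2 ^ (k * r + k * l) * Fintype.card Ω := by
          rw [Finset.sum_const, Finset.card_univ, smul_eq_mul]
          gcongr
  let sets := Finset.univ.filter fun S : Finset I => S.card ≤ l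
  let lights := Finset.univ.filter fun v : I → ZMod 2 => hammingNorm v ≤ l
  let badr : ℕ → Finset Ω := fun r =>
    sets.biUnion fun S => (Fintype.piFinset fun _ : Fin r => lights).biUnion fun ℓ => bad r S ℓ
  have hbadr : ∀ r, 1 ≤ r → r ≤ 1024 * l → (badr r).card * 2 ^ (1024 * l + 3) ≤ Fintype.card Ω := by
    intro r hr1 hr2
    set k := (r + 1) / 2 with hk
    have hk1 : 1 ≤ k := by omega
    have hk2 : r ≤ 2 * k := by omega
    have h1 : (badr r).card * 2 ^ (Fintype.card J * k) ≤
        2 ^ (32 * l) * (2 ^ (32 * l * r) * (2 ^ (k * r + k * l) * Fintype.card Ω)) := by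
      calc (badr r).card * 2 ^ (Fintype.card J * k)
          ≤ (∑ S ∈ sets, ∑ ℓ ∈ Fintype.piFinset fun _ : Fin r => lights, (bad r S ℓ).card)
              * 2 ^ (Fintype.card J * k) := by
            gcongr
            refine Finset.card_biUnion_le.trans (Finset.sum_le_sum fun S _ => ?_)
            exact Finset.card_biUnion_le
        _ = ∑ S ∈ sets, ∑ ℓ ∈ Fintype.piFinset fun _ : Fin r => lights,
              (bad r S ℓ).card * 2 ^ (Fintype.card J * k) := by
            rw [Finset.sum_mul]; simp_rw [Finset.sum_mul]
        _ ≤ ∑ S ∈ sets, ∑ ℓ ∈ Fintype.piFinset fun _ : Fin r => lights,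
              2 ^ (k * r + k * l) * Fintype.card Ω := by
            refine Finset.sum_le_sum fun S hS => Finset.sum_le_sum fun ℓ _ => ?_
            exact hbad r S ℓ (Finset.mem_filter.mp hS).2
        _ ≤ _ := by
            rw [Finset.sum_const, Finset.sum_const, smul_eq_mul, smul_eq_mul,
              Fintype.card_piFinset_const]
            have e1 : sets.card ≤ 2 ^ (32 * l) := css_count_sets l hI
            have e2 : lights.card ≤ 2 ^ (32 * l) := css_count_light l hI
            rw [pow_mul 2 (32 * l) r]
            gcongr
    have h2 : 32 * l + (32 * l * r + (k * r + k * l)) + (1024 * l + 3) ≤ Fintype.card J * k := by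
      rw [hJ]
      have a1 : k * r ≤ k * (1024 * l) := Nat.mul_le_mul_left _ hr2
      have a2 : l * r ≤ l * (2 * k) := Nat.mul_le_mul_left _ hk2
      have a3 : l ≤ l * k := Nat.le_mul_of_pos_right _ hk1
      nlinarith
    have h3 : (badr r).card * 2 ^ (1024 * l + 3) *
        2 ^ (32 * l + (32 * l * r + (k * r + k * l))) ≤
        Fintype.card Ω * 2 ^ (32 * l + (32 * l * r + (k * r + k * l))) := by
      calc _ = (badr r).card * 2 ^ (32 * l + (32 * l * r + (k * r + k * l)) + (1024 * l + 3)) := by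
            rw [pow_add 2 _ (1024 * l + 3)]; ring
        _ ≤ (badr r).card * 2 ^ (Fintype.card J * k) := by gcongr; norm_num
        _ ≤ _ := h1
        _ = _ := by rw [pow_add 2 (32 * l) (32 * l * r + (k * r + k * l)), pow_add 2 (32 * l * r)]; ring
    exact Nat.le_of_mul_le_mul_right h3 (by positivity)
  have hsub : (Finset.univ.filter fun ω => ¬ CssD l (Bf ω)) ⊆
      (Finset.Icc 1 (1024 * l)).biUnion badr := by
    intro ω hω
    have h := (Finset.mem_filter.mp hω).2
    unfold CssD at h
    push Not at h
    obtain ⟨r, hr1, hr2, S, hS, ℓ, hℓ, w, hw, hc, hz⟩ := h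
    simp only [Finset.mem_biUnion, Finset.mem_Icc, badr]
    refine ⟨r, ⟨hr1, hr2⟩, S, by simpa [sets] using hS, ℓ, by simpa [lights] using hℓ, ?_⟩
    simp only [bad, Finset.mem_filter, Finset.mem_univ, true_and]
    exact ⟨w, hw, hc, hz⟩
  have hfin : (Finset.univ.filter fun ω => ¬ CssD l (Bf ω)).card * 8 * 2 ^ (1024 * l)
      ≤ Fintype.card Ω * 2 ^ (1024 * l) := by
    calc _ = (Finset.univ.filter fun ω => ¬ CssD l (Bf ω)).card * 2 ^ (1024 * l + 3) := by
          rw [pow_add]; ring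
      _ ≤ (∑ r ∈ Finset.Icc 1 (1024 * l), (badr r).card) * 2 ^ (1024 * l + 3) := by
          gcongr
          exact (Finset.card_le_card hsub).trans Finset.card_biUnion_le
      _ = ∑ r ∈ Finset.Icc 1 (1024 * l), (badr r).card * 2 ^ (1024 * l + 3) := Finset.sum_mul _ _ _
      _ ≤ ∑ r ∈ Finset.Icc 1 (1024 * l), Fintype.card Ω := by
          refine Finset.sum_le_sum fun r hr => ?_
          rw [Finset.mem_Icc] at hr
          exact hbadr r hr.1 hr.2
      _ = Fintype.card Ω * (1024 * l) := by simp [mul_comm]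
      _ ≤ _ := by gcongr; exact Nat.lt_two_pow_self.le
  exact Nat.le_of_mul_le_mul_right hfin (by positivity)

lemma css_indep_cols {I K : Type*} [Fintype I] [Fintype K] (M : Matrix I K (ZMod 2)) (r : ℕ)
    (hr : r ≤ M.rank) : ∃ f : Fin r → K, LinearIndependent (ZMod 2) (fun i => M.col (f i)) := by
  rw [Matrix.rank_eq_finrank_span_cols] at hr
  obtain ⟨f, hf, -, hi⟩ := Submodule.exists_fun_fin_finrank_span_eq (ZMod 2) (Set.range M.col)
  choose g hg using hf
  refine ⟨fun i => g (Fin.castLE hr i), ?_⟩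
  simp_rw [hg]
  exact hi.comp _ (Fin.castLE_injective hr)

open Classical in
lemma css_prob_E {Ω I J : Type*} [Fintype Ω] [Fintype I] [Fintype J] (l : ℕ) (hl : 1 ≤ l)
    (hI : Fintype.card I = 2 ^ 15 * l) (hJ : Fintype.card J = 2 ^ 12 * l)
    (Bf : Ω → Matrix I J (ZMod 2)) (hB : CssUnif Bf) (B₁ : Matrix I J (ZMod 2)) :
    (Finset.univ.filter fun ω => ¬ CssE l B₁ (Bf ω)).card * 8 ≤ Fintype.card Ω := by
  let lights := Finset.univ.filter fun v : I × I → ZMod 2 => hammingNorm v ≤ 2 ^ 15 * (l * l)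
  have hlights : lights.card ≤ 2 ^ (32 * (2 ^ 15 * (l * l))) := by
    apply css_count_light
    rw [Fintype.card_prod, hI]; ring
  let mat : (I × I → ZMod 2) → Matrix I I (ZMod 2) := fun v i j => v (i, j)
  let G : (I × I → ZMod 2) → Finset Ω := fun v => Finset.univ.filter fun ω =>
    512 * l ≤ (B₁.transpose * mat v).rank ∧ B₁.transpose * mat v * Bf ω = 0
  have hG : ∀ v, (G v).card * 2 ^ (Fintype.card J * (512 * l)) ≤ Fintype.card Ω := by
    intro v
    by_cases hr : 512 * l ≤ (B₁.transpose * mat v).rank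
    · rw [← Matrix.rank_transpose] at hr
      obtain ⟨f, hf⟩ := css_indep_cols _ _ hr
      refine le_trans ?_ (hB _ _ hf)
      gcongr
      intro ω hω
      simp only [G, Finset.mem_filter, Finset.mem_univ, true_and] at hω ⊢
      intro i
      have h2 : (Bf ω).transpose * (B₁.transpose * mat v).transpose = 0 := by
        rw [← Matrix.transpose_mul, hω.2, Matrix.transpose_zero]
      ext a
      exact congrFun (congrFun h2 a) (f i)
    · have : G v = ∅ := by
        ext ω; simp [G, hr]
      simp [this]
  have hsub : (Finset.univ.filter fun ω => ¬ CssE l B₁ (Bf ω)) ⊆ lights.biUnion G := by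
    intro ω hω
    have h := (Finset.mem_filter.mp hω).2
    unfold CssE at h
    push Not at h
    obtain ⟨ψ, h1, h2, h3⟩ := h
    simp only [Finset.mem_biUnion]
    refine ⟨fun p => ψ p.1 p.2, ?_, ?_⟩
    · simp only [lights, Finset.mem_filter, Finset.mem_univ, true_and]
      omega
    · simp only [G, Finset.mem_filter, Finset.mem_univ, true_and]
      exact ⟨h2, h3⟩
  have hfin : (Finset.univ.filter fun ω => ¬ CssE l B₁ (Bf ω)).card * 8
        * 2 ^ (32 * (2 ^ 15 * (l * l)))
      ≤ Fintype.card Ω * 2 ^ (32 * (2 ^ 15 * (l * l))) := by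
    calc _ = (Finset.univ.filter fun ω => ¬ CssE l B₁ (Bf ω)).card *
            2 ^ (32 * (2 ^ 15 * (l * l)) + 3) := by
          rw [pow_add 2 _ 3]; ring
      _ ≤ (∑ v ∈ lights, (G v).card) * 2 ^ (Fintype.card J * (512 * l)) := by
          gcongr
          · exact (Finset.card_le_card hsub).trans Finset.card_biUnion_le
          · norm_num
          · rw [hJ]; nlinarith
      _ = ∑ v ∈ lights, (G v).card * 2 ^ (Fintype.card J * (512 * l)) := Finset.sum_mul _ _ _
      _ ≤ ∑ v ∈ lights, Fintype.card Ω := Finset.sum_le_sum fun v _ => hG v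
      _ = Fintype.card Ω * lights.card := by simp [mul_comm]
      _ ≤ _ := by gcongr
  exact Nat.le_of_mul_le_mul_right hfin (by positivity)


lemma css_D_submodule {I J : Type*} [Fintype I] [Fintype J] {l : ℕ} {B : Matrix I J (ZMod 2)}
    (hD : CssD l B) (r : ℕ) (hr1 : 1 ≤ r) (hr2 : r ≤ 1024 * l) (S : Finset I) (hS : S.card ≤ l)
    (ℓ : Fin r → I → ZMod 2) (hℓ : ∀ j, hammingNorm (ℓ j) ≤ l)
    (K : Submodule (ZMod 2) (I → ZMod 2))
    (hK : ∀ w ∈ K, B.transpose.mulVec w = 0 ∧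
      ∃ c : Fin r → ZMod 2, ∀ a, a ∉ S → w a = ∑ j, c j * ℓ j a) :
    2 * Module.finrank (ZMod 2) K < r := by
  by_contra hcon
  have hk : (r + 1) / 2 ≤ Module.finrank (ZMod 2) K := by omega
  let b := Module.finBasis (ZMod 2) K
  have hb : LinearIndependent (ZMod 2) (fun i : Fin ((r + 1) / 2) => (b (Fin.castLE hk i) : I → ZMod 2)) := by
    have h1 := b.linearIndependent.comp _ (Fin.castLE_injective hk)
    exact h1.map' K.subtype (Submodule.ker_subtype K)
  obtain ⟨i, hi⟩ := hD r hr1 hr2 S hS ℓ hℓ _ hb (fun i => (hK _ (b (Fin.castLE hk i)).2).2)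
  exact hi (hK _ (b (Fin.castLE hk i)).2).1

lemma css_D_kernel {I J : Type*} [Fintype I] [Fintype J] {l : ℕ} (hl : 1 ≤ l)
    {B : Matrix I J (ZMod 2)} (hD : CssD l B) (v : I → ZMod 2) (hv : hammingNorm v ≤ l)
    (hB : B.transpose.mulVec v = 0) : v = 0 := by
  have := css_D_submodule hD 1 le_rfl (by omega) ∅ (by simp) (fun _ => v) (fun _ => hv)
    (Submodule.span (ZMod 2) {v}) (by
      intro w hw
      obtain ⟨c, rfl⟩ := Submodule.mem_span_singleton.mp hw
      refine ⟨by rw [Matrix.mulVec_smul, hB, smul_zero], fun _ => c, fun a _ => by simp⟩)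
  have h0 : Module.finrank (ZMod 2) (Submodule.span (ZMod 2) {v}) = 0 := by omega
  rw [Submodule.finrank_eq_zero] at h0
  simpa using h0

lemma css_exists_ker {J : Type*} [Fintype J] [DecidableEq J]
    (W : Submodule (ZMod 2) (J → ZMod 2)) :
    ∃ (d : ℕ) (X : Matrix (Fin d) J (ZMod 2)), ∀ v, X.mulVec v = 0 ↔ v ∈ W := by
  let b := Module.finBasis (ZMod 2) ((J → ZMod 2) ⧸ W)
  refine ⟨_, LinearMap.toMatrix' (b.equivFun.toLinearMap ∘ₗ W.mkQ), fun v => ?_⟩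
  rw [LinearMap.toMatrix'_mulVec]
  simp only [LinearMap.comp_apply, LinearEquiv.coe_coe]
  rw [LinearEquiv.map_eq_zero_iff]
  simp

/-- Key bound: `U` spanned by the columns of `M`, vanishing on `S`. -/
lemma css_col_bound {I J K : Type*} [Fintype I] [Fintype J] [Fintype K] [DecidableEq I] {l : ℕ}
    {B : Matrix I J (ZMod 2)} (hD : CssD l B) (S : Finset I) (hS : S.card ≤ l)
    (M : Matrix I K (ZMod 2)) (hM : ∀ j, hammingNorm (M.col j) ≤ l)
    (hMS : ∀ i ∈ S, ∀ j, M i j = 0) (hr1 : 1 ≤ M.rank) (hr2 : M.rank ≤ 1024 * l)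
    {d : ℕ} (H : Matrix (Fin d) I (ZMod 2))
    (hH : ∀ v, H.mulVec v = 0 → ∃ f : I → ZMod 2, (∀ i, i ∉ S → f i = 0) ∧
      B.transpose.mulVec v = B.transpose.mulVec f) :
    2 * Module.finrank (ZMod 2)
      (LinearMap.range M.mulVecLin ⊓ LinearMap.ker H.mulVecLin :
        Submodule (ZMod 2) (I → ZMod 2)) < M.rank := by
  obtain ⟨ℓ, hℓ, hspan, -⟩ := Submodule.exists_fun_fin_finrank_span_eq (ZMod 2) (Set.range M.col)
  rw [Matrix.rank_eq_finrank_span_cols] at hr1 hr2 ⊢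
  have hrange : LinearMap.range M.mulVecLin = Submodule.span (ZMod 2) (Set.range M.col) :=
    Matrix.range_mulVecLin M
  let P : (I → ZMod 2) →ₗ[ZMod 2] (I → ZMod 2) :=
    LinearMap.pi fun i => if i ∈ S then 0 else LinearMap.proj i
  have hP : ∀ v i, P v i = if i ∈ S then 0 else v i := by
    intro v i
    by_cases h : i ∈ S <;> simp [P, h]
  let K1 : Submodule (ZMod 2) (I → ZMod 2) :=
    LinearMap.ker B.transpose.mulVecLin ⊓ (LinearMap.range M.mulVecLin).comap P
  have h1 := css_D_submodule hD _ hr1 hr2 S hS ℓ (by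
      intro j
      obtain ⟨k, hk⟩ := hℓ j
      rw [← hk]; exact hM k) K1 (by
      intro w hw
      obtain ⟨hw1, hw2⟩ := Submodule.mem_inf.mp hw
      refine ⟨hw1, ?_⟩
      rw [Submodule.mem_comap, hrange, ← hspan, Submodule.mem_span_range_iff_exists_fun] at hw2
      obtain ⟨c, hc⟩ := hw2
      refine ⟨c, fun a ha => ?_⟩
      have := congrFun hc a
      rw [hP, if_neg ha] at this
      rw [← this]; simp)
  refine lt_of_le_of_lt ?_ h1
  have h2 : (LinearMap.range M.mulVecLin ⊓ LinearMap.ker H.mulVecLin :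
        Submodule (ZMod 2) (I → ZMod 2)) ≤ K1.map P := by
    intro u hu
    obtain ⟨hu1, hu2⟩ := Submodule.mem_inf.mp hu
    obtain ⟨f, hf1, hf2⟩ := hH u (by simpa using hu2)
    have hPu : P (u - f) = u := by
      ext i
      rw [hP]
      by_cases h : i ∈ S
      · obtain ⟨x, rfl⟩ := hu1
        simp [h, Matrix.mulVec, dotProduct, hMS i h]
      · simp [h, hf1 i h]
    refine ⟨u - f, ?_, hPu⟩
    refine Submodule.mem_inf.mpr ⟨?_, ?_⟩
    · rw [LinearMap.mem_ker, Matrix.mulVecLin_apply, Matrix.mulVec_sub, hf2, sub_self]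
    · rw [Submodule.mem_comap, hPu]; exact hu1
  have h3 := Submodule.finrank_mono h2
  have h4 := Submodule.finrank_map_le P K1
  omega

lemma css_heavy {I K : Type*} [Fintype I] [Fintype K] (l : ℕ) (ψ : I → K → ZMod 2)
    (h : hammingNorm (fun p : I × K => ψ p.1 p.2) ≤ l * l) :
    (Finset.univ.filter fun i => ¬ hammingNorm (ψ i) ≤ l).card ≤ l := by
  classical
  have h1 : hammingNorm (fun p : I × K => ψ p.1 p.2) = ∑ i, hammingNorm (ψ i) := by
    simp only [hammingNorm, Finset.card_filter]
    rw [Fintype.sum_prod_type]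
  set T := Finset.univ.filter fun i => ¬ hammingNorm (ψ i) ≤ l with hT
  have h2 : T.card * (l + 1) ≤ ∑ i, hammingNorm (ψ i) := by
    rw [← smul_eq_mul]
    refine le_trans (Finset.card_nsmul_le_sum T (fun i => hammingNorm (ψ i)) _ ?_)
      (Finset.sum_le_sum_of_subset (Finset.subset_univ _))
    intro i hi
    have := (Finset.mem_filter.mp hi).2
    omega
  by_contra hc
  push Not at hc
  have : (l + 1) * (l + 1) ≤ T.card * (l + 1) := Nat.mul_le_mul_right _ hc
  nlinarith

lemma css_core {I J : Type*} [Fintype I] [Fintype J] [DecidableEq I] [DecidableEq J] {l : ℕ}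
    (hl : 1 ≤ l) {B₁ B₂ : Matrix I J (ZMod 2)}
    (hD₁ : CssD l B₁) (hD₂ : CssD l B₂) (hE : CssE l B₁ B₂) (ψ : Matrix I I (ZMod 2))
    (hw : hammingNorm (fun p : I × I => ψ p.1 p.2) ≤ l * l)
    (hz : B₁.transpose * ψ * B₂ = 0) :
    ∃ S T : Finset I, S.card ≤ l ∧ T.card ≤ l ∧ ∀ i, i ∉ S → ∀ j, j ∉ T → ψ i j = 0 := by
  have hw' : hammingNorm (fun p : I × I => ψ.transpose p.1 p.2) ≤ l * l := by
    refine le_trans (le_of_eq ?_) hw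
    simp only [hammingNorm, Finset.card_filter]
    rw [Fintype.sum_prod_type, Fintype.sum_prod_type, Finset.sum_comm]
    rfl
  let S := Finset.univ.filter fun i => ¬ hammingNorm (ψ i) ≤ l
  let T := Finset.univ.filter fun j => ¬ hammingNorm (ψ.transpose j) ≤ l
  have hS : S.card ≤ l := css_heavy l ψ hw
  have hT : T.card ≤ l := css_heavy l ψ.transpose hw'
  refine ⟨S, T, hS, hT, ?_⟩
  let φ : Matrix I I (ZMod 2) := fun i j => if i ∈ S ∨ j ∈ T then 0 else ψ i j
  have hφS : ∀ i ∈ S, ∀ j, φ i j = 0 := fun i hi j => by simp [φ, hi]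
  have hφT : ∀ j ∈ T, ∀ i, φ i j = 0 := fun i hi j => by simp [φ, hi]
  have hφ : ∀ i, i ∉ S → ∀ j, j ∉ T → φ i j = ψ i j := fun i hi j hj => by simp [φ, hi, hj]
  have hcol : ∀ j, hammingNorm (φ.col j) ≤ l := by
    intro j
    by_cases hj : j ∈ T
    · have : φ.col j = 0 := by ext i; exact hφT j hj i
      rw [this]; simp
    · have hj' : hammingNorm (ψ.transpose j) ≤ l := by simpa [T] using hj
      refine le_trans (Finset.card_le_card ?_) hj'
      intro i hi
      simp only [Finset.mem_filter, Finset.mem_univ, true_and] at hi ⊢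
      intro h0
      apply hi
      have h0 : ψ i j = 0 := h0
      show (if i ∈ S ∨ j ∈ T then 0 else ψ i j) = 0
      simp [h0]
  have hrow : ∀ i, hammingNorm (φ.transpose.col i) ≤ l := by
    intro i
    by_cases hj : i ∈ S
    · have : φ.transpose.col i = 0 := by ext j; exact hφS i hj j
      rw [this]; simp
    · have hj' : hammingNorm (ψ i) ≤ l := by simpa [S] using hj
      refine le_trans (Finset.card_le_card ?_) hj'
      intro j hi
      simp only [Finset.mem_filter, Finset.mem_univ, true_and] at hi ⊢
      intro h0
      apply hi
      show (if i ∈ S ∨ j ∈ T then 0 else ψ i j) = 0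
      simp [h0]
  suffices h0 : φ.rank = 0 by
    have : φ = 0 := by
      rw [Matrix.rank, Submodule.finrank_eq_zero, LinearMap.range_eq_bot] at h0
      ext i j
      have := congrFun (LinearMap.congr_fun h0 (Pi.single j 1)) i
      simpa using this
    intro i hi j hj
    rw [← hφ i hi j hj, this]; rfl
  by_contra hr0
  have hr1 : 1 ≤ φ.rank := by omega
  rcases le_total φ.rank (1024 * l) with hr | hr
  · -- small rank
    have hX : ∀ (B : Matrix I J (ZMod 2)) (S : Finset I), ∃ (d : ℕ) (X : Matrix (Fin d) J (ZMod 2)),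
        (∀ v, (X * B.transpose).mulVec v = 0 → ∃ f : I → ZMod 2, (∀ i, i ∉ S → f i = 0) ∧
          B.transpose.mulVec v = B.transpose.mulVec f) ∧
        ∀ i ∈ S, ∀ a, (X * B.transpose) a i = 0 := by
      intro B S
      let FS : Submodule (ZMod 2) (I → ZMod 2) :=
        { carrier := {f | ∀ i, i ∉ S → f i = 0}
          add_mem' := fun {f g} hf hg i hi => by simp [hf i hi, hg i hi]
          zero_mem' := fun i _ => rfl
          smul_mem' := fun c f hf i hi => by simp [hf i hi] }
      obtain ⟨d, X, hX⟩ := css_exists_ker (FS.map B.transpose.mulVecLin)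
      refine ⟨d, X, fun v hv => ?_, fun i hi a => ?_⟩
      · rw [← Matrix.mulVec_mulVec, hX] at hv
        obtain ⟨f, hf, hf2⟩ := hv
        exact ⟨f, hf, hf2.symm⟩
      · have h1 : X.mulVec (B.transpose.mulVec (Pi.single i 1)) = 0 := by
          rw [hX]
          refine ⟨Pi.single i 1, ?_, rfl⟩
          intro j hj
          have : j ≠ i := fun h => hj (h ▸ hi)
          simp [this]
        rw [Matrix.mulVec_mulVec] at h1
        have := congrFun h1 a
        simpa using this
    obtain ⟨d1, X1, hX1, hXS1⟩ := hX B₁ S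
    obtain ⟨d2, X2, hX2, hXS2⟩ := hX B₂ T
    have b1 := css_col_bound hD₁ S hS φ hcol hφS hr1 hr _ hX1
    have b2 := css_col_bound hD₂ T hT φ.transpose hrow (fun j hj i => hφT j hj i)
      (by rwa [Matrix.rank_transpose]) (by rwa [Matrix.rank_transpose]) _ hX2
    rw [Matrix.rank_transpose] at b2
    set H1 := X1 * B₁.transpose with hH1
    set H2 := X2 * B₂.transpose with hH2
    have hHz : H1 * φ * H2.transpose = 0 := by
      have e : H1 * φ * H2.transpose = H1 * ψ * H2.transpose := by
        ext a b
        simp only [Matrix.mul_apply, Matrix.transpose_apply]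
        refine Finset.sum_congr rfl fun j _ => ?_
        by_cases hj : j ∈ T
        · rw [hXS2 j hj b]; simp
        · congr 1
          refine Finset.sum_congr rfl fun i _ => ?_
          by_cases hi : i ∈ S
          · rw [hXS1 i hi a]; simp
          · rw [hφ i hi j hj]
      rw [e, hH1, hH2, Matrix.transpose_mul, Matrix.transpose_transpose]
      calc X1 * B₁.transpose * ψ * (B₂ * X2.transpose)
          = X1 * (B₁.transpose * ψ * B₂) * X2.transpose := by simp only [Matrix.mul_assoc]
        _ = 0 := by rw [hz]; simp
    have c1 : (φ * H2.transpose).rank ≤ Module.finrank (ZMod 2)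
      (LinearMap.range φ.mulVecLin ⊓ LinearMap.ker H1.mulVecLin :
        Submodule (ZMod 2) (I → ZMod 2)) := by
      apply Submodule.finrank_mono
      rintro _ ⟨x, rfl⟩
      refine Submodule.mem_inf.mpr ⟨⟨H2.transpose.mulVec x, by
        rw [Matrix.mulVecLin_apply, Matrix.mulVecLin_apply, Matrix.mulVec_mulVec]⟩, ?_⟩
      simp only [LinearMap.mem_ker, Matrix.mulVecLin_apply, Matrix.mulVec_mulVec]
      rw [← Matrix.mul_assoc, hHz, Matrix.zero_mulVec]
    have c2 : φ.rank = (φ * H2.transpose).rank + Module.finrank (ZMod 2)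
      (LinearMap.range φ.transpose.mulVecLin ⊓ LinearMap.ker H2.mulVecLin :
        Submodule (ZMod 2) (I → ZMod 2)) := by
      rw [← Matrix.rank_transpose φ, ← Matrix.rank_transpose (φ * H2.transpose),
        Matrix.transpose_mul, Matrix.transpose_transpose]
      have := LinearMap.finrank_range_add_finrank_ker
        (H2.mulVecLin.domRestrict (LinearMap.range φ.transpose.mulVecLin))
      rw [LinearMap.range_domRestrict, ← LinearMap.range_comp, ← Matrix.mulVecLin_mul] at this
      rw [Matrix.rank, Matrix.rank, ← this]
      congr 1
      rw [LinearMap.ker_domRestrict]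
      rw [← Submodule.finrank_map_subtype_eq, Submodule.map_comap_subtype]
    omega
  · -- large rank
    obtain ⟨f, hf⟩ := css_indep_cols φ _ hr
    have hfT : ∀ a, f a ∉ T := by
      intro a ha
      apply hf.ne_zero a
      ext i; exact hφT _ ha i
    let g : (Fin (1024 * l) → ZMod 2) →ₗ[ZMod 2] (I → ZMod 2) :=
      Fintype.linearCombination (ZMod 2) (fun a => ψ.col (f a))
    have hg : ∀ c i, g c i = ∑ a, c a * ψ i (f a) := by
      intro c i
      simp [g, Fintype.linearCombination_apply, Finset.sum_apply]
    have hginj : Function.Injective g := by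
      rw [← LinearMap.ker_eq_bot, LinearMap.ker_eq_bot']
      intro c hc
      have := Fintype.linearIndependent_iff.mp hf c (by
        ext i
        by_cases hi : i ∈ S
        · simp [Finset.sum_apply, hφS i hi]
        · have h1 := congrFun hc i
          rw [hg] at h1
          simpa [Finset.sum_apply, hφ i hi _ (hfT _)] using h1)
      ext a; exact this a
    let K := (LinearMap.ker (B₁.transpose.mulVecLin ∘ₗ g)).map g
    have hK := css_D_submodule hD₁ (1024 * l) (by omega) le_rfl S hS (fun a => φ.col (f a))
      (fun a => hcol _) K (by
        rintro _ ⟨c, hc, rfl⟩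
        refine ⟨hc, c, fun i hi => ?_⟩
        rw [hg]
        refine Finset.sum_congr rfl fun a _ => ?_
        rw [Matrix.col_apply, hφ i hi _ (hfT a)])
    have hKf : Module.finrank (ZMod 2) K =
        Module.finrank (ZMod 2) (LinearMap.ker (B₁.transpose.mulVecLin ∘ₗ g)) :=
      (Submodule.equivMapOfInjective g hginj _).finrank_eq.symm
    have hrn := LinearMap.finrank_range_add_finrank_ker (B₁.transpose.mulVecLin ∘ₗ g)
    have hle : Module.finrank (ZMod 2) (LinearMap.range (B₁.transpose.mulVecLin ∘ₗ g)) ≤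
        (B₁.transpose * ψ).rank := by
      apply Submodule.finrank_mono
      rintro _ ⟨c, rfl⟩
      refine ⟨∑ a, c a • Pi.single (f a) 1, ?_⟩
      simp only [Matrix.mulVecLin_apply, LinearMap.comp_apply, ← Matrix.mulVec_mulVec]
      congr 1
      rw [Matrix.mulVec_sum]
      ext i
      simp [Matrix.mulVec_smul, hg, Finset.sum_apply]
    rw [Module.finrank_fin_fun] at hrn
    exact hE ψ hw (by omega) hz


lemma css_mat_self {I K : Type*} (M : Matrix I K (ZMod 2)) : M + M = 0 := by
  ext i j
  exact CharTwo.add_self_eq_zero _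

lemma css_homotopy {I : Type*} [Fintype I] [DecidableEq I] (δ : Matrix I I (ZMod 2))
    (hδ : δ * δ = 0) (S : Finset I)
    (hinj : ∀ v : I → ZMod 2, (∀ i, i ∉ S → v i = 0) → δ.mulVec v = 0 → v = 0) :
    ∃ η : Matrix I I (ZMod 2), ∀ i ∈ S, ∀ a, (1 + δ * η + η * δ) a i = 0 := by
  let FS : Submodule (ZMod 2) (I → ZMod 2) :=
    { carrier := {f | ∀ i, i ∉ S → f i = 0}
      add_mem' := fun {f g} hf hg i hi => by simp [hf i hi, hg i hi]
      zero_mem' := fun i _ => rfl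
      smul_mem' := fun c f hf i hi => by simp [hf i hi] }
  let F : (FS × FS) →ₗ[ZMod 2] (I → ZMod 2) :=
    LinearMap.coprod FS.subtype (δ.mulVecLin ∘ₗ FS.subtype)
  have hF : ∀ f g : FS, F (f, g) = (f : I → ZMod 2) + δ.mulVec g := fun f g => by
    simp [F]
  have hFk : LinearMap.ker F = ⊥ := by
    rw [LinearMap.ker_eq_bot']
    rintro ⟨f, g⟩ h
    rw [hF] at h
    have hf : f = 0 := by
      ext1
      apply hinj _ f.2
      have h2 := congrArg δ.mulVec h
      rw [Matrix.mulVec_add, Matrix.mulVec_mulVec, hδ, Matrix.zero_mulVec, add_zero,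
        Matrix.mulVec_zero] at h2
      exact h2
    have hg : g = 0 := by
      ext1
      apply hinj _ g.2
      simpa [hf] using h
    rw [hf, hg]; rfl
  obtain ⟨L, hL⟩ := LinearMap.exists_leftInverse_of_injective F hFk
  let ηl : (I → ZMod 2) →ₗ[ZMod 2] (I → ZMod 2) := FS.subtype ∘ₗ LinearMap.snd _ _ _ ∘ₗ L
  have hη : ∀ f g : FS, ηl ((f : I → ZMod 2) + δ.mulVec g) = g := by
    intro f g
    rw [← hF]
    have := LinearMap.congr_fun hL (f, g)
    simp only [LinearMap.comp_apply, LinearMap.id_apply] at this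
    simp [ηl, this]
  refine ⟨LinearMap.toMatrix' ηl, fun i hi a => ?_⟩
  let e : FS := ⟨Pi.single i 1, fun j hj => by
    have : j ≠ i := fun h => hj (h ▸ hi)
    simp [this]⟩
  have h1 : ηl (Pi.single i 1) = 0 := by
    have := hη e 0
    simpa [e] using this
  have h2 : ηl (δ.mulVec (Pi.single i 1)) = Pi.single i 1 := by
    have := hη 0 e
    simpa [e] using this
  have h3 : (1 + δ * LinearMap.toMatrix' ηl + LinearMap.toMatrix' ηl * δ).mulVec (Pi.single i 1)
      = 0 := by
    rw [Matrix.add_mulVec, Matrix.add_mulVec, ← Matrix.mulVec_mulVec, ← Matrix.mulVec_mulVec,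
      LinearMap.toMatrix'_mulVec, LinearMap.toMatrix'_mulVec, h1, h2, Matrix.one_mulVec,
      Matrix.mulVec_zero, add_zero]
    ext; exact CharTwo.add_self_eq_zero _
  have := congrFun h3 a
  rw [Matrix.mulVec_single_one] at this
  exact this

lemma css_trivial {I : Type*} [Fintype I] [DecidableEq I] (δ₁ δ₂ : Matrix I I (ZMod 2))
    (h₁ : δ₁ * δ₁ = 0) (h₂ : δ₂ * δ₂ = 0) (S T : Finset I)
    (hS : ∀ v : I → ZMod 2, (∀ i, i ∉ S → v i = 0) → δ₁.mulVec v = 0 → v = 0)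
    (hT : ∀ v : I → ZMod 2, (∀ i, i ∉ T → v i = 0) → δ₂.mulVec v = 0 → v = 0)
    (ψ : Matrix I I (ZMod 2)) (hψ : ∀ i, i ∉ S → ∀ j, j ∉ T → ψ i j = 0)
    (hc : δ₁ * ψ + ψ * δ₂.transpose = 0) :
    ∃ χ : Matrix I I (ZMod 2), δ₁ * χ + χ * δ₂.transpose = ψ := by
  obtain ⟨η₁, hη₁⟩ := css_homotopy δ₁ h₁ S hS
  obtain ⟨η₂, hη₂⟩ := css_homotopy δ₂ h₂ T hT
  set p₁ := 1 + δ₁ * η₁ + η₁ * δ₁ with hp₁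
  set p₂ := 1 + δ₂ * η₂ + η₂ * δ₂ with hp₂
  have hpp : p₁ * ψ * p₂.transpose = 0 := by
    ext a b
    simp only [Matrix.mul_apply, Matrix.transpose_apply, Matrix.zero_apply]
    refine Finset.sum_eq_zero fun j _ => ?_
    by_cases hj : j ∈ T
    · rw [hη₂ j hj]; simp
    · rw [Finset.sum_eq_zero, zero_mul]
      intro i _
      by_cases hi : i ∈ S
      · rw [hη₁ i hi]; simp
      · rw [hψ i hi j hj]; simp
  have hc' : ψ * δ₂.transpose = δ₁ * ψ := by
    have := congrArg (fun M => δ₁ * ψ + M) hc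
    simp only [← add_assoc, css_mat_self, zero_add, add_zero] at this
    exact this
  have hcomm : δ₁ * p₁ = p₁ * δ₁ := by
    simp only [hp₁, mul_add, add_mul, mul_one, one_mul, ← mul_assoc, h₁, zero_mul]
    rw [mul_assoc η₁, h₁]; simp
  have e1 : δ₁ * η₁ + η₁ * δ₁ = p₁ + 1 := by
    rw [hp₁]
    have := css_mat_self (1 : Matrix I I (ZMod 2))
    calc _ = δ₁ * η₁ + η₁ * δ₁ + (1 + 1) := by rw [this, add_zero]
      _ = _ := by abel
  have e2 : η₂.transpose * δ₂.transpose + δ₂.transpose * η₂.transpose = p₂.transpose + 1 := by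
    rw [hp₂]
    have := css_mat_self (1 : Matrix I I (ZMod 2))
    simp only [Matrix.transpose_add, Matrix.transpose_mul, Matrix.transpose_one]
    calc _ = η₂.transpose * δ₂.transpose + δ₂.transpose * η₂.transpose + (1 + 1) := by
          rw [this, add_zero]
      _ = _ := by abel
  refine ⟨η₁ * ψ + p₁ * ψ * η₂.transpose, ?_⟩
  calc δ₁ * (η₁ * ψ + p₁ * ψ * η₂.transpose) + (η₁ * ψ + p₁ * ψ * η₂.transpose) * δ₂.transpose
      = δ₁ * η₁ * ψ + η₁ * (ψ * δ₂.transpose) + ((δ₁ * p₁) * ψ * η₂.transpose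
        + p₁ * ψ * (η₂.transpose * δ₂.transpose)) := by
        simp only [mul_add, add_mul, mul_assoc]; abel
    _ = (δ₁ * η₁ + η₁ * δ₁) * ψ + p₁ * ψ * (η₂.transpose * δ₂.transpose
        + δ₂.transpose * η₂.transpose) := by
        rw [hc', hcomm, mul_assoc p₁ δ₁ ψ, ← hc']
        simp only [mul_add, add_mul, mul_assoc]
        rw [hc']; abel
    _ = (p₁ * ψ + p₁ * ψ) + ψ + p₁ * ψ * p₂.transpose := by
        rw [e1, e2]; simp only [mul_add, add_mul, mul_one, one_mul]; abel
    _ = ψ := by rw [css_mat_self, hpp]; simp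

lemma css_distance {I J : Type*} [Fintype I] [Fintype J] [DecidableEq I] [DecidableEq J] {l : ℕ}
    (hl : 1 ≤ l) {A₁ A₂ B₁ B₂ : Matrix I J (ZMod 2)}
    (hD₁ : CssD l B₁) (hD₂ : CssD l B₂) (hE : CssE l B₁ B₂)
    (ho₁ : B₁.transpose * A₁ = 0) (ho₂ : B₂.transpose * A₂ = 0)
    (hA₁ : ∃ L : Matrix J I (ZMod 2), L * A₁ = 1) (hA₂ : ∃ L : Matrix J I (ZMod 2), L * A₂ = 1)
    (ψ : Matrix I I (ZMod 2)) (hw : hammingNorm (fun p : I × I => ψ p.1 p.2) ≤ l * l)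
    (hc : A₁ * B₁.transpose * ψ + ψ * (A₂ * B₂.transpose).transpose = 0) :
    ∃ χ : Matrix I I (ZMod 2),
      A₁ * B₁.transpose * χ + χ * (A₂ * B₂.transpose).transpose = ψ := by
  obtain ⟨L₁, hL₁⟩ := hA₁
  obtain ⟨L₂, hL₂⟩ := hA₂
  have hsq : ∀ A B : Matrix I J (ZMod 2), B.transpose * A = 0 →
      A * B.transpose * (A * B.transpose) = 0 := by
    intro A B h
    calc A * B.transpose * (A * B.transpose) = A * (B.transpose * A) * B.transpose := by
          simp only [Matrix.mul_assoc]
      _ = 0 := by rw [h]; simp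
  have hker : ∀ (A B : Matrix I J (ZMod 2)) (L : Matrix J I (ZMod 2)), L * A = 1 → CssD l B →
      ∀ S : Finset I, S.card ≤ l → ∀ v : I → ZMod 2, (∀ i, i ∉ S → v i = 0) →
      (A * B.transpose).mulVec v = 0 → v = 0 := by
    intro A B L hL hD S hS v hv h
    apply css_D_kernel hl hD
    · refine le_trans (Finset.card_le_card ?_) hS
      intro i hi
      by_contra hiS
      exact (Finset.mem_filter.mp hi).2 (hv i hiS)
    · have h1 := congrArg L.mulVec h
      rw [Matrix.mulVec_mulVec, ← Matrix.mul_assoc, hL, Matrix.one_mul, Matrix.mulVec_zero] at h1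
      exact h1
  have hz : B₁.transpose * ψ * B₂ = 0 := by
    have h1 : A₁ * B₁.transpose * (A₁ * B₁.transpose * ψ + ψ * (A₂ * B₂.transpose).transpose) = 0 := by
      rw [hc, Matrix.mul_zero]
    rw [Matrix.mul_add, ← Matrix.mul_assoc, hsq A₁ B₁ ho₁, Matrix.zero_mul, zero_add,
      Matrix.transpose_mul, Matrix.transpose_transpose] at h1
    have h2 : L₁ * (A₁ * B₁.transpose * (ψ * (B₂ * A₂.transpose))) * L₂.transpose = 0 := by
      rw [h1]; simp
    have h3 : A₂.transpose * L₂.transpose = 1 := by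
      rw [← Matrix.transpose_mul, hL₂, Matrix.transpose_one]
    calc B₁.transpose * ψ * B₂ = (L₁ * A₁) * (B₁.transpose * ψ * B₂) * (A₂.transpose * L₂.transpose) := by
          rw [hL₁, h3, Matrix.one_mul, Matrix.mul_one]
      _ = L₁ * (A₁ * B₁.transpose * (ψ * (B₂ * A₂.transpose))) * L₂.transpose := by
          simp only [Matrix.mul_assoc]
      _ = 0 := h2
  obtain ⟨S, T, hS, hT, hST⟩ := css_core hl hD₁ hD₂ hE ψ hw hz
  exact css_trivial _ _ (hsq _ _ ho₁) (hsq _ _ ho₂) S T (hker _ _ L₁ hL₁ hD₁ S hS)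
    (hker _ _ L₂ hL₂ hD₂ T hT) ψ hST hc

/-- The two matrices of the random systematic CSS pair. -/
def cssB {J L : Type*} [DecidableEq J]
    (ω : Matrix J J (ZMod 2) × Matrix L J (ZMod 2) × Matrix L J (ZMod 2)) :
    Matrix (J ⊕ (J ⊕ L)) J (ZMod 2) :=
  Matrix.of fun i b => Sum.elim (fun j => (1 : Matrix J J (ZMod 2)) j b)
    (Sum.elim (fun j => ω.1 j b) (fun n => ω.2.1 n b)) i

/-- The dual matrix. -/
def cssA {J L : Type*} [DecidableEq J] [Fintype L]
    (ω : Matrix J J (ZMod 2) × Matrix L J (ZMod 2) × Matrix L J (ZMod 2)) :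
    Matrix (J ⊕ (J ⊕ L)) J (ZMod 2) :=
  Matrix.of fun i b => Sum.elim (fun j => (ω.1.transpose + ω.2.1.transpose * ω.2.2) j b)
    (Sum.elim (fun j => (1 : Matrix J J (ZMod 2)) j b) (fun n => ω.2.2 n b)) i

lemma css_orth {J L : Type*} [DecidableEq J] [Fintype J] [Fintype L]
    (ω : Matrix J J (ZMod 2) × Matrix L J (ZMod 2) × Matrix L J (ZMod 2)) :
    (cssB ω).transpose * cssA ω = 0 := by
  have : (cssB ω).transpose * cssA ω
      = (ω.1.transpose + ω.2.1.transpose * ω.2.2) + (ω.1.transpose + ω.2.1.transpose * ω.2.2) := by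
    ext a b
    simp only [Matrix.mul_apply, Fintype.sum_sum_type, cssA, cssB, Matrix.transpose_apply,
      Matrix.of_apply, Sum.elim_inl, Sum.elim_inr, Matrix.add_apply, Matrix.one_apply]
    simp
  rw [this, css_mat_self]

lemma css_leftB {J L : Type*} [DecidableEq J] [Fintype J] [Fintype L]
    (ω : Matrix J J (ZMod 2) × Matrix L J (ZMod 2) × Matrix L J (ZMod 2)) :
    ∃ M : Matrix J (J ⊕ (J ⊕ L)) (ZMod 2), M * cssB ω = 1 := by
  refine ⟨Matrix.of fun a i => Sum.elim (fun j => (1 : Matrix J J (ZMod 2)) a j) (fun _ => 0) i, ?_⟩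
  ext a b
  simp [Matrix.mul_apply, Fintype.sum_sum_type, cssB, Matrix.one_apply]

lemma css_leftA {J L : Type*} [DecidableEq J] [Fintype J] [Fintype L]
    (ω : Matrix J J (ZMod 2) × Matrix L J (ZMod 2) × Matrix L J (ZMod 2)) :
    ∃ M : Matrix J (J ⊕ (J ⊕ L)) (ZMod 2), M * cssA ω = 1 := by
  refine ⟨Matrix.of fun a i => Sum.elim (fun _ => 0)
    (Sum.elim (fun j => (1 : Matrix J J (ZMod 2)) a j) (fun _ => 0)) i, ?_⟩
  ext a b
  simp [Matrix.mul_apply, Fintype.sum_sum_type, cssA, Matrix.one_apply]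

lemma css_unifB {J L : Type*} [DecidableEq J] [Fintype J] [DecidableEq L] [Fintype L] :
    CssUnif (cssB (J := J) (L := L)) := by
  refine css_unif_of_shift (N := J ⊕ L) _ Sum.inl Sum.inr ?_ ?_ ?_
    (fun Y ω => (ω.1 + Matrix.of (fun j => Y (Sum.inl j)), ω.2.1 + Matrix.of (fun j => Y (Sum.inr j)), ω.2.2))
    ?_ ?_
  · intro f; rw [Fintype.sum_sum_type]
  · intro f h1 h2; ext i; rcases i with i | i
    · exact h1 i
    · exact h2 i
  · intro ω a b; simp [cssB, Matrix.one_apply]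
  · rintro Y ⟨a, b, c⟩ ⟨a', b', c'⟩ h
    simpa using h
  · intro Y ω n b; rcases n with n | n <;> simp [cssB]

lemma css_unifA {J L : Type*} [DecidableEq J] [Fintype J] [DecidableEq L] [Fintype L] :
    CssUnif (cssA (J := J) (L := L)) := by
  refine css_unif_of_shift (N := J ⊕ L) _ (fun j => Sum.inr (Sum.inl j))
    (Sum.elim Sum.inl (fun n => Sum.inr (Sum.inr n))) ?_ ?_ ?_
    (fun Y ω => (ω.1 + (Matrix.of (fun j => Y (Sum.inl j))
        + ω.2.1.transpose * Matrix.of (fun j => Y (Sum.inr j))).transpose,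
      ω.2.1, ω.2.2 + Matrix.of (fun j => Y (Sum.inr j))))
    ?_ ?_
  · intro f; simp only [Fintype.sum_sum_type, Sum.elim_inl, Sum.elim_inr]; abel
  · intro f h1 h2; ext i; rcases i with i | i | i
    · exact h2 (Sum.inl i)
    · exact h1 i
    · exact h2 (Sum.inr i)
  · intro ω a b; simp [cssA, Matrix.one_apply]
  · rintro Y ⟨a, b, c⟩ ⟨a', b', c'⟩ h
    simp only [Prod.mk.injEq] at h
    obtain ⟨h1, rfl, h3⟩ := h
    simp only [add_left_inj] at h1 h3
    rw [h1, h3]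
  · intro Y ω n b; rcases n with n | n
    · simp only [cssA, Matrix.of_apply, Sum.elim_inl, Matrix.transpose_add, Matrix.transpose_transpose,
        Matrix.mul_add, Matrix.add_apply]
      have := CharTwo.add_self_eq_zero
        ((ω.2.1.transpose * Matrix.of (fun j => Y (Sum.inr j))) n b)
      linear_combination this
    · simp [cssA]

open Classical in
lemma css_exists_pair (l : ℕ) (hl : 1 ≤ l) : ∃ (I J : Type) (_ : Fintype I) (_ : Fintype J)
    (_ : DecidableEq I) (_ : DecidableEq J) (A₁ B₁ A₂ B₂ : Matrix I J (ZMod 2)),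
    Fintype.card I = 2 ^ 15 * l ∧ Fintype.card J = 2 ^ 12 * l ∧
    (CssD l A₁ ∧ CssD l B₁ ∧ CssD l A₂ ∧ CssD l B₂ ∧ CssE l A₁ A₂ ∧ CssE l B₁ B₂) ∧
    (B₁.transpose * A₁ = 0 ∧ B₂.transpose * A₂ = 0) ∧
    (∃ L : Matrix J I (ZMod 2), L * A₁ = 1) ∧ (∃ L : Matrix J I (ZMod 2), L * A₂ = 1) ∧
    (∃ L : Matrix J I (ZMod 2), L * B₁ = 1) ∧ (∃ L : Matrix J I (ZMod 2), L * B₂ = 1) := by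
  let J := Fin (2 ^ 12 * l)
  let L := Fin (6 * (2 ^ 12 * l))
  let I := J ⊕ (J ⊕ L)
  let Ω := Matrix J J (ZMod 2) × Matrix L J (ZMod 2) × Matrix L J (ZMod 2)
  have hJ : Fintype.card J = 2 ^ 12 * l := by simp [J]
  have hI : Fintype.card I = 2 ^ 15 * l := by
    simp only [I, J, L, Fintype.card_sum, Fintype.card_fin]; omega
  have hΩ : 0 < Fintype.card Ω := Fintype.card_pos_iff.mpr ⟨(0, 0, 0)⟩
  have ex : ∀ P Q R S : Ω → Prop,
      (Finset.univ.filter fun ω => ¬ P ω).card * 8 ≤ Fintype.card Ω →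
      (Finset.univ.filter fun ω => ¬ Q ω).card * 8 ≤ Fintype.card Ω →
      (Finset.univ.filter fun ω => ¬ R ω).card * 8 ≤ Fintype.card Ω →
      (Finset.univ.filter fun ω => ¬ S ω).card * 8 ≤ Fintype.card Ω →
      ∃ ω, P ω ∧ Q ω ∧ R ω ∧ S ω := by
    intro P Q R S h1 h2 h3 h4
    by_contra hcon
    push Not at hcon
    have hsub : (Finset.univ : Finset Ω) ⊆ ((Finset.univ.filter fun ω => ¬ P ω) ∪
      (Finset.univ.filter fun ω => ¬ Q ω)) ∪ ((Finset.univ.filter fun ω => ¬ R ω) ∪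
      (Finset.univ.filter fun ω => ¬ S ω)) := by
      intro ω _
      simp only [Finset.mem_union, Finset.mem_filter, Finset.mem_univ, true_and]
      have := hcon ω
      tauto
    have c0 := Finset.card_le_card hsub
    rw [Finset.card_univ] at c0
    have c1 := Finset.card_union_le ((Finset.univ.filter fun ω => ¬ P ω) ∪
      (Finset.univ.filter fun ω => ¬ Q ω)) ((Finset.univ.filter fun ω => ¬ R ω) ∪
      (Finset.univ.filter fun ω => ¬ S ω))
    have c2 := Finset.card_union_le (Finset.univ.filter fun ω => ¬ P ω)
      (Finset.univ.filter fun ω => ¬ Q ω)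
    have c3 := Finset.card_union_le (Finset.univ.filter fun ω => ¬ R ω)
      (Finset.univ.filter fun ω => ¬ S ω)
    omega
  have hA : CssUnif (cssA (J := J) (L := L)) := css_unifA
  have hB : CssUnif (cssB (J := J) (L := L)) := css_unifB
  have dA := css_prob_D l hl hI hJ _ hA
  have dB := css_prob_D l hl hI hJ _ hB
  obtain ⟨ω₁, a1, b1, -, -⟩ := ex _ _ _ _ dA dB dA dB
  obtain ⟨ω₂, a2, b2, a3, b3⟩ := ex _ _ _ _ dA dB (css_prob_E l hl hI hJ _ hA (cssA ω₁))
    (css_prob_E l hl hI hJ _ hB (cssB ω₁))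
  refine ⟨I, J, inferInstance, inferInstance, inferInstance, inferInstance,
    cssA ω₁, cssB ω₁, cssA ω₂, cssB ω₂, hI, hJ, ⟨?_, ?_, ?_, ?_, ?_, ?_⟩,
    ⟨css_orth _, css_orth _⟩, css_leftA _, css_leftA _, css_leftB _, css_leftB _⟩
  all_goals assumption


lemma css_card_sum {K L : Type*} [Fintype K] [Fintype L] (f : K ⊕ L → ZMod 2) :
    hammingNorm f = hammingNorm (fun k => f (Sum.inl k)) + hammingNorm (fun k => f (Sum.inr k)) := by
  classical
  simp only [hammingNorm]
  simp only [Finset.card_filter, Fintype.sum_sum_type]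

lemma css_norm_zero {K : Type*} [Fintype K] : hammingNorm (fun _ : K => (0 : ZMod 2)) = 0 := by
  simp [hammingNorm]

lemma css_norm_equiv {K L : Type*} [Fintype K] [Fintype L] (e : K ≃ L) (f : K → ZMod 2) :
    hammingNorm (fun k => f (e.symm k)) = hammingNorm f := by
  classical
  simp only [hammingNorm]
  exact Finset.card_equiv e.symm (by simp)

lemma css_single_le {K : Type*} [Fintype K] [DecidableEq K] (i : K) :
    hammingNorm (fun j => (1 : Matrix K K (ZMod 2)) i j) ≤ 1 := by
  simp only [hammingNorm]
  refine Finset.card_le_one.mpr ?_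
  intro a ha b hb
  simp only [Finset.mem_filter, Finset.mem_univ, true_and, Matrix.one_apply, ne_eq,
    ite_eq_right_iff, not_forall] at ha hb
  rw [← ha.1, ← hb.1]

lemma css_pad {K W : Type*} [Fintype K] [Fintype W] [DecidableEq K] (D : Matrix K K (ZMod 2))
    (P : Matrix K W (ZMod 2)) (Q : Matrix W K (ZMod 2)) (hD : D = P * Q) (hDD : D * D = 0)
    (d w p n : ℕ) (hw : 1 ≤ w) (hn : Fintype.card K + p = n)
    (h1 : ∀ v : K → ZMod 2, hammingNorm v ≤ d → D.mulVec v = 0 → ∃ x, D.mulVec x = v)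
    (h2 : ∀ v : K → ZMod 2, hammingNorm v ≤ d → D.transpose.mulVec v = 0 →
      ∃ x, D.transpose.mulVec x = v)
    (hr : ∀ i, hammingNorm (fun j => D i j) ≤ w) (hc : ∀ j, hammingNorm (fun i => D i j) ≤ w) :
    ∃ (rX rZ : ℕ) (AX : Matrix (Fin rX) (Fin n) (ZMod 2)) (AZ : Matrix (Fin rZ) (Fin n) (ZMod 2)),
      AX * AZ.transpose = 0 ∧ AX.rank ≤ Fintype.card W + p ∧ AZ.rank ≤ Fintype.card W ∧
      (∀ v : Fin n → ZMod 2, AX.mulVec v = 0 →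
          (¬ ∃ x : Fin rZ → ZMod 2, AZ.transpose.mulVec x = v) → d < hammingNorm v) ∧
      (∀ v : Fin n → ZMod 2, AZ.mulVec v = 0 →
          (¬ ∃ x : Fin rX → ZMod 2, AX.transpose.mulVec x = v) → d < hammingNorm v) ∧
      (∀ i, hammingNorm (fun j => AX i j) ≤ w) ∧ (∀ j, hammingNorm (fun i => AX i j) ≤ w) ∧
      (∀ i, hammingNorm (fun j => AZ i j) ≤ w) ∧ (∀ j, hammingNorm (fun i => AZ i j) ≤ w) := by
  classical
  let e : K ⊕ Fin p ≃ Fin n := Fintype.equivFinOfCardEq (by simp [hn])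
  let eK : K ≃ Fin (Fintype.card K) := Fintype.equivFin K
  let X : Matrix (K ⊕ Fin p) (K ⊕ Fin p) (ZMod 2) := Matrix.fromBlocks D 0 0 1
  let Z : Matrix K (K ⊕ Fin p) (ZMod 2) := Matrix.fromCols D.transpose 0
  have hZt : Z.transpose = Matrix.fromRows D 0 := by
    ext i j; rcases i with i | i <;> rfl
  have hXt : X.transpose = Matrix.fromBlocks D.transpose 0 0 1 := by
    simp [X, Matrix.fromBlocks_transpose]
  refine ⟨n, Fintype.card K, X.submatrix e.symm e.symm, Z.submatrix eK.symm e.symm,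
    ?_, ?_, ?_, ?_, ?_, ?_, ?_, ?_, ?_⟩
  · rw [Matrix.transpose_submatrix, Matrix.submatrix_mul_equiv, hZt]
    have : X * Matrix.fromRows D (0 : Matrix (Fin p) K (ZMod 2)) = 0 := by
      simp only [X]
      rw [Matrix.fromBlocks_mul_fromRows]
      ext i j; rcases i with i | i <;> simp [hDD]
    rw [this]; rfl
  · rw [Matrix.rank_submatrix]
    have : X = (Matrix.fromBlocks P 0 0 1 : Matrix (K ⊕ Fin p) (W ⊕ Fin p) (ZMod 2)) *
        (Matrix.fromBlocks Q 0 0 1 : Matrix (W ⊕ Fin p) (K ⊕ Fin p) (ZMod 2)) := by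
      rw [Matrix.fromBlocks_multiply]
      simp [X, hD]
    rw [this]
    refine (Matrix.rank_mul_le_left _ _).trans ((Matrix.rank_le_card_width _).trans ?_)
    simp
  · rw [Matrix.rank_submatrix]
    have : Z = Q.transpose * Matrix.fromCols P.transpose 0 := by
      simp [Z, Matrix.mul_fromCols, hD, Matrix.transpose_mul]
    rw [this]
    exact (Matrix.rank_mul_le_left _ _).trans (Matrix.rank_le_card_width _)
  · intro v hv hx
    by_contra hlt
    push Not at hlt
    apply hx
    rw [Matrix.submatrix_mulVec_equiv, Equiv.symm_symm] at hv
    have hv' : X.mulVec (v ∘ e) = 0 := by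
      ext i; have := congrFun hv (e i); simpa using this
    simp only [X, Matrix.fromBlocks_mulVec] at hv'
    have e1 : D.mulVec ((v ∘ e) ∘ Sum.inl) = 0 := by
      ext i; have := congrFun hv' (Sum.inl i); simpa using this
    have e2 : ∀ i, v (e (Sum.inr i)) = 0 := by
      intro i; have := congrFun hv' (Sum.inr i); simpa using this
    have hvn : hammingNorm (v ∘ e) = hammingNorm v := css_norm_equiv e.symm v
    rw [css_card_sum] at hvn
    obtain ⟨x, hx⟩ := h1 ((v ∘ e) ∘ Sum.inl) (le_trans (by rw [← hvn]; exact Nat.le_add_right _ _) hlt) e1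
    refine ⟨x ∘ eK.symm, ?_⟩
    rw [Matrix.transpose_submatrix, Matrix.submatrix_mulVec_equiv, Equiv.symm_symm, hZt,
      Matrix.fromRows_mulVec]
    ext i
    obtain ⟨k, rfl⟩ := e.surjective i
    have hxx : (x ∘ eK.symm) ∘ eK = x := by ext; simp
    rcases k with k | k
    · simp only [Function.comp_apply, Equiv.symm_apply_apply, Sum.elim_inl, hxx]
      rw [hx]; rfl
    · simp [e2]
  · intro v hv hx
    by_contra hlt
    push Not at hlt
    apply hx
    rw [Matrix.submatrix_mulVec_equiv, Equiv.symm_symm] at hv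
    have hv' : Z.mulVec (v ∘ e) = 0 := by
      ext i; have := congrFun hv (eK i)
      simp only [Function.comp_apply, Equiv.symm_apply_apply] at this
      exact this
    simp only [Z, Matrix.fromCols_mulVec] at hv'
    have e1 : D.transpose.mulVec ((v ∘ e) ∘ Sum.inl) = 0 := by
      rw [Matrix.zero_mulVec, add_zero] at hv'; exact hv'
    have hvn : hammingNorm (v ∘ e) = hammingNorm v := css_norm_equiv e.symm v
    rw [css_card_sum] at hvn
    obtain ⟨x, hx⟩ := h2 ((v ∘ e) ∘ Sum.inl) (le_trans (by rw [← hvn]; exact Nat.le_add_right _ _) hlt) e1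
    refine ⟨Sum.elim x (fun i => v (e (Sum.inr i))) ∘ e.symm, ?_⟩
    rw [Matrix.transpose_submatrix, Matrix.submatrix_mulVec_equiv, Equiv.symm_symm, hXt,
      Matrix.fromBlocks_mulVec]
    have hxx : (Sum.elim x (fun i => v (e (Sum.inr i))) ∘ e.symm) ∘ e
      = Sum.elim x (fun i => v (e (Sum.inr i))) := by ext; simp
    rw [hxx, Sum.elim_comp_inl, Sum.elim_comp_inr, hx]
    ext i
    obtain ⟨k, rfl⟩ := e.surjective i
    rcases k with k | k
    · simp
    · simp
  · intro i
    refine (css_norm_equiv e (fun j => X (e.symm i) j)).trans_le ?_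
    rw [css_card_sum]
    rcases e.symm i with k | k
    · simpa [X, css_norm_zero] using hr k
    · simpa [X, css_norm_zero] using (css_single_le k).trans hw
  · intro i
    refine (css_norm_equiv e (fun j => X j (e.symm i))).trans_le ?_
    rw [css_card_sum]
    rcases e.symm i with k | k
    · simpa [X, css_norm_zero] using hc k
    · have := (css_single_le k).trans hw
      have h1 : (fun j => (1 : Matrix (Fin p) (Fin p) (ZMod 2)) j k) =
          fun j => (1 : Matrix (Fin p) (Fin p) (ZMod 2)) k j := by
        ext j; simp only [Matrix.one_apply, eq_comm]
      rw [← h1] at this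
      simpa [X, css_norm_zero] using this
  · intro i
    refine (css_norm_equiv e (fun j => Z (eK.symm i) j)).trans_le ?_
    rw [css_card_sum]
    simpa [Z, css_norm_zero] using hc (eK.symm i)
  · intro i
    refine (css_norm_equiv eK (fun j => Z j (e.symm i))).trans_le ?_
    rcases e.symm i with k | k
    · simpa [Z, css_norm_zero] using hr k
    · simp [Z, css_norm_zero]


open scoped Kronecker in
/-- The boundary map of the (single complex) homological product. -/
def cssDiff {I : Type*} [DecidableEq I] (δ₁ δ₂ : Matrix I I (ZMod 2)) :
    Matrix (I × I) (I × I) (ZMod 2) := δ₁ ⊗ₖ 1 + 1 ⊗ₖ δ₂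

lemma css_diff_transpose {I : Type*} [DecidableEq I] (δ₁ δ₂ : Matrix I I (ZMod 2)) :
    (cssDiff δ₁ δ₂).transpose = cssDiff δ₁.transpose δ₂.transpose := by
  simp only [cssDiff, Matrix.transpose_add]
  rw [← Matrix.kroneckerMap_transpose, ← Matrix.kroneckerMap_transpose, Matrix.transpose_one]

lemma css_diff_mulVec {I : Type*} [Fintype I] [DecidableEq I] (δ₁ δ₂ : Matrix I I (ZMod 2))
    (v : I × I → ZMod 2) (p : I × I) :
    (cssDiff δ₁ δ₂).mulVec v p =
      (δ₁ * Matrix.of (fun a b => v (a, b)) + Matrix.of (fun a b => v (a, b)) * δ₂.transpose) p.1 p.2 := by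
  simp only [cssDiff, Matrix.mulVec, dotProduct, Matrix.add_apply, Matrix.kroneckerMap_apply,
    Matrix.mul_apply, Matrix.of_apply, Matrix.transpose_apply, Fintype.sum_prod_type, add_mul,
    Finset.sum_add_distrib, Matrix.one_apply]
  congr 1
  · simp
  · rw [Finset.sum_comm]
    simp [mul_comm]

lemma css_diff_sq {I : Type*} [Fintype I] [DecidableEq I] (δ₁ δ₂ : Matrix I I (ZMod 2))
    (h₁ : δ₁ * δ₁ = 0) (h₂ : δ₂ * δ₂ = 0) : cssDiff δ₁ δ₂ * cssDiff δ₁ δ₂ = 0 := by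
  simp only [cssDiff, Matrix.mul_add, Matrix.add_mul, ← Matrix.mul_kronecker_mul, h₁, h₂,
    Matrix.one_mul, Matrix.mul_one, Matrix.zero_kronecker, Matrix.kronecker_zero]
  rw [zero_add, add_zero, css_mat_self]

open scoped Kronecker in
lemma css_diff_factor {I J : Type*} [Fintype I] [DecidableEq I] [Fintype J]
    (A₁ A₂ B₁ B₂ : Matrix I J (ZMod 2)) :
    cssDiff (A₁ * B₁.transpose) (A₂ * B₂.transpose) =
      Matrix.fromCols (A₁ ⊗ₖ (1 : Matrix I I (ZMod 2))) ((1 : Matrix I I (ZMod 2)) ⊗ₖ A₂) *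
      Matrix.fromRows (B₁.transpose ⊗ₖ (1 : Matrix I I (ZMod 2)))
        ((1 : Matrix I I (ZMod 2)) ⊗ₖ B₂.transpose) := by
  rw [Matrix.fromCols_mul_fromRows, ← Matrix.mul_kronecker_mul, ← Matrix.mul_kronecker_mul]
  simp [cssDiff]

lemma css_diff_row {I : Type*} [Fintype I] [DecidableEq I] (δ₁ δ₂ : Matrix I I (ZMod 2))
    (p : I × I) : hammingNorm (fun q => cssDiff δ₁ δ₂ p q) ≤ 2 * Fintype.card I := by
  simp only [hammingNorm]
  have hs : (Finset.univ.filter fun q => cssDiff δ₁ δ₂ p q ≠ 0) ⊆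
      (Finset.univ.image fun i : I => (i, p.2)) ∪ (Finset.univ.image fun i : I => (p.1, i)) := by
    rintro ⟨a, b⟩ hq
    simp only [Finset.mem_filter, Finset.mem_univ, true_and, cssDiff, Matrix.add_apply,
      Matrix.kroneckerMap_apply, Matrix.one_apply] at hq
    simp only [Finset.mem_union, Finset.mem_image, Finset.mem_univ, true_and, Prod.mk.injEq]
    by_contra hcon
    push Not at hcon
    have h1 : p.2 ≠ b := hcon.1 a rfl
    have h2 : p.1 ≠ a := fun h => hcon.2 b h rfl
    simp [h1, h2] at hq
  refine (Finset.card_le_card hs).trans ((Finset.card_union_le _ _).trans ?_)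
  have c1 : (Finset.univ.image fun i : I => (i, p.2)).card ≤ Fintype.card I := Finset.card_image_le
  have c2 : (Finset.univ.image fun i : I => (p.1, i)).card ≤ Fintype.card I := Finset.card_image_le
  omega

lemma css_diff_dist {I J : Type*} [Fintype I] [Fintype J] [DecidableEq I] [DecidableEq J] {l : ℕ}
    (hl : 1 ≤ l) {A₁ A₂ B₁ B₂ : Matrix I J (ZMod 2)}
    (hD₁ : CssD l B₁) (hD₂ : CssD l B₂) (hE : CssE l B₁ B₂)
    (ho₁ : B₁.transpose * A₁ = 0) (ho₂ : B₂.transpose * A₂ = 0)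
    (hA₁ : ∃ L : Matrix J I (ZMod 2), L * A₁ = 1) (hA₂ : ∃ L : Matrix J I (ZMod 2), L * A₂ = 1)
    (v : I × I → ZMod 2) (hw : hammingNorm v ≤ l * l)
    (hc : (cssDiff (A₁ * B₁.transpose) (A₂ * B₂.transpose)).mulVec v = 0) :
    ∃ x, (cssDiff (A₁ * B₁.transpose) (A₂ * B₂.transpose)).mulVec x = v := by
  obtain ⟨χ, hχ⟩ := css_distance hl hD₁ hD₂ hE ho₁ ho₂ hA₁ hA₂ (Matrix.of fun a b => v (a, b)) hw (by
    ext a b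
    have := congrFun hc (a, b)
    rw [css_diff_mulVec] at this
    exact this)
  refine ⟨fun p => χ p.1 p.2, ?_⟩
  ext p
  rw [css_diff_mulVec]
  exact congrFun (congrFun hχ p.1) p.2

lemma css_sq_zero {I J : Type*} [Fintype I] [Fintype J] (A B : Matrix I J (ZMod 2))
    (h : B.transpose * A = 0) : A * B.transpose * (A * B.transpose) = 0 := by
  calc A * B.transpose * (A * B.transpose) = A * (B.transpose * A) * B.transpose := by
        simp only [Matrix.mul_assoc]
    _ = 0 := by rw [h]; simp

lemma css_final (l p n : ℕ) (hl : 1 ≤ l) (hn : 2 ^ 30 * l ^ 2 + p = n) :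
    ∃ (rX rZ : ℕ) (AX : Matrix (Fin rX) (Fin n) (ZMod 2)) (AZ : Matrix (Fin rZ) (Fin n) (ZMod 2)),
      AX * AZ.transpose = 0 ∧ AX.rank ≤ 2 ^ 28 * l ^ 2 + p ∧ AZ.rank ≤ 2 ^ 28 * l ^ 2 ∧
      (∀ v : Fin n → ZMod 2, AX.mulVec v = 0 →
          (¬ ∃ x : Fin rZ → ZMod 2, AZ.transpose.mulVec x = v) → l ^ 2 < hammingNorm v) ∧
      (∀ v : Fin n → ZMod 2, AZ.mulVec v = 0 →
          (¬ ∃ x : Fin rX → ZMod 2, AX.transpose.mulVec x = v) → l ^ 2 < hammingNorm v) ∧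
      (∀ i, hammingNorm (fun j => AX i j) ≤ 2 ^ 16 * l) ∧
      (∀ j, hammingNorm (fun i => AX i j) ≤ 2 ^ 16 * l) ∧
      (∀ i, hammingNorm (fun j => AZ i j) ≤ 2 ^ 16 * l) ∧
      (∀ j, hammingNorm (fun i => AZ i j) ≤ 2 ^ 16 * l) := by
  obtain ⟨I, J, _, _, _, _, A₁, B₁, A₂, B₂, hI, hJ, ⟨dA1, dB1, dA2, dB2, eA, eB⟩, ⟨o1, o2⟩,
    lA1, lA2, lB1, lB2⟩ := css_exists_pair l hl
  have o1' : A₁.transpose * B₁ = 0 := by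
    rw [← Matrix.transpose_transpose B₁, ← Matrix.transpose_mul, o1, Matrix.transpose_zero]
  have o2' : A₂.transpose * B₂ = 0 := by
    rw [← Matrix.transpose_transpose B₂, ← Matrix.transpose_mul, o2, Matrix.transpose_zero]
  have ht : (cssDiff (A₁ * B₁.transpose) (A₂ * B₂.transpose)).transpose =
      cssDiff (B₁ * A₁.transpose) (B₂ * A₂.transpose) := by
    rw [css_diff_transpose]; simp only [Matrix.transpose_mul, Matrix.transpose_transpose]
  obtain ⟨rX, rZ, AX, AZ, h1, h2, h3, h4⟩ := css_pad
    (cssDiff (A₁ * B₁.transpose) (A₂ * B₂.transpose)) _ _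
    (css_diff_factor A₁ A₂ B₁ B₂) (css_diff_sq _ _ (css_sq_zero _ _ o1) (css_sq_zero _ _ o2))
    (l ^ 2) (2 ^ 16 * l) p n (by omega)
    (by rw [Fintype.card_prod, hI, ← hn]; ring)
    (fun v hv => css_diff_dist hl dB1 dB2 eB o1 o2 lA1 lA2 v (by rwa [← pow_two]))
    (by
      rw [ht]
      exact fun v hv => css_diff_dist hl dA1 dA2 eA o1' o2' lB1 lB2 v (by rwa [← pow_two]))
    (fun i => (css_diff_row _ _ i).trans (by rw [hI]; omega))
    (fun i => by
      have := css_diff_row (B₁ * A₁.transpose) (B₂ * A₂.transpose) i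
      rw [← ht] at this
      exact this.trans (by rw [hI]; omega))
  have hcard : Fintype.card (J × I ⊕ I × J) = 2 ^ 28 * l ^ 2 := by
    simp only [Fintype.card_sum, Fintype.card_prod, hI, hJ]; ring
  rw [hcard] at h2 h3
  exact ⟨rX, rZ, AX, AZ, h1, h2, h3, h4⟩

/-- There exists a family of quantum CSS codes with parameters
`[[n, c₁ n, c₂ n, c₃ √n]]`. -/
theorem good_css_codes_with_sqrt_stabilizer_weight :
    ∃ c₁ c₂ c₃ : ℝ, 0 < c₁ ∧ 0 < c₂ ∧ 0 < c₃ ∧ ∃ n₀ : ℕ, ∀ n : ℕ, n₀ ≤ n →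
      ∃ (rX rZ : ℕ) (AX : Matrix (Fin rX) (Fin n) (ZMod 2))
        (AZ : Matrix (Fin rZ) (Fin n) (ZMod 2)),
        -- (i) orthogonality of the two parity check matrices
        AX * AZ.transpose = 0 ∧
        -- (ii) number of logical qubits at least c₁ n
        c₁ * n ≤ (n : ℝ) - (AX.rank : ℝ) - (AZ.rank : ℝ) ∧
        -- (iii) Z-distance at least c₂ n
        (∀ v : Fin n → ZMod 2, AX.mulVec v = 0 →
          (¬ ∃ x : Fin rZ → ZMod 2, AZ.transpose.mulVec x = v) → c₂ * n ≤ (wt v : ℝ)) ∧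
        -- (iii') X-distance at least c₂ n
        (∀ v : Fin n → ZMod 2, AZ.mulVec v = 0 →
          (¬ ∃ x : Fin rX → ZMod 2, AX.transpose.mulVec x = v) → c₂ * n ≤ (wt v : ℝ)) ∧
        -- (iv) stabilizer weight at most c₃ √n
        (∀ i : Fin rX,
          ((Finset.univ.filter fun j => AX i j ≠ 0).card : ℝ) ≤ c₃ * Real.sqrt n) ∧
        (∀ j : Fin n,
          ((Finset.univ.filter fun i => AX i j ≠ 0).card : ℝ) ≤ c₃ * Real.sqrt n) ∧
        (∀ i : Fin rZ,
          ((Finset.univ.filter fun j => AZ i j ≠ 0).card : ℝ) ≤ c₃ * Real.sqrt n) ∧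
        (∀ j : Fin n,
          ((Finset.univ.filter fun i => AZ i j ≠ 0).card : ℝ) ≤ c₃ * Real.sqrt n) := by
  refine ⟨1 / 8, 1 / 2 ^ 33, 3, by norm_num, by norm_num, by norm_num, 2 ^ 34, fun n hn => ?_⟩
  obtain ⟨l, hl, h1, h2⟩ : ∃ l : ℕ, 1 ≤ l ∧ 2 ^ 30 * l ^ 2 ≤ n ∧ n ≤ 4 * (2 ^ 30 * l ^ 2) := by
    have hs : 2 ^ 17 ≤ Nat.sqrt n := by rw [Nat.le_sqrt']; omega
    have ha : Nat.sqrt n ^ 2 ≤ n := Nat.sqrt_le' n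
    have hb : n < (Nat.sqrt n + 1) ^ 2 := Nat.lt_succ_sqrt' n
    refine ⟨Nat.sqrt n / 2 ^ 15, by omega, ?_, ?_⟩
    · have : 2 ^ 15 * (Nat.sqrt n / 2 ^ 15) ≤ Nat.sqrt n := by omega
      calc 2 ^ 30 * (Nat.sqrt n / 2 ^ 15) ^ 2 = (2 ^ 15 * (Nat.sqrt n / 2 ^ 15)) ^ 2 := by ring
        _ ≤ Nat.sqrt n ^ 2 := Nat.pow_le_pow_left this 2
        _ ≤ n := ha
    · have : Nat.sqrt n + 1 ≤ 2 * (2 ^ 15 * (Nat.sqrt n / 2 ^ 15)) := by omega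
      calc n ≤ (Nat.sqrt n + 1) ^ 2 := hb.le
        _ ≤ (2 * (2 ^ 15 * (Nat.sqrt n / 2 ^ 15))) ^ 2 := Nat.pow_le_pow_left this 2
        _ = _ := by ring
  obtain ⟨rX, rZ, AX, AZ, e1, e2, e3, e4, e5, e6, e7, e8, e9⟩ :=
    css_final l (n - 2 ^ 30 * l ^ 2) n hl (by omega)
  have h1' : (2 : ℝ) ^ 30 * (l : ℝ) ^ 2 ≤ n := by exact_mod_cast h1
  have h2' : (n : ℝ) ≤ 4 * (2 ^ 30 * (l : ℝ) ^ 2) := by exact_mod_cast h2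
  have hsq : (2 : ℝ) ^ 15 * l ≤ Real.sqrt n := by
    apply Real.le_sqrt_of_sq_le
    calc ((2 : ℝ) ^ 15 * l) ^ 2 = 2 ^ 30 * (l : ℝ) ^ 2 := by ring
      _ ≤ (n : ℝ) := h1'
  have hwt : ∀ k : ℕ, k ≤ 2 ^ 16 * l → (k : ℝ) ≤ 3 * Real.sqrt n := by
    intro k hk
    have hk' : (k : ℝ) ≤ 2 ^ 16 * (l : ℝ) := by exact_mod_cast hk
    have h0 := Real.sqrt_nonneg (n : ℝ)
    linarith
  have hdist : ∀ k : ℕ, l ^ 2 < k → 1 / 2 ^ 33 * (n : ℝ) ≤ (k : ℝ) := by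
    intro k hk
    have hk' : (l : ℝ) ^ 2 ≤ (k : ℝ) := by exact_mod_cast hk.le
    have h0 : (0 : ℝ) ≤ (l : ℝ) ^ 2 := by positivity
    linarith
  refine ⟨rX, rZ, AX, AZ, e1, ?_, fun v hv hx => hdist _ (e4 v hv hx),
    fun v hv hx => hdist _ (e5 v hv hx), fun i => hwt _ (e6 i), fun i => hwt _ (e7 i),
    fun i => hwt _ (e8 i), fun i => hwt _ (e9 i)⟩
  have e : AX.rank + AZ.rank + 2 ^ 29 * l ^ 2 ≤ n := by omega
  have e' : (AX.rank : ℝ) + AZ.rank + 2 ^ 29 * (l : ℝ) ^ 2 ≤ n := by exact_mod_cast e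
  linarith
end

section
/- There exists a constant C > 0 such that for all M, M' ≤ M, L, H with M = 2L + H, all pairs of good boundary operators δ₁, δ₂ (M×M matrices over ZMod 2 with square zero) of rank L, and all natural numbers R, with Γ(R) the number of rank-R reduced cycles for (δ₁, δ₂): if R ≤ H then Γ(R) ≤ C · 2^((M+H)·R − R²), and if R ≥ H then Γ(R) ≤ C · (2:ℝ)^((M + H/2)·R − R²/2). -/
open Matrix

namespace RC
open Module

abbrev F := ZMod 2

lemma fib_le {α β : Type*} [Finite α] [Finite β] (s : Set α) (t : Set β) (φ : α → β)
    (h : ∀ a ∈ s, φ a ∈ t) (n : ℝ)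
    (hn : ∀ b ∈ t, (({a | a ∈ s ∧ φ a = b} : Set α).ncard : ℝ) ≤ n) :
    (s.ncard : ℝ) ≤ t.ncard * n := by
  classical
  have := Fintype.ofFinite α
  have := Fintype.ofFinite β
  rw [Set.ncard_eq_toFinset_card' s, Set.ncard_eq_toFinset_card' t,
    Finset.card_eq_sum_card_fiberwise (f := φ) (t := t.toFinset) (by intro a; simpa using h a)]
  push_cast
  rw [← nsmul_eq_mul]
  apply Finset.sum_le_card_nsmul
  intro b hb
  have := hn b (by simpa using hb)
  rw [Set.ncard_eq_toFinset_card'] at this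
  refine le_trans (le_of_eq ?_) this
  congr 2
  ext; simp

lemma fib_ge {α β : Type*} [Finite α] [Finite β] (s : Set α) (t : Set β) (φ : α → β)
    (n : ℝ)
    (hn : ∀ b ∈ t, n ≤ (({a | a ∈ s ∧ φ a = b} : Set α).ncard : ℝ)) :
    t.ncard * n ≤ (s.ncard : ℝ) := by
  classical
  have := Fintype.ofFinite α
  have := Fintype.ofFinite β
  have h1 : ({a | a ∈ s ∧ φ a ∈ t} : Set α).ncard ≤ s.ncard :=
    Set.ncard_le_ncard (fun a ha => ha.1) (Set.toFinite _)
  refine le_trans ?_ (Nat.cast_le.2 h1)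
  rw [Set.ncard_eq_toFinset_card' t, Set.ncard_eq_toFinset_card',
    Finset.card_eq_sum_card_fiberwise (f := φ) (t := t.toFinset) (by intro a; simp)]
  push_cast
  rw [← nsmul_eq_mul]
  apply Finset.card_nsmul_le_sum
  intro b hb
  have hb' : b ∈ t := by simpa using hb
  have := hn b hb'
  rw [Set.ncard_eq_toFinset_card'] at this
  refine le_trans this (le_of_eq ?_)
  congr 2
  ext a; simp; intro h2; subst h2; tauto

lemma inj_le {α β : Type*} [Finite α] [Finite β] (s : Set α) (t : Set β) (φ : α → β)
    (h : ∀ a ∈ s, φ a ∈ t) (hi : Set.InjOn φ s) : (s.ncard : ℝ) ≤ t.ncard :=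
  Nat.cast_le.2 (Set.ncard_le_ncard_of_injOn φ h hi (Set.toFinite _))

section
variable {V : Type*} [AddCommGroup V] [Module F V] [Module.Finite F V]

lemma ncard_sub (W : Submodule F V) : (W : Set V).ncard = 2 ^ finrank F W := by
  rw [← Nat.card_coe_set_eq]
  have := Module.natCard_eq_pow_finrank (K := F) (V := W)
  simpa using this

lemma ncard_pi {n : ℕ} (W : Submodule F V) :
    ({w | ∀ i, w i ∈ W} : Set (Fin n → V)).ncard = 2 ^ (n * finrank F W) := by
  rw [← Nat.card_coe_set_eq]
  have e : ({w | ∀ i, w i ∈ W} : Set (Fin n → V)) ≃ (Fin n → W) :=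
    Equiv.subtypePiEquivPi (p := fun _ x => x ∈ W)
  rw [Nat.card_congr e, Nat.card_fun, Module.natCard_eq_pow_finrank (K := F) (V := W)]
  simp [← pow_mul, mul_comm]

noncomputable def pp : ℕ → ℝ
  | 0 => 1
  | n+1 => pp n * (1 - (1/2)^(n+1))

lemma pp_ge (n : ℕ) : 1/4 + (1/2)^(n+1) ≤ pp (n) := by
  induction n with
  | zero => norm_num [pp]
  | succ n ih =>
    rcases Nat.eq_zero_or_pos n with rfl | hn
    · norm_num [pp]
    rw [pp]
    have h0 : (0:ℝ) < (1/2)^n := by positivity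
    have h1 : ((1/2)^n : ℝ) ≤ 1/2 := by
      calc ((1/2)^n : ℝ) ≤ (1/2)^1 := pow_le_pow_of_le_one (by norm_num) (by norm_num) hn
        _ = _ := by norm_num
    have h2 : (0:ℝ) ≤ 1 - (1/2)^(n+1) := by rw [pow_succ]; linarith
    refine le_trans ?_ (mul_le_mul_of_nonneg_right ih h2)
    simp only [pow_succ]
    nlinarith

lemma pp_ge' (n : ℕ) : 1/4 ≤ pp n := by
  have := pp_ge n
  have h0 : (0:ℝ) < (1/2)^(n+1) := by positivity
  linarith

lemma frames_aux (u : ℕ) : ∀ (B W : Submodule F V), B ≤ W → finrank F W = finrank F B + u →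
    (2:ℝ) ^ (u * finrank F W) * pp u ≤
      ({w | (∀ i, w i ∈ W) ∧ B ⊔ Submodule.span F (Set.range w) = W} : Set (Fin u → V)).ncard := by
  have : Finite V := Module.finite_of_finite F
  induction u with
  | zero =>
    intro B W hBW h
    have : B = W := Submodule.eq_of_le_of_finrank_eq hBW (by omega)
    subst this
    have : ({w | (∀ i, w i ∈ B) ∧ B ⊔ Submodule.span F (Set.range w) = B} : Set (Fin 0 → V)) = Set.univ := by
      ext w; simp
    rw [this]; simp [pp, Set.ncard_univ]
  | succ u ih =>
    intro B W hBW h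
    set m := finrank F W with hm
    have key := fib_ge ({w | (∀ i, w i ∈ W) ∧ B ⊔ Submodule.span F (Set.range w) = W} : Set (Fin (u+1) → V))
      ((W : Set V) \ B) (fun w => w 0) ((2:ℝ)^(u * m) * pp u) ?_
    · refine le_trans ?_ key
      have hc : (((W : Set V) \ B).ncard : ℝ) = 2^m - 2^(finrank F B) := by
        have := Set.ncard_sdiff_add_ncard_of_subset (s := (B : Set V)) (t := (W : Set V)) hBW (Set.toFinite _)
        rw [ncard_sub, ncard_sub] at this
        have : ((((W : Set V) \ B).ncard + 2 ^ finrank F B : ℕ) : ℝ) = ((2 ^ m : ℕ) : ℝ) := by rw [this]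
        push_cast at this; linarith
      rw [hc, h, pp]
      apply le_of_eq
      have : (2:ℝ)^(u+1) * (1/2)^(u+1) = 1 := by rw [← mul_pow]; norm_num
      rw [show (u+1) * (finrank F B + (u+1)) = u * (finrank F B + (u+1)) + finrank F B + (u+1) by ring, pow_add _ (_ + _), pow_add _ (u * _), pow_add _ (finrank F B)]
      linear_combination (-(2 ^ (u * (finrank F B + (u + 1))) * 2 ^ finrank F B * pp u)) * this
    · intro b hb
      have hb0 : b ∉ B := hb.2
      have hne : b ≠ 0 := fun h => hb0 (h ▸ B.zero_mem)
      have hle : B ⊔ Submodule.span F {b} ≤ W := sup_le hBW (by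
        rw [Submodule.span_le]; simpa using hb.1)
      have hfr : finrank F ↥(B ⊔ Submodule.span F {b}) = finrank F B + 1 := by
        have h1 := Submodule.finrank_sup_add_finrank_inf_eq B (Submodule.span F {b})
        have h2 : B ⊓ Submodule.span F {b} = ⊥ := by
          rw [← disjoint_iff, Submodule.disjoint_span_singleton' hne]; exact hb0
        rw [h2, finrank_span_singleton hne] at h1
        simpa using h1
      have := ih (B ⊔ Submodule.span F {b}) W hle (by omega)
      refine le_trans this ?_
      refine inj_le _ _ (fun w => Fin.cons b w) ?_ ?_
      · rintro w ⟨hw1, hw2⟩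
        refine ⟨⟨?_, ?_⟩, ?_⟩
        · intro i; refine Fin.cases ?_ ?_ i
          · exact hb.1
          · exact hw1
        · rw [Fin.range_cons, Submodule.span_insert, ← sup_assoc]; exact hw2
        · simp
      · intro w _ w' _ hh
        exact Fin.cons_right_injective (α := fun _ => V) b hh

lemma frames {u : ℕ} (B W : Submodule F V) (h1 : B ≤ W) (h2 : finrank F W = finrank F B + u) :
    (2:ℝ) ^ (u * finrank F W) / 4 ≤
      ({w | (∀ i, w i ∈ W) ∧ B ⊔ Submodule.span F (Set.range w) = W} : Set (Fin u → V)).ncard := by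
  refine le_trans ?_ (frames_aux u B W h1 h2)
  have := pp_ge' u
  have : (0:ℝ) < 2 ^ (u * finrank F W) := by positivity
  nlinarith

lemma exists_frame {u : ℕ} (B W : Submodule F V) (h1 : B ≤ W) (h2 : finrank F W = finrank F B + u) :
    ∃ w : Fin u → V, (∀ i, w i ∈ W) ∧ B ⊔ Submodule.span F (Set.range w) = W := by
  have h := frames B W h1 h2
  by_contra hc
  have : ({w | (∀ i, w i ∈ W) ∧ B ⊔ Submodule.span F (Set.range w) = W} : Set (Fin u → V)) = ∅ := by
    ext w; simp only [Set.mem_ofPred_eq, Set.mem_empty_iff_false, iff_false]; exact fun h => hc ⟨w, h⟩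
  rw [this] at h
  have : (0:ℝ) < 2 ^ (u * finrank F W) := by positivity
  simp at h; linarith

lemma sub_count (B : Submodule F V) (u : ℕ) :
    (({W | B ≤ W ∧ finrank F W = finrank F B + u} : Set (Submodule F V)).ncard : ℝ) *
      (2 ^ (u * (finrank F B + u)) / 4) ≤ 2 ^ (u * finrank F V) := by
  have : Finite V := Module.finite_of_finite F
  have := fib_ge (Set.univ : Set (Fin u → V))
    ({W | B ≤ W ∧ finrank F W = finrank F B + u} : Set (Submodule F V))
    (fun w => B ⊔ Submodule.span F (Set.range w)) (2 ^ (u * (finrank F B + u)) / 4) ?_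
  · refine this.trans (le_of_eq ?_)
    have := ncard_pi (n := u) (⊤ : Submodule F V)
    simp at this
    simp [Set.ncard_univ, this]
  · rintro W ⟨h1, h2⟩
    have := frames B W h1 h2
    rw [h2] at this
    refine this.trans (Nat.cast_le.2 (Set.ncard_le_ncard ?_ (Set.toFinite _)))
    rintro w ⟨_, h⟩; exact ⟨trivial, h⟩
end

section
variable {U V X : Type*} [AddCommGroup V] [Module F V] [Module.Finite F V]
  [AddCommGroup U] [Module F U] [Module.Finite F U]
  [AddCommGroup X] [Module F X] [Module.Finite F X]

instance finLin : Finite (U →ₗ[F] V) := Module.finite_of_finite F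

lemma ext_count (ι : X →ₗ[F] U) (hι : Function.Injective ι) (D : ℕ)
    (hD : finrank F U = finrank F X + D) (f1 : X →ₗ[F] V) (u : ℕ) :
    (({f | f ∘ₗ ι = f1 ∧ finrank F f.range = finrank F f1.range + u} : Set (U →ₗ[F] V)).ncard : ℝ)
      * (2 ^ (u * (finrank F f1.range + u)) / 4) ≤
      2 ^ (u * finrank F V + D * (finrank F f1.range + u)) := by
  have : Finite V := Module.finite_of_finite F
  have h1 := sub_count f1.range u
  set ρ := finrank F f1.range
  obtain ⟨b, -, hb⟩ := exists_frame (u := D) ι.range ⊤ le_top (by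
    rw [finrank_top, LinearMap.finrank_range_of_inj hι, hD])
  have h2 := fib_le ({f | f ∘ₗ ι = f1 ∧ finrank F f.range = ρ + u} : Set (U →ₗ[F] V))
    ({W | f1.range ≤ W ∧ finrank F W = ρ + u} : Set (Submodule F V)) (fun f => f.range) ?_
    (2 ^ (D * (ρ + u))) ?_
  · have h3 : (0:ℝ) ≤ 2 ^ (u * (ρ + u)) / 4 := by positivity
    have h4 : (0:ℝ) ≤ 2 ^ (D * (ρ + u)) := by positivity
    calc _ ≤ _ := mul_le_mul_of_nonneg_right h2 h3
      _ = _ := mul_right_comm _ _ _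
      _ ≤ _ := mul_le_mul_of_nonneg_right h1 h4
      _ = _ := by rw [pow_add]
  · rintro f ⟨h, h'⟩
    refine ⟨?_, h'⟩
    rw [← h]; exact LinearMap.range_comp_le_range _ _
  · rintro W ⟨hW, hW'⟩
    have := ncard_pi (n := D) W
    rw [hW'] at this
    have e : (2:ℝ) ^ (D * (ρ + u)) = (({w | ∀ i, w i ∈ W} : Set (Fin D → V)).ncard : ℝ) := by
      rw [this]; norm_cast
    rw [e]
    refine inj_le _ _ (fun f => f ∘ b) ?_ ?_
    · rintro f ⟨_, h⟩ i
      rw [← h]; exact LinearMap.mem_range_self _ _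
    · rintro f ⟨⟨h, _⟩, _⟩ f' ⟨⟨h', _⟩, _⟩ hh
      have : (⊤ : Submodule F U) ≤ LinearMap.eqLocus f f' := by
        rw [← hb]
        refine sup_le ?_ (Submodule.span_le.2 ?_)
        · rintro _ ⟨x, rfl⟩
          exact LinearMap.congr_fun (h.trans h'.symm) x
        · rintro _ ⟨i, rfl⟩
          exact congrFun hh i
      exact LinearMap.ext fun x => this (Submodule.mem_top (x := x))

lemma lift_count {Y : Type*} [AddCommGroup Y] [Module F Y] [Module.Finite F Y]
    (q : V →ₗ[F] Y) (hq : Function.Surjective q) (D : ℕ)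
    (hD : finrank F V = finrank F Y + D) (c : X →ₗ[F] Y) (t : ℕ) :
    (({f | q ∘ₗ f = c ∧ finrank F f.range = finrank F c.range + t} : Set (X →ₗ[F] V)).ncard : ℝ)
      * (2 ^ (t * (finrank F c.range + t)) / 4) ≤
      2 ^ (t * finrank F X + D * (finrank F c.range + t)) := by
  have h := ext_count q.dualMap (LinearMap.dualMap_injective_iff.2 hq) D
    (by rw [Subspace.dual_finrank_eq, Subspace.dual_finrank_eq, hD]) c.dualMap t
  rw [LinearMap.finrank_range_dualMap_eq_finrank_range, Subspace.dual_finrank_eq] at h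
  refine le_trans ?_ h
  refine mul_le_mul_of_nonneg_right ?_ (by positivity)
  refine inj_le _ _ (fun f => f.dualMap) ?_ ?_
  · rintro f ⟨h, h'⟩
    refine ⟨?_, ?_⟩
    · rw [← h, LinearMap.dualMap_comp_dualMap]
    · rw [LinearMap.finrank_range_dualMap_eq_finrank_range, h']
  · intro f _ f' _ h
    have h : f.dualMap = f'.dualMap := h
    ext x
    rw [← sub_eq_zero, ← Module.forall_dual_apply_eq_zero_iff F]
    intro φ
    have := LinearMap.congr_fun (LinearMap.congr_fun h φ) x
    simp only [LinearMap.dualMap_apply] at this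
    rw [map_sub, this, sub_self]
end
end RC
open Matrix

namespace RC
open Module

section
variable {X Y : Type*} [AddCommGroup Y] [Module F Y] [Module.Finite F Y]
  [AddCommGroup X] [Module F X] [Module.Finite F X]

lemma finrank_inf_ker (d : Y →ₗ[F] Y) (W : Submodule F Y) :
    finrank F (W.map d) + finrank F ↥(W ⊓ d.ker) = finrank F W := by
  have h := LinearMap.finrank_range_add_finrank_ker (d.domRestrict W)
  rw [LinearMap.range_domRestrict, LinearMap.ker_domRestrict] at h
  rw [← h, inf_comm, ← Submodule.finrank_map_subtype_eq, Submodule.map_comap_subtype, inf_comm]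

lemma inv_count (d : Y →ₗ[F] Y) (hd : d ∘ₗ d = 0) (k s : ℕ) :
    (({W | W.map d ≤ W ∧ finrank F W = 2*k+s ∧ finrank F (W.map d) = k} : Set (Submodule F Y)).ncard : ℝ)
      * ((2 ^ (k * (2*k+s)) / 4) * (2 ^ (s * (k+s)) / 4)) ≤
      2 ^ (k * finrank F Y + s * finrank F d.ker) := by
  have : Finite Y := Module.finite_of_finite F
  have h := fib_ge (({w | ∀ i, w i ∈ (⊤ : Submodule F Y)} : Set (Fin k → Y)) ×ˢ
      ({w | ∀ i, w i ∈ d.ker} : Set (Fin s → Y)))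
    ({W | W.map d ≤ W ∧ finrank F W = 2*k+s ∧ finrank F (W.map d) = k} : Set (Submodule F Y))
    (fun p => Submodule.span F (Set.range p.1) ⊔ (Submodule.span F (Set.range p.1)).map d ⊔
      Submodule.span F (Set.range p.2))
    ((2 ^ (k * (2*k+s)) / 4) * (2 ^ (s * (k+s)) / 4)) ?_
  · rw [Set.ncard_prod, ncard_pi, ncard_pi, finrank_top] at h
    refine h.trans (le_of_eq ?_)
    push_cast
    rw [pow_add]
  · rintro W ⟨hW1, hW2, hW3⟩
    have hr := finrank_inf_ker d W
    have hk : finrank F ↥(W ⊓ d.ker) = k + s := by omega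
    have f1 := frames (u := k) (W ⊓ d.ker) W inf_le_left (by omega)
    have hle : W.map d ≤ W ⊓ d.ker := le_inf hW1 (by
      rintro _ ⟨x, _, rfl⟩
      exact LinearMap.congr_fun hd x)
    have f2 := frames (u := s) (W.map d) (W ⊓ d.ker) hle (by omega)
    rw [hW2] at f1
    rw [hk] at f2
    refine (mul_le_mul f1 f2 (by positivity) (by positivity)).trans ?_
    rw [← Nat.cast_mul, ← Set.ncard_prod]
    refine Nat.cast_le.2 (Set.ncard_le_ncard ?_ (Set.toFinite _))
    rintro ⟨a, z⟩ ⟨⟨ha1, ha2⟩, ⟨hz1, hz2⟩⟩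
    simp only at ha1 ha2 hz1 hz2
    refine ⟨⟨fun _ => Submodule.mem_top, fun i => (hz1 i).2⟩, ?_⟩
    have e : (Submodule.span F (Set.range a)).map d = W.map d := by
      conv_rhs => rw [← ha2]
      rw [Submodule.map_sup]
      have : (W ⊓ d.ker).map d = ⊥ := by
        rw [eq_bot_iff]; rintro _ ⟨x, hx, rfl⟩; exact hx.2
      rw [this, bot_sup_eq]
    simp only
    rw [e, sup_assoc, hz2, sup_comm, ha2]

lemma chain_fixed (dX : X →ₗ[F] X) (hdX : dX ∘ₗ dX = 0) (dY : Y →ₗ[F] Y) (l H : ℕ)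
    (hX : finrank F X = 2*l+H) (hk : finrank F dX.ker = l + H) (W : Submodule F Y) (k s : ℕ)
    (hW2 : finrank F W = 2*k+s) (hW3 : finrank F (W.map dY) = k) :
    (({c | c ∘ₗ dX = dY ∘ₗ c ∧ c.range = W} : Set (X →ₗ[F] Y)).ncard : ℝ) ≤
      2 ^ (l * (2*k+s) + H * (k+s)) := by
  have : Finite Y := Module.finite_of_finite F
  have hr := finrank_inf_ker dY W
  have hkk : finrank F ↥(W ⊓ dY.ker) = k + s := by omega
  have hrX := LinearMap.finrank_range_add_finrank_ker dX
  obtain ⟨e, -, he⟩ := exists_frame (u := l) dX.ker ⊤ le_top (by rw [finrank_top]; omega)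
  obtain ⟨z, hz, hz'⟩ := exists_frame (u := H) dX.range dX.ker (by
    rintro _ ⟨x, rfl⟩; exact LinearMap.congr_fun hdX x) (by omega)
  have E : (2:ℝ) ^ (l * (2*k+s) + H * (k+s)) =
      ((({w | ∀ i, w i ∈ W} : Set (Fin l → Y)) ×ˢ
      ({w | ∀ i, w i ∈ W ⊓ dY.ker} : Set (Fin H → Y))).ncard : ℝ) := by
    rw [Set.ncard_prod, ncard_pi, ncard_pi, hW2, hkk]; push_cast; rw [pow_add]
  rw [E]
  refine inj_le _ _ (fun c => (c ∘ e, c ∘ z)) ?_ ?_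
  · rintro c ⟨h1, h2⟩
    have hm : ∀ x, c x ∈ W := fun x => h2 ▸ LinearMap.mem_range_self _ _
    refine ⟨fun i => hm _, fun i => ⟨hm _, ?_⟩⟩
    have := LinearMap.congr_fun h1 (z i)
    simp only [LinearMap.comp_apply] at this
    rw [LinearMap.mem_ker.1 (hz i), map_zero] at this
    exact this.symm
  · rintro c ⟨h1, -⟩ c' ⟨h1', -⟩ h
    simp only [Prod.mk.injEq] at h
    have a1 : Submodule.span F (Set.range e) ≤ LinearMap.eqLocus c c' := by
      rw [Submodule.span_le]; rintro _ ⟨i, rfl⟩; exact congrFun h.1 i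
    have a2 : dX.range ≤ LinearMap.eqLocus c c' := by
      have : dX.range = (Submodule.span F (Set.range e)).map dX := by
        rw [← Submodule.map_top, ← he, Submodule.map_sup]
        have : dX.ker.map dX = ⊥ := by
          rw [eq_bot_iff]; rintro _ ⟨x, hx, rfl⟩; exact hx
        rw [this, bot_sup_eq]
      rw [this]
      rintro _ ⟨x, hx, rfl⟩
      have hx' : c x = c' x := a1 hx
      have q1 := LinearMap.congr_fun h1 x
      have q2 := LinearMap.congr_fun h1' x
      simp only [LinearMap.comp_apply] at q1 q2
      change c (dX x) = c' (dX x)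
      rw [q1, q2, hx']
    have a3 : dX.ker ≤ LinearMap.eqLocus c c' := by
      rw [← hz']
      refine sup_le a2 ?_
      rw [Submodule.span_le]; rintro _ ⟨i, rfl⟩; exact congrFun h.2 i
    have a4 : (⊤ : Submodule F X) ≤ LinearMap.eqLocus c c' := by
      rw [← he]; exact sup_le a3 a1
    exact LinearMap.ext fun x => a4 (Submodule.mem_top (x := x))

lemma chain_total (dX : X →ₗ[F] X) (hdX : dX ∘ₗ dX = 0) (dY : Y →ₗ[F] Y) (hdY : dY ∘ₗ dY = 0) (l H : ℕ)
    (hX : finrank F X = 2*l+H) (hk : finrank F dX.ker = l + H)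
    (hY : finrank F Y = 2*l+H) (hkY : finrank F dY.ker = l + H) (k s : ℕ) :
    (({c | c ∘ₗ dX = dY ∘ₗ c ∧ finrank F c.range = 2*k+s ∧ finrank F (c.range.map dY) = k} :
        Set (X →ₗ[F] Y)).ncard : ℝ)
      * ((2 ^ (k * (2*k+s)) / 4) * (2 ^ (s * (k+s)) / 4)) ≤
      2 ^ (k * (2*l+H) + s * (l+H) + (l * (2*k+s) + H * (k+s))) := by
  have : Finite Y := Module.finite_of_finite F
  have h1 := inv_count dY hdY k s
  rw [hY, hkY] at h1
  have h2 := fib_le ({c | c ∘ₗ dX = dY ∘ₗ c ∧ finrank F c.range = 2*k+s ∧ finrank F (c.range.map dY) = k} :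
        Set (X →ₗ[F] Y))
    ({W | W.map dY ≤ W ∧ finrank F W = 2*k+s ∧ finrank F (W.map dY) = k} : Set (Submodule F Y))
    (fun c => c.range) ?_ (2 ^ (l * (2*k+s) + H * (k+s))) ?_
  · calc _ ≤ _ := mul_le_mul_of_nonneg_right h2 (by positivity)
      _ = _ := mul_right_comm _ _ _
      _ ≤ _ := mul_le_mul_of_nonneg_right h1 (by positivity)
      _ = _ := by rw [pow_add _ (k * _ + _)]
  · rintro c ⟨h, h', h''⟩
    refine ⟨?_, h', h''⟩
    rintro _ ⟨_, ⟨x, rfl⟩, rfl⟩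
    exact ⟨dX x, LinearMap.congr_fun h x⟩
  · rintro W ⟨_, h', h''⟩
    refine le_trans ?_ (chain_fixed dX hdX dY l H hX hk W k s h' h'')
    refine Nat.cast_le.2 (Set.ncard_le_ncard ?_ (Set.toFinite _))
    rintro c ⟨⟨h, _⟩, h2⟩; exact ⟨h, h2⟩

variable {U V : Type*} [AddCommGroup V] [Module F V] [Module.Finite F V]
  [AddCommGroup U] [Module F U] [Module.Finite F U]

lemma part_count (dX : X →ₗ[F] X) (hdX : dX ∘ₗ dX = 0) (dY : Y →ₗ[F] Y) (hdY : dY ∘ₗ dY = 0)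
    (l H D : ℕ)
    (hX : finrank F X = 2*l+H) (hk : finrank F dX.ker = l + H)
    (hY : finrank F Y = 2*l+H) (hkY : finrank F dY.ker = l + H)
    (hU : finrank F U = 2*l+H+D) (hV : finrank F V = 2*l+H+D)
    (ι : X →ₗ[F] U) (hι : Function.Injective ι) (q : V →ₗ[F] Y) (hq : Function.Surjective q)
    (k s t u : ℕ) :
    (({f | (q ∘ₗ f ∘ₗ ι) ∘ₗ dX = dY ∘ₗ (q ∘ₗ f ∘ₗ ι) ∧
        finrank F ((q ∘ₗ f ∘ₗ ι).range.map dY) = k ∧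
        finrank F (q ∘ₗ f ∘ₗ ι).range = 2*k+s ∧
        finrank F (f ∘ₗ ι).range = 2*k+s+t ∧ finrank F f.range = 2*k+s+t+u} :
        Set (U →ₗ[F] V)).ncard : ℝ) *
      (((2 ^ (k * (2*k+s)) / 4) * (2 ^ (s * (k+s)) / 4)) * (2 ^ (t * (2*k+s+t)) / 4)
        * (2 ^ (u * (2*k+s+t+u)) / 4)) ≤
      2 ^ (k * (2*l+H) + s * (l+H) + (l * (2*k+s) + H * (k+s))) *
      2 ^ (t * (2*l+H) + D * (2*k+s+t)) * 2 ^ (u * (2*l+H+D) + D * (2*k+s+t+u)) := by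
  have h1 := chain_total dX hdX dY hdY l H hX hk hY hkY k s
  set T1 := ({c | c ∘ₗ dX = dY ∘ₗ c ∧ finrank F c.range = 2*k+s ∧ finrank F (c.range.map dY) = k} :
        Set (X →ₗ[F] Y)) with hT1
  set T2 := ({f | q ∘ₗ f ∈ T1 ∧ finrank F f.range = 2*k+s+t} : Set (X →ₗ[F] V)) with hT2
  have h2 := fib_le T2 T1 (fun f => q ∘ₗ f) (fun f hf => hf.1)
    (2 ^ (t * (2*l+H) + D * (2*k+s+t)) / (2 ^ (t * (2*k+s+t)) / 4)) ?_
  · have h3 := fib_le ({f | (q ∘ₗ f ∘ₗ ι) ∘ₗ dX = dY ∘ₗ (q ∘ₗ f ∘ₗ ι) ∧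
        finrank F ((q ∘ₗ f ∘ₗ ι).range.map dY) = k ∧
        finrank F (q ∘ₗ f ∘ₗ ι).range = 2*k+s ∧
        finrank F (f ∘ₗ ι).range = 2*k+s+t ∧ finrank F f.range = 2*k+s+t+u} :
        Set (U →ₗ[F] V)) T2 (fun f => f ∘ₗ ι) ?_
      (2 ^ (u * (2*l+H+D) + D * (2*k+s+t+u)) / (2 ^ (u * (2*k+s+t+u)) / 4)) ?_
    · set N := (Set.ncard {f : U →ₗ[F] V | (q ∘ₗ f ∘ₗ ι) ∘ₗ dX = dY ∘ₗ (q ∘ₗ f ∘ₗ ι) ∧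
        finrank F ((q ∘ₗ f ∘ₗ ι).range.map dY) = k ∧
        finrank F (q ∘ₗ f ∘ₗ ι).range = 2*k+s ∧
        finrank F (f ∘ₗ ι).range = 2*k+s+t ∧ finrank F f.range = 2*k+s+t+u} : ℝ)
      have hp : (0:ℝ) < 2 ^ (t * (2*k+s+t)) / 4 := by positivity
      have hp' : (0:ℝ) < 2 ^ (u * (2*k+s+t+u)) / 4 := by positivity
      have hp0 : (0:ℝ) < (2 ^ (k * (2*k+s)) / 4) * (2 ^ (s * (k+s)) / 4) := by positivity
      have hq1 : (0:ℝ) < 2 ^ (t * (2*l+H) + D * (2*k+s+t)) := by positivity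
      have hq2 : (0:ℝ) < 2 ^ (u * (2*l+H+D) + D * (2*k+s+t+u)) := by positivity
      rw [← mul_div_assoc, le_div_iff₀ hp] at h2
      rw [← mul_div_assoc, le_div_iff₀ hp'] at h3
      generalize (2:ℝ) ^ (t * (2*k+s+t)) / 4 = p1 at *
      generalize (2:ℝ) ^ (u * (2*k+s+t+u)) / 4 = p2 at *
      generalize ((2:ℝ) ^ (k * (2*k+s)) / 4) * (2 ^ (s * (k+s)) / 4) = p0 at *
      generalize (2:ℝ) ^ (t * (2*l+H) + D * (2*k+s+t)) = q1 at *
      generalize (2:ℝ) ^ (u * (2*l+H+D) + D * (2*k+s+t+u)) = q2 at *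
      calc N * (p0 * p1 * p2) = (N * p2) * (p0 * p1) := by ring
        _ ≤ (T2.ncard * q2) * (p0 * p1) := mul_le_mul_of_nonneg_right h3 (by positivity)
        _ = (T2.ncard * p1) * (p0 * q2) := by ring
        _ ≤ (T1.ncard * q1) * (p0 * q2) := mul_le_mul_of_nonneg_right h2 (by positivity)
        _ = (T1.ncard * p0) * (q1 * q2) := by ring
        _ ≤ _ * (q1 * q2) := mul_le_mul_of_nonneg_right h1 (by positivity)
        _ = _ := by ring
    · rintro f ⟨a1, a2, a3, a4, a5⟩
      exact ⟨⟨a1, a3, a2⟩, a4⟩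
    · rintro f1 ⟨_, hf1⟩
      rw [le_div_iff₀ (by positivity)]
      have := ext_count ι hι D (by omega) f1 u
      rw [hf1, hV] at this
      refine le_trans ?_ this
      refine mul_le_mul_of_nonneg_right ?_ (by positivity)
      refine Nat.cast_le.2 (Set.ncard_le_ncard ?_ (Set.toFinite _))
      rintro f ⟨⟨a1, a2, a3, a4, a5⟩, hf⟩; exact ⟨hf, a5⟩
  · rintro c ⟨_, hc, _⟩
    rw [le_div_iff₀ (by positivity)]
    have := lift_count q hq D (by omega) c t
    rw [hc, hX] at this
    refine le_trans ?_ this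
    refine mul_le_mul_of_nonneg_right ?_ (by positivity)
    refine Nat.cast_le.2 (Set.ncard_le_ncard ?_ (Set.toFinite _))
    rintro f ⟨⟨_, a5⟩, hf⟩; exact ⟨hf, a5⟩

lemma num_bound (N : ℝ) (k s t u l H D : ℕ)
    (h : N * (((2 ^ (k * (2*k+s)) / 4) * (2 ^ (s * (k+s)) / 4)) * (2 ^ (t * (2*k+s+t)) / 4)
        * (2 ^ (u * (2*k+s+t+u)) / 4)) ≤
      2 ^ (k * (2*l+H) + s * (l+H) + (l * (2*k+s) + H * (k+s))) *
      2 ^ (t * (2*l+H) + D * (2*k+s+t)) * 2 ^ (u * (2*l+H+D) + D * (2*k+s+t+u))) (R : ℕ)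
    (hR : R = 2*k+s+t+u) :
    N ≤ 256 * (2:ℝ) ^ ((R:ℝ) * (2*l+H+2*D) - R^2/2 + (s * H - (s:ℝ)^2/2) - (t:ℝ)^2/2 - (u:ℝ)^2/2) := by
  rw [← pow_add, ← pow_add] at h
  have e : ((2:ℝ) ^ (k * (2*k+s)) / 4) * (2 ^ (s * (k+s)) / 4) * (2 ^ (t * (2*k+s+t)) / 4)
        * (2 ^ (u * (2*k+s+t+u)) / 4) =
      (2:ℝ) ^ (k * (2*k+s) + s * (k+s) + t * (2*k+s+t) + u * (2*k+s+t+u)) / 256 := by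
    rw [pow_add, pow_add, pow_add]; ring
  rw [e, ← mul_div_assoc, div_le_iff₀ (by norm_num), ← le_div_iff₀ (by positivity)] at h
  refine h.trans (le_of_eq ?_)
  rw [mul_comm, mul_div_assoc]
  congr 1
  rw [← Real.rpow_natCast, ← Real.rpow_natCast, ← Real.rpow_sub (by norm_num)]
  congr 1
  subst hR
  push_cast
  ring
end
end RC
open Matrix

namespace RC
open Module

noncomputable def wt (x : ℤ) : ℝ := (2:ℝ) ^ (-(x:ℝ)^2/2)

lemma wt_pos (x : ℤ) : 0 < wt x := by unfold wt; positivity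

lemma wt_le (x : ℤ) : wt x ≤ 2 * (1/2:ℝ) ^ x.natAbs := by
  have h : (2:ℝ) * (1/2:ℝ) ^ x.natAbs = (2:ℝ) ^ (1 - (x.natAbs:ℝ)) := by
    rw [Real.rpow_sub (by norm_num), Real.rpow_one, Real.rpow_natCast]
    rw [div_pow, one_pow, div_eq_mul_one_div 2]
  rw [h, wt]
  apply Real.rpow_le_rpow_of_exponent_le (by norm_num)
  have : (x:ℝ)^2 = (x.natAbs:ℝ)^2 := by
    rw [Nat.cast_natAbs, Int.cast_abs, sq_abs]
  nlinarith [sq_nonneg ((x.natAbs:ℝ) - 1)]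

lemma wt_summable : Summable wt := by
  refine Summable.of_nonneg_of_le (fun x => (wt_pos x).le) wt_le ?_
  apply Summable.mul_left
  have := summable_geometric_of_lt_one (r := (1/2:ℝ)) (by norm_num) (by norm_num)
  apply Summable.of_nat_of_neg
  · simpa using this
  · simpa using this

lemma wt_sum (n G : ℕ) : ∑ s ∈ Finset.range n, wt ((s:ℤ) - G) ≤ ∑' x, wt x := by
  have hinj : Function.Injective (fun s : ℕ => (s:ℤ) - G) := by
    intro a b h; simpa using h
  have := Summable.sum_le_tsum ((Finset.range n).map ⟨_, hinj⟩) (fun x _ => (wt_pos x).le) wt_summable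
  rw [Finset.sum_map] at this
  exact this

section
variable {X Y : Type*} [AddCommGroup Y] [Module F Y] [Module.Finite F Y]
  [AddCommGroup X] [Module F X] [Module.Finite F X]
variable {U V : Type*} [AddCommGroup V] [Module F V] [Module.Finite F V]
  [AddCommGroup U] [Module F U] [Module.Finite F U]

lemma abstract_count (dX : X →ₗ[F] X) (hdX : dX ∘ₗ dX = 0) (dY : Y →ₗ[F] Y) (hdY : dY ∘ₗ dY = 0)
    (l H D : ℕ)
    (hX : finrank F X = 2*l+H) (hk : finrank F dX.ker = l + H)
    (hY : finrank F Y = 2*l+H) (hkY : finrank F dY.ker = l + H)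
    (hU : finrank F U = 2*l+H+D) (hV : finrank F V = 2*l+H+D)
    (ι : X →ₗ[F] U) (hι : Function.Injective ι) (q : V →ₗ[F] Y) (hq : Function.Surjective q)
    (R G : ℕ) (B : ℝ)
    (hB : ∀ s : ℕ, s ≤ R → (s * H - (s:ℝ)^2/2) ≤ B - ((s:ℝ) - G)^2/2) :
    (({f | (q ∘ₗ f ∘ₗ ι) ∘ₗ dX = dY ∘ₗ (q ∘ₗ f ∘ₗ ι) ∧ finrank F f.range = R} :
        Set (U →ₗ[F] V)).ncard : ℝ) ≤
      256 * (∑' x, wt x)^3 * (2:ℝ) ^ ((R:ℝ) * (2*l+H+2*D) - R^2/2 + B) := by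
  set S : ℕ × ℕ × ℕ → Set (U →ₗ[F] V) := fun p => {f | ∃ k, R = 2*k+p.1+p.2.1+p.2.2 ∧
      (q ∘ₗ f ∘ₗ ι) ∘ₗ dX = dY ∘ₗ (q ∘ₗ f ∘ₗ ι) ∧
        finrank F ((q ∘ₗ f ∘ₗ ι).range.map dY) = k ∧
        finrank F (q ∘ₗ f ∘ₗ ι).range = 2*k+p.1 ∧
        finrank F (f ∘ₗ ι).range = 2*k+p.1+p.2.1 ∧ finrank F f.range = 2*k+p.1+p.2.1+p.2.2} with hS
  set A : ℝ := (2:ℝ) ^ ((R:ℝ) * (2*l+H+2*D) - R^2/2 + B) with hA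
  have hA0 : 0 < A := by positivity
  have hSp : ∀ s t u : ℕ, s ≤ R → ((S (s, t, u)).ncard : ℝ) ≤
      256 * A * (wt ((s:ℤ) - G) * (wt ((t:ℤ) - (0:ℕ)) * wt ((u:ℤ) - (0:ℕ)))) := by
    intro s t u hs
    by_cases hex : ∃ k, R = 2*k+s+t+u
    · obtain ⟨k, hR⟩ := hex
      have h1 := num_bound _ k s t u l H D (part_count dX hdX dY hdY l H D hX hk hY hkY hU hV ι hι q hq k s t u) R hR
      have h2 : (S (s, t, u)).ncard ≤ _ := Set.ncard_le_ncard (t := {f | (q ∘ₗ f ∘ₗ ι) ∘ₗ dX = dY ∘ₗ (q ∘ₗ f ∘ₗ ι) ∧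
        finrank F ((q ∘ₗ f ∘ₗ ι).range.map dY) = k ∧
        finrank F (q ∘ₗ f ∘ₗ ι).range = 2*k+s ∧
        finrank F (f ∘ₗ ι).range = 2*k+s+t ∧ finrank F f.range = 2*k+s+t+u}) (by
          rintro f ⟨k', hk', h⟩
          have : k' = k := by simp only at hk'; omega
          subst this; exact h) (Set.toFinite _)
      refine (Nat.cast_le.2 h2).trans (h1.trans ?_)
      rw [mul_assoc 256 A]
      refine mul_le_mul_of_nonneg_left ?_ (by norm_num)
      rw [hA, wt, wt, wt, ← Real.rpow_add (by norm_num), ← Real.rpow_add (by norm_num), ← Real.rpow_add (by norm_num)]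
      apply Real.rpow_le_rpow_of_exponent_le (by norm_num)
      have := hB s hs
      push_cast
      linarith
    · have : S (s, t, u) = ∅ := by
        ext f; simp only [Set.mem_empty_iff_false, iff_false]
        rintro ⟨k, hk, _⟩; exact hex ⟨k, hk⟩
      rw [this]
      have := wt_pos ((s:ℤ) - G)
      have := wt_pos ((t:ℤ) - (0:ℕ))
      have := wt_pos ((u:ℤ) - (0:ℕ))
      simp only [Set.ncard_empty, Nat.cast_zero]; positivity
  set I := Finset.range (R+1) ×ˢ Finset.range (R+1) ×ˢ Finset.range (R+1) with hI
  have hsub : ({f | (q ∘ₗ f ∘ₗ ι) ∘ₗ dX = dY ∘ₗ (q ∘ₗ f ∘ₗ ι) ∧ finrank F f.range = R} :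
        Set (U →ₗ[F] V)) ⊆ ⋃ p ∈ I, S p := by
    rintro f ⟨h1, h2⟩
    set c := q ∘ₗ f ∘ₗ ι with hc
    have e1 := finrank_inf_ker dY c.range
    have e2 : finrank F (c.range.map dY) ≤ finrank F ↥(c.range ⊓ dY.ker) := by
      apply Submodule.finrank_mono
      rintro _ ⟨_, ⟨x, rfl⟩, rfl⟩
      exact ⟨⟨dX x, LinearMap.congr_fun h1 x⟩, LinearMap.congr_fun hdY _⟩
    have e3 : finrank F c.range ≤ finrank F (f ∘ₗ ι).range := by
      rw [hc, LinearMap.range_comp]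
      exact Submodule.finrank_map_le _ _
    have e4 : finrank F (f ∘ₗ ι).range ≤ finrank F f.range :=
      Submodule.finrank_mono (LinearMap.range_comp_le_range _ _)
    have hcc : finrank F (q ∘ₗ f ∘ₗ ι).range = finrank F c.range := rfl
    simp only [Set.mem_iUnion]
    refine ⟨(finrank F c.range - 2 * finrank F (c.range.map dY), finrank F (f ∘ₗ ι).range - finrank F c.range,
      finrank F f.range - finrank F (f ∘ₗ ι).range), ?_, finrank F (c.range.map dY), ?_, h1, rfl, ?_, ?_, ?_⟩
    · simp only [hI, Finset.mem_product, Finset.mem_range]; omega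
    all_goals simp only; omega
  have hfin : ((⋃ p ∈ I, S p).ncard : ℝ) ≤ ∑ p ∈ I, ((S p).ncard : ℝ) := by
    exact_mod_cast Finset.set_ncard_biUnion_le I S
  have hT0 : 0 ≤ ∑' x, wt x := tsum_nonneg fun x => (wt_pos x).le
  have hn : ∀ n G : ℕ, 0 ≤ ∑ s ∈ Finset.range n, wt ((s:ℤ) - G) :=
    fun n G => Finset.sum_nonneg fun x _ => (wt_pos _).le
  calc _ ≤ ((⋃ p ∈ I, S p).ncard : ℝ) := Nat.cast_le.2 (Set.ncard_le_ncard hsub (Set.toFinite _))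
    _ ≤ _ := hfin
    _ ≤ ∑ p ∈ I, 256 * A * (wt ((p.1:ℤ) - G) * (wt ((p.2.1:ℤ) - (0:ℕ)) * wt ((p.2.2:ℤ) - (0:ℕ)))) := by
      apply Finset.sum_le_sum
      rintro ⟨s, t, u⟩ hp
      simp only [hI, Finset.mem_product, Finset.mem_range] at hp
      exact hSp s t u (by omega)
    _ = 256 * A * ((∑ s ∈ Finset.range (R+1), wt ((s:ℤ) - G)) * ((∑ s ∈ Finset.range (R+1), wt ((s:ℤ) - (0:ℕ))) *
        (∑ s ∈ Finset.range (R+1), wt ((s:ℤ) - (0:ℕ))))) := by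
      rw [← Finset.mul_sum, hI, Finset.sum_product, Finset.sum_mul]
      congr 1
      apply Finset.sum_congr rfl
      intro s _
      rw [Finset.sum_mul_sum, Finset.sum_product]
      simp only [Finset.mul_sum]
    _ ≤ 256 * A * ((∑' x, wt x) * ((∑' x, wt x) * (∑' x, wt x))) := by
      refine mul_le_mul_of_nonneg_left ?_ (by positivity)
      refine mul_le_mul (wt_sum _ _) (mul_le_mul (wt_sum _ _) (wt_sum _ _) (hn _ _) hT0) ?_ hT0
      exact mul_nonneg (hn _ _) (hn _ _)
    _ = _ := by ring
end
end RC
open Matrix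

namespace RC
open Module

section
variable {M : ℕ}

noncomputable def perp (p : Submodule F (Fin M → F)) : Submodule F (Fin M → F) :=
  p.dualAnnihilator.comap (dotProductEquiv F (Fin M)).toLinearMap

lemma mem_perp {p : Submodule F (Fin M → F)} {x : Fin M → F} :
    x ∈ perp p ↔ ∀ y ∈ p, x ⬝ᵥ y = 0 := by
  simp [perp, Submodule.mem_dualAnnihilator]

lemma finrank_perp (p : Submodule F (Fin M → F)) : finrank F p + finrank F (perp p) = M := by
  have h := Subspace.finrank_add_finrank_dualAnnihilator_eq p
  rw [Module.finrank_fin_fun] at h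
  have e : finrank F (perp p) = finrank F p.dualAnnihilator := 
    LinearEquiv.finrank_eq ((dotProductEquiv F (Fin M)).ofSubmodule' p.dualAnnihilator)
  rw [e]; exact h

lemma perp_sup (p q : Submodule F (Fin M → F)) : perp (p ⊔ q) = perp p ⊓ perp q := by
  ext x
  simp only [mem_perp, Submodule.mem_inf]
  constructor
  · intro h; exact ⟨fun y hy => h y (Submodule.mem_sup_left hy), fun y hy => h y (Submodule.mem_sup_right hy)⟩
  · rintro ⟨h1, h2⟩ y hy
    obtain ⟨a, ha, b, hb, rfl⟩ := Submodule.mem_sup.1 hy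
    rw [dotProduct_add, h1 a ha, h2 b hb, add_zero]

lemma perp_map (δ : Matrix (Fin M) (Fin M) F) (p : Submodule F (Fin M → F)) (x : Fin M → F) :
    x ∈ perp (p.map δ.mulVecLin) ↔ δᵀ *ᵥ x ∈ perp p := by
  simp only [mem_perp]
  constructor
  · intro h y hy
    rw [mulVec_transpose, ← dotProduct_mulVec]
    exact h _ ⟨y, hy, rfl⟩
  · rintro h _ ⟨y, hy, rfl⟩
    have := h y hy
    rwa [mulVec_transpose, ← dotProduct_mulVec] at this

lemma perp_top : perp (⊤ : Submodule F (Fin M → F)) = ⊥ := by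
  have := finrank_perp (⊤ : Submodule F (Fin M → F))
  rw [finrank_top, Module.finrank_fin_fun] at this
  exact Submodule.finrank_eq_zero.1 (by omega)

lemma mem_perp_range (δ : Matrix (Fin M) (Fin M) F) (x : Fin M → F) :
    x ∈ perp (δ.mulVecLin.range) ↔ δᵀ *ᵥ x = 0 := by
  rw [← Submodule.map_top, perp_map, perp_top, Submodule.mem_bot]

lemma map_finrank {V W : Type*} [AddCommGroup V] [Module F V] [Module.Finite F V]
    [AddCommGroup W] [Module F W] (d : V →ₗ[F] W) (A : Submodule F V) :
    finrank F (A.map d) + finrank F ↥(A ⊓ d.ker) = finrank F A := by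
  have h := LinearMap.finrank_range_add_finrank_ker (d.domRestrict A)
  rw [LinearMap.range_domRestrict, LinearMap.ker_domRestrict] at h
  rw [← h, inf_comm, ← Submodule.finrank_map_subtype_eq, Submodule.map_comap_subtype, inf_comm]

/-- structure facts for a square-zero operator `δ` and a subspace `K` meeting its kernel trivially -/
lemma good_facts (δ : Matrix (Fin M) (Fin M) F) (h2 : δ * δ = 0) (L : ℕ) (hL : δ.rank = L)
    (K : Submodule F (Fin M → F)) (hK : K ⊓ δ.mulVecLin.ker = ⊥) (D : ℕ) (hD : finrank F K = D) :
    δ.mulVecLin.range ≤ δ.mulVecLin.ker ∧ D ≤ L ∧ finrank F (K.map δ.mulVecLin) = D ∧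
    K ⊓ δ.mulVecLin.range = ⊥ ∧
    finrank F ↥(K ⊔ K.map δ.mulVecLin) = 2 * D ∧ finrank F ↥(K ⊔ δ.mulVecLin.range) = D + L := by
  have a1 : δ.mulVecLin.range ≤ δ.mulVecLin.ker := by
    rintro _ ⟨x, rfl⟩
    simp [h2]
  have a2 : finrank F (K.map δ.mulVecLin) = D := by
    have := map_finrank δ.mulVecLin K
    rw [hK, finrank_bot] at this; omega
  have a3 : K ⊓ δ.mulVecLin.range = ⊥ := by
    rw [eq_bot_iff, ← hK]; exact inf_le_inf_left _ a1
  have hle : K.map δ.mulVecLin ≤ δ.mulVecLin.range := LinearMap.map_le_range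
  have a4 : K ⊓ K.map δ.mulVecLin = ⊥ := by
    rw [eq_bot_iff, ← a3]; exact inf_le_inf_left _ hle
  have hL' : finrank F δ.mulVecLin.range = L := hL
  have b1 := Submodule.finrank_sup_add_finrank_inf_eq K (K.map δ.mulVecLin)
  have b2 := Submodule.finrank_sup_add_finrank_inf_eq K δ.mulVecLin.range
  have b3 := Submodule.finrank_mono hle
  rw [a4, finrank_bot] at b1
  rw [a3, finrank_bot] at b2
  exact ⟨a1, by omega, a2, a3, by omega, by omega⟩

lemma concrete (M M' L H : ℕ) (hM' : M' ≤ M) (hM : M = 2 * L + H)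
    (δ₁ δ₂ : Matrix (Fin M) (Fin M) F)
    (h1 : δ₁ * δ₁ = 0) (h2 : δ₂ * δ₂ = 0) (r1 : δ₁.rank = L) (r2 : δ₂.rank = L)
    (g1 : ∀ v : Fin M → ZMod 2, δ₁.mulVec v = 0 →
        (∀ i : Fin M', v (Fin.castLE hM' i) = 0) → v = 0)
    (g2 : ∀ v : Fin M → ZMod 2, δ₂.mulVec v = 0 →
        (∀ i : Fin M', v (Fin.castLE hM' i) = 0) → v = 0) (R G : ℕ) (B : ℝ)
    (hB : ∀ s : ℕ, s ≤ R → (s * H - (s:ℝ)^2/2) ≤ B - ((s:ℝ) - G)^2/2) :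
    (Nat.card {h : Matrix (Fin M') (Fin M') (ZMod 2) // h.rank = R ∧
            ∃ g : Matrix (Fin M) (Fin M) (ZMod 2), δ₁ * g + g * δ₂ᵀ = 0 ∧
              ∀ i j : Fin M', g (Fin.castLE hM' i) (Fin.castLE hM' j) = h i j} : ℝ) ≤
      256 * (∑' x, wt x)^3 * (2:ℝ) ^ ((R:ℝ) * M - R^2/2 + B) := by
  set P : Matrix (Fin M') (Fin M) F := (1 : Matrix (Fin M) (Fin M) F).submatrix (Fin.castLE hM') id with hP
  have hPv : ∀ v : Fin M → F, ∀ i, (P *ᵥ v) i = v (Fin.castLE hM' i) := by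
    intro v i
    simp [hP, mulVec, dotProduct, one_apply]
  have hPP : P * Pᵀ = 1 := by
    ext i j
    have := hPv (Pᵀ.col j) i
    change (P *ᵥ (Pᵀ.col j)) i = _
    rw [this]
    simp [hP, one_apply, Fin.ext_iff, eq_comm, Matrix.col]
  have hPP' : ∀ v, P *ᵥ (Pᵀ *ᵥ v) = v := by intro v; simp [hPP]
  set K := P.mulVecLin.ker with hKdef
  have hmemK : ∀ v, v ∈ K ↔ P *ᵥ v = 0 := by intro v; rw [hKdef]; simp
  have hK1 : K ⊓ δ₁.mulVecLin.ker = ⊥ := by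
    rw [eq_bot_iff]; rintro v ⟨a, b⟩
    refine g1 v (by simpa using b) (fun i => ?_)
    rw [← hPv v i, (hmemK v).1 a]; rfl
  have hK2 : K ⊓ δ₂.mulVecLin.ker = ⊥ := by
    rw [eq_bot_iff]; rintro v ⟨a, b⟩
    refine g2 v (by simpa using b) (fun i => ?_)
    rw [← hPv v i, (hmemK v).1 a]; rfl
  have hKr : finrank F K = M - M' := by
    have := LinearMap.finrank_range_add_finrank_ker P.mulVecLin
    rw [LinearMap.range_eq_top.2 (fun v => ⟨Pᵀ *ᵥ v, hPP' v⟩), finrank_top, Module.finrank_fin_fun,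
      Module.finrank_fin_fun, ← hKdef] at this
    omega
  obtain ⟨D, hD⟩ : ∃ D, D = M - M' := ⟨_, rfl⟩
  rw [← hD] at hKr
  obtain ⟨a1, a2, a3, a4, a5, a6⟩ := good_facts δ₁ h1 L r1 K hK1 D hKr
  obtain ⟨b1, b2, b3, b4, b5, b6⟩ := good_facts δ₂ h2 L r2 K hK2 D hKr
  obtain ⟨l, rfl⟩ := Nat.exists_eq_add_of_le a2
  -- range of the extension map
  have hJ : perp K = Pᵀ.mulVecLin.range := by
    symm
    apply Submodule.eq_of_le_of_finrank_eq
    · rintro _ ⟨v, rfl⟩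
      rw [mem_perp]; intro y hy
      rw [mulVecLin_apply, mulVec_transpose, ← dotProduct_mulVec, (hmemK y).1 hy, dotProduct_zero]
    · have := finrank_perp K
      rw [LinearMap.finrank_range_of_inj (fun v w h => by
        have : Pᵀ *ᵥ v = Pᵀ *ᵥ w := h
        rw [← hPP' v, this, hPP']), Module.finrank_fin_fun]
      omega
  have hJP : ∀ x ∈ perp K, Pᵀ *ᵥ (P *ᵥ x) = x := by
    intro x hx; rw [hJ] at hx; obtain ⟨v, rfl⟩ := hx
    rw [mulVecLin_apply, hPP']
  set X : Submodule F (Fin M → F) := perp (K ⊔ K.map δ₂.mulVecLin) with hX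
  have hXmem : ∀ x, x ∈ X ↔ x ∈ perp K ∧ δ₂ᵀ *ᵥ x ∈ perp K := by
    intro x; rw [hX, perp_sup, Submodule.mem_inf, perp_map]
  have h2t : ∀ x, δ₂ᵀ *ᵥ (δ₂ᵀ *ᵥ x) = 0 := by
    intro x; rw [mulVec_mulVec, ← transpose_mul, h2]; simp
  have hXinv : ∀ x ∈ X, δ₂ᵀ.mulVecLin x ∈ X := by
    intro x hx
    rw [hXmem] at hx ⊢
    refine ⟨hx.2, ?_⟩
    rw [mulVecLin_apply, h2t]; exact Submodule.zero_mem _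
  set dX : X →ₗ[F] X := δ₂ᵀ.mulVecLin.restrict hXinv with hdX
  set p := K ⊔ K.map δ₁.mulVecLin with hp
  have hpinv : p ≤ p.comap δ₁.mulVecLin := by
    rw [hp, ← Submodule.map_le_iff_le_comap, Submodule.map_sup]
    refine sup_le le_sup_right ?_
    rintro _ ⟨_, ⟨x, hx, rfl⟩, rfl⟩
    simp [h1]
  set dY : ((Fin M → F) ⧸ p) →ₗ[F] ((Fin M → F) ⧸ p) := p.mapQ p δ₁.mulVecLin hpinv with hdY
  have hmk : ∀ x, p.mkQ (Pᵀ *ᵥ (P *ᵥ x)) = p.mkQ x := by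
    intro x
    rw [← sub_eq_zero, ← map_sub, Submodule.mkQ_apply, Submodule.Quotient.mk_eq_zero]
    refine Submodule.mem_sup_left ((hmemK _).2 ?_)
    rw [mulVec_sub, hPP', sub_self]
  set ι : X →ₗ[F] (Fin M' → F) := P.mulVecLin ∘ₗ X.subtype with hι
  set q : (Fin M' → F) →ₗ[F] ((Fin M → F) ⧸ p) := p.mkQ ∘ₗ Pᵀ.mulVecLin with hq
  have hJι : ∀ x : X, Pᵀ *ᵥ (ι x) = x := fun x => hJP _ ((hXmem _).1 x.2).1
  have key := abstract_count dX ?_ dY ?_ l H D ?_ ?_ ?_ ?_ ?_ ?_ ι ?_ q ?_ R G B hB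
    (U := Fin M' → F) (V := Fin M' → F)
  · rw [show (M:ℝ) = 2 * l + H + 2 * D by rw [hM]; push_cast; ring]
    refine le_trans ?_ key
    have hcard := Nat.card_coe_set_eq {h : Matrix (Fin M') (Fin M') (ZMod 2) | h.rank = R ∧
            ∃ g : Matrix (Fin M) (Fin M) (ZMod 2), δ₁ * g + g * δ₂ᵀ = 0 ∧
              ∀ i j : Fin M', g (Fin.castLE hM' i) (Fin.castLE hM' j) = h i j}
    refine le_trans (le_of_eq (congrArg (Nat.cast : ℕ → ℝ) hcard)) ?_
    refine inj_le _ _ (fun h => h.mulVecLin) ?_ ?_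
    · rintro h ⟨hr, g, hg, hgh⟩
      refine ⟨?_, hr⟩
      have hh : h = P * g * Pᵀ := by
        ext i j
        rw [← hgh, hP]
        simp [mul_apply, one_apply]
      have hc : ∀ x : X, (q ∘ₗ h.mulVecLin ∘ₗ ι) x = p.mkQ (g *ᵥ x) := by
        intro x
        have : h *ᵥ (ι x) = P *ᵥ (g *ᵥ x) := by
          rw [hh, ← mulVec_mulVec, hJι, ← mulVec_mulVec]
        simp only [LinearMap.comp_apply, mulVecLin_apply, hq, this, hmk]
      ext1 x
      rw [LinearMap.comp_apply, LinearMap.comp_apply dY, hc, hc]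
      have e1 : ((dX x : X) : Fin M → F) = δ₂ᵀ *ᵥ (x : Fin M → F) := rfl
      rw [e1, hdY, Submodule.mkQ_apply, Submodule.mkQ_apply, Submodule.mapQ_apply, mulVecLin_apply, mulVec_mulVec, mulVec_mulVec]
      have : g * δ₂ᵀ = δ₁ * g := by
        ext i j
        have h0 := congrFun (congrFun hg i) j
        rw [Matrix.add_apply, Matrix.zero_apply] at h0
        exact (CharTwo.add_eq_zero.1 h0).symm
      rw [this]
    · intro h _ h' _ e
      exact Matrix.toLin'.injective e
  · ext1 x; apply Subtype.ext; exact h2t x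
  · rw [hdY]
    refine LinearMap.ext fun y => ?_
    obtain ⟨x, rfl⟩ := p.mkQ_surjective y
    simp [h1]
  · have := finrank_perp (K ⊔ K.map δ₂.mulVecLin)
    rw [← hX] at this; omega
  · have e : dX.ker = (perp (K ⊔ δ₂.mulVecLin.range)).comap X.subtype := by
      ext x
      rw [LinearMap.mem_ker, Submodule.mem_comap, perp_sup, Submodule.mem_inf, mem_perp_range,
        Subtype.ext_iff]
      exact ⟨fun h => ⟨((hXmem _).1 x.2).1, h⟩, fun h => h.2⟩
    have hle : perp (K ⊔ δ₂.mulVecLin.range) ≤ X := by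
      intro x hx
      rw [perp_sup, Submodule.mem_inf, mem_perp_range] at hx
      rw [hXmem, hx.2]; exact ⟨hx.1, Submodule.zero_mem _⟩
    rw [e, ← Submodule.finrank_map_subtype_eq, Submodule.map_comap_subtype, inf_eq_right.2 hle]
    have := finrank_perp (K ⊔ δ₂.mulVecLin.range)
    omega
  · have := Submodule.finrank_quotient_add_finrank p
    rw [Module.finrank_fin_fun] at this; omega
  · have t1 := Submodule.finrank_quotient_add_finrank p
    rw [Module.finrank_fin_fun] at t1
    have t2 := LinearMap.finrank_range_add_finrank_ker dY
    have e : dY.range = δ₁.mulVecLin.range.map p.mkQ := by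
      ext y
      constructor
      · rintro ⟨z, rfl⟩
        obtain ⟨x, rfl⟩ := p.mkQ_surjective z
        exact ⟨δ₁ *ᵥ x, ⟨x, rfl⟩, rfl⟩
      · rintro ⟨_, ⟨x, rfl⟩, rfl⟩
        exact ⟨p.mkQ x, rfl⟩
    have t3 := map_finrank p.mkQ δ₁.mulVecLin.range
    have e2 : δ₁.mulVecLin.range ⊓ p = K.map δ₁.mulVecLin := by
      rw [inf_comm, hp, sup_comm, sup_inf_assoc_of_le _ LinearMap.map_le_range, a4, sup_bot_eq]
    rw [Submodule.ker_mkQ, e2, ← e, a3] at t3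
    have t4 : finrank F δ₁.mulVecLin.range = D + l := r1
    omega
  · rw [Module.finrank_fin_fun]; omega
  · rw [Module.finrank_fin_fun]; omega
  · intro x y hxy
    apply Subtype.ext
    rw [← hJι x, hxy, hJι]
  · intro y
    obtain ⟨x, rfl⟩ := p.mkQ_surjective y
    exact ⟨P *ᵥ x, hmk x⟩
end
end RC

theorem reduced_cycle_count_bounds :
    ∃ C : ℝ, 0 < C ∧
    ∀ (M M' L H : ℕ) (hM' : M' ≤ M), M = 2 * L + H →
    ∀ (δ₁ δ₂ : Matrix (Fin M) (Fin M) (ZMod 2)),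
      δ₁ * δ₁ = 0 → δ₂ * δ₂ = 0 → δ₁.rank = L → δ₂.rank = L →
      (∀ v : Fin M → ZMod 2, δ₁.mulVec v = 0 →
        (∀ i : Fin M', v (Fin.castLE hM' i) = 0) → v = 0) →
      (∀ v : Fin M → ZMod 2, δ₂.mulVec v = 0 →
        (∀ i : Fin M', v (Fin.castLE hM' i) = 0) → v = 0) →
      ∀ R : ℕ,
        (R ≤ H →
          (Nat.card {h : Matrix (Fin M') (Fin M') (ZMod 2) // h.rank = R ∧
            ∃ g : Matrix (Fin M) (Fin M) (ZMod 2), δ₁ * g + g * δ₂ᵀ = 0 ∧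
              ∀ i j : Fin M', g (Fin.castLE hM' i) (Fin.castLE hM' j) = h i j} : ℝ) ≤
            C * (2 : ℝ) ^ (((M : ℝ) + (H : ℝ)) * (R : ℝ) - (R : ℝ) ^ 2)) ∧
        (H ≤ R →
          (Nat.card {h : Matrix (Fin M') (Fin M') (ZMod 2) // h.rank = R ∧
            ∃ g : Matrix (Fin M) (Fin M) (ZMod 2), δ₁ * g + g * δ₂ᵀ = 0 ∧
              ∀ i j : Fin M', g (Fin.castLE hM' i) (Fin.castLE hM' j) = h i j} : ℝ) ≤
            C * (2 : ℝ) ^ (((M : ℝ) + (H : ℝ) / 2) * (R : ℝ) - (R : ℝ) ^ 2 / 2)) := by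
  have hT : 0 < ∑' x, RC.wt x :=
    RC.wt_summable.tsum_pos (fun x => (RC.wt_pos x).le) 0 (RC.wt_pos 0)
  refine ⟨256 * (∑' x, RC.wt x)^3, by positivity, ?_⟩
  intro M M' L H hM' hM δ₁ δ₂ h1 h2 r1 r2 g1 g2 R
  constructor
  · intro hRH
    have := RC.concrete M M' L H hM' hM δ₁ δ₂ h1 h2 r1 r2 g1 g2 R R ((R:ℝ) * H - (R:ℝ)^2/2) (by
      intro s hs
      have a : (s:ℝ) ≤ R := by exact_mod_cast hs
      have b : (R:ℝ) ≤ H := by exact_mod_cast hRH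
      nlinarith [mul_nonneg (sub_nonneg.2 a) (sub_nonneg.2 b)])
    refine this.trans (le_of_eq ?_)
    congr 2
    ring
  · intro hRH
    have := RC.concrete M M' L H hM' hM δ₁ δ₂ h1 h2 r1 r2 g1 g2 R H ((R:ℝ) * H / 2) (by
      intro s hs
      have b : (H:ℝ) ≤ R := by exact_mod_cast hRH
      have c : (0:ℝ) ≤ H := by positivity
      nlinarith [mul_nonneg c (sub_nonneg.2 b)])
    refine this.trans (le_of_eq ?_)
    congr 2
    ring
end

section
/- There exists a constant C > 0 such that the following holds. Let M = 2L + H and let δ₁, δ₂ : Matrix (Fin M) (Fin M) (ZMod 2) satisfy δₐ·δₐ = 0 and rank(δₐ) = L for a = 1, 2. For a natural number r, let Z(r) be the number of M×M matrices h over ZMod 2 with rank(h) = r and δ₁·h + h·δ₂ᵀ = 0. Then Z(r) depends only on r, L, H (i.e., it is the same for any other pair δ₁', δ₂' with the same L and H), and Z(r) ≤ C · 2^(2(H+L)·r − r²) · Σ_{f=0}^{min(⌊r/2⌋, L)} (2:ℝ)^(−2f² + 2f·(r − H)). -/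
open Matrix

namespace PK

abbrev K := ZMod 2

abbrev W (f s : ℕ) := (Fin f → K) × (Fin f → K) × (Fin s → K)

def DW (f s : ℕ) : W f s →ₗ[K] W f s :=
  LinearMap.prod 0 (LinearMap.prod (LinearMap.fst K _ _) 0)

lemma DW_apply (f s : ℕ) (w : W f s) : DW f s w = (0, w.1, 0) := rfl

lemma finrank_W (f s : ℕ) : Module.finrank K (W f s) = 2 * f + s := by
  simp [W]; ring

section
variable {V : Type*} [AddCommGroup V] [Module K V] [FiniteDimensional K V]

lemma range_le_ker (D : V →ₗ[K] V) (hD : ∀ v, D (D v) = 0) :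
    LinearMap.range D ≤ LinearMap.ker D := by
  rintro _ ⟨v, rfl⟩; exact hD v

lemma two_mul_le (D : V →ₗ[K] V) (hD : ∀ v, D (D v) = 0) :
    2 * Module.finrank K (LinearMap.range D) ≤ Module.finrank K V := by
  have h1 := Submodule.finrank_mono (range_le_ker D hD)
  have h2 := D.finrank_range_add_finrank_ker
  omega

lemma std (D : V →ₗ[K] V) (hD : ∀ v, D (D v) = 0) (f s : ℕ)
    (hf : Module.finrank K (LinearMap.range D) = f) (hs : Module.finrank K V = 2 * f + s) :
    ∃ e : W f s ≃ₗ[K] V, ∀ w, D (e w) = e (DW f s w) := by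
  have h2 := D.finrank_range_add_finrank_ker
  have hle := range_le_ker D hD
  obtain ⟨σ, hσ⟩ := D.rangeRestrict.exists_rightInverse_of_surjective D.range_rangeRestrict
  have hσ' : ∀ y, D (σ y) = y := fun y => by
    have := LinearMap.congr_fun hσ y
    exact congrArg Subtype.val this
  obtain ⟨Q, hQ⟩ := Submodule.exists_isCompl (Submodule.comap (LinearMap.ker D).subtype (LinearMap.range D))
  have hfr : Module.finrank K (Submodule.comap (LinearMap.ker D).subtype (LinearMap.range D)) = f := by
    rw [← hf]
    exact (Submodule.comapSubtypeEquivOfLe hle).finrank_eq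
  have hQs : Module.finrank K Q = s := by
    have := Submodule.finrank_add_eq_of_isCompl hQ
    omega
  let α : (Fin f → K) ≃ₗ[K] LinearMap.range D := LinearEquiv.ofFinrankEq _ _ (by simp [hf])
  let γ : (Fin s → K) ≃ₗ[K] Q := LinearEquiv.ofFinrankEq _ _ (by simp [hQs])
  let e0 : W f s →ₗ[K] V :=
    LinearMap.coprod (σ ∘ₗ α.toLinearMap)
      (LinearMap.coprod ((LinearMap.range D).subtype ∘ₗ α.toLinearMap)
        ((LinearMap.ker D).subtype ∘ₗ Q.subtype ∘ₗ γ.toLinearMap))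
  have he0 : ∀ x y z, e0 (x, y, z) = σ (α x) + ((α y : V) + ((γ z : LinearMap.ker D) : V)) :=
    fun x y z => rfl
  have hDe : ∀ x y z, D (e0 (x, y, z)) = α x := by
    intro x y z
    rw [he0, map_add, map_add, hσ', hle (α y).2, (γ z : LinearMap.ker D).2]; simp
  have hinj : Function.Injective e0 := by
    rw [injective_iff_map_eq_zero]
    rintro ⟨x, y, z⟩ h
    have hx : x = 0 := by
      have := hDe x y z
      rw [h, map_zero] at this
      exact α.map_eq_zero_iff.1 (Subtype.ext this.symm)
    subst hx
    rw [he0] at h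
    simp only [map_zero, zero_add] at h
    have hz : (γ z : LinearMap.ker D) = 0 := by
      have := Submodule.disjoint_def.1 hQ.disjoint (γ z : LinearMap.ker D) (by
        rw [Submodule.mem_comap]
        have : ((γ z : LinearMap.ker D) : V) = - (α y : V) := by
          rw [eq_neg_iff_add_eq_zero, add_comm]; exact h
        rw [Submodule.subtype_apply, this]
        exact Submodule.neg_mem _ (α y).2) (γ z).2
      exact this
    have hz' : z = 0 := γ.map_eq_zero_iff.1 (Subtype.ext hz)
    rw [hz] at h
    have hy : y = 0 := α.map_eq_zero_iff.1 (Subtype.ext (by simpa using h))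
    subst hy hz'
    rfl
  refine ⟨LinearEquiv.ofInjectiveOfFinrankEq e0 hinj (by rw [finrank_W, hs]), ?_⟩
  rintro ⟨x, y, z⟩
  change D (e0 (x, y, z)) = e0 (0, x, 0)
  rw [hDe, he0]; simp

end

/-- Homomorphisms -/
abbrev Hm {U V : Type*} [AddCommGroup U] [Module K U] [AddCommGroup V] [Module K V]
    (DU : U →ₗ[K] U) (DV : V →ₗ[K] V) := {φ : U →ₗ[K] V // ∀ u, DV (φ u) = φ (DU u)}

lemma natcard_pow (V : Type*) [AddCommGroup V] [Module K V] [FiniteDimensional K V] :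
    Nat.card V = 2 ^ Module.finrank K V := by
  rw [Module.natCard_eq_pow_finrank (K := K)]; simp

section
variable {U V : Type*} [AddCommGroup U] [Module K U] [FiniteDimensional K U]
  [AddCommGroup V] [Module K V] [FiniteDimensional K V]

lemma finite_fd (V : Type*) [AddCommGroup V] [Module K V] [FiniteDimensional K V] : Finite V :=
  Module.finite_of_finite K

lemma card_Hm_le (DU : U →ₗ[K] U) (DV : V →ₗ[K] V) (f s : ℕ) (e : W f s ≃ₗ[K] U)
    (he : ∀ w, DU (e w) = e (DW f s w)) :
    Nat.card (Hm DU DV) ≤ 2 ^ (Module.finrank K V * f + Module.finrank K (LinearMap.ker DV) * s) := by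
  have key : Function.Injective (fun φ : Hm DU DV =>
      ((φ.1 ∘ₗ e.toLinearMap ∘ₗ LinearMap.inl K _ _,
        LinearMap.codRestrict (LinearMap.ker DV)
          (φ.1 ∘ₗ e.toLinearMap ∘ₗ LinearMap.inr K _ _ ∘ₗ LinearMap.inr K _ _) (by
            intro z
            rw [LinearMap.mem_ker]
            simp only [LinearMap.comp_apply, LinearEquiv.coe_coe]
            rw [φ.2, he, DW_apply]
            simp only [LinearMap.inr_apply]
            have h0 : e (0, 0, 0) = 0 := e.map_zero
            rw [h0, map_zero])) :
        ((Fin f → K) →ₗ[K] V) × ((Fin s → K) →ₗ[K] LinearMap.ker DV))) := by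
    rintro ⟨φ, hφ⟩ ⟨ψ, hψ⟩ h
    rw [Prod.mk.injEq] at h
    obtain ⟨h1, h2⟩ := h
    have h1' : ∀ x, φ (e (x, 0, 0)) = ψ (e (x, 0, 0)) := fun x => LinearMap.congr_fun h1 x
    have h2' : ∀ z, φ (e (0, 0, z)) = ψ (e (0, 0, z)) := fun z =>
      congrArg Subtype.val (LinearMap.congr_fun h2 z)
    have h3' : ∀ y, φ (e (0, y, 0)) = ψ (e (0, y, 0)) := fun y => by
      have : e (0, y, 0) = DU (e (y, 0, 0)) := by rw [he, DW_apply]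
      rw [this, ← hφ, ← hψ, h1']
    apply Subtype.ext
    apply LinearMap.ext
    intro u
    obtain ⟨⟨x, y, z⟩, rfl⟩ := e.surjective u
    have : ((x, y, z) : W f s) = (x, 0, 0) + ((0, y, 0) + (0, 0, z)) := by simp
    simp only [this, map_add, h1', h2', h3']
  have : Finite (((Fin f → K) →ₗ[K] V) × ((Fin s → K) →ₗ[K] LinearMap.ker DV)) := finite_fd _
  refine (Nat.card_le_card_of_injective _ key).trans (le_of_eq ?_)
  rw [natcard_pow]
  congr 1
  simp [Module.finrank_linearMap]
  ring

end

lemma card_GL (n : ℕ) : (2:ℝ) ^ (n * n) ≤ 4 * (Nat.card (GL (Fin n) K) : ℝ) := by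
  rw [Matrix.card_GL_field]
  have hcast : (((∏ i : Fin n, (Fintype.card K ^ n - Fintype.card K ^ (i:ℕ)) : ℕ)) : ℝ)
      = ∏ i ∈ Finset.range n, ((2:ℝ) ^ n - 2 ^ i) := by
    rw [Fin.prod_univ_eq_prod_range (fun i => Fintype.card K ^ n - Fintype.card K ^ i) n]
    push_cast
    apply Finset.prod_congr rfl
    intro i hi
    rw [Nat.cast_sub (Nat.pow_le_pow_right (by simp) (Finset.mem_range.1 hi).le)]
    simp
  rw [hcast]
  have h1 : ∏ i ∈ Finset.range n, ((2:ℝ) ^ n - 2 ^ i)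
      = 2 ^ (n * n) * ∏ i ∈ Finset.range n, (1 - (1/2:ℝ) ^ (i + 1)) := by
    have h0 : (2:ℝ) ^ (n * n) = ∏ _i ∈ Finset.range n, (2:ℝ) ^ n := by
      rw [Finset.prod_const, Finset.card_range, pow_mul]
    rw [← Finset.prod_range_reflect, h0, ← Finset.prod_mul_distrib]
    apply Finset.prod_congr rfl
    intro i hi
    have hi := Finset.mem_range.1 hi
    have : (2:ℝ) ^ n = 2 ^ (n - 1 - i) * 2 ^ (i + 1) := by
      rw [← pow_add]; congr 1; omega
    rw [mul_sub, mul_one, sub_right_inj, this, mul_assoc, ← mul_pow]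
    norm_num
  have h2 : ∀ m : ℕ, (1/4 : ℝ) + (1/2) ^ (m + 2) ≤ ∏ i ∈ Finset.range (m+1), (1 - (1/2:ℝ) ^ (i + 1)) := by
    intro m
    induction m with
    | zero => norm_num
    | succ m ih =>
      rw [Finset.prod_range_succ]
      have ht : (0:ℝ) < (1/2) ^ (m) := by positivity
      have ht1 : ((1/2:ℝ)) ^ (m) ≤ 1 := pow_le_one₀ (by norm_num) (by norm_num)
      have hnn : (0:ℝ) ≤ 1 - (1/2) ^ (m + 1 + 1) := by
        rw [pow_succ, pow_succ]; nlinarith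
      refine le_trans ?_ (mul_le_mul_of_nonneg_right ih hnn)
      simp only [pow_succ]
      nlinarith
  have h3 : (1/4 : ℝ) ≤ ∏ i ∈ Finset.range n, (1 - (1/2:ℝ) ^ (i + 1)) := by
    cases n with
    | zero => norm_num
    | succ m => exact le_trans (by have : (0:ℝ) < (1/2) ^ (m+2) := by positivity
                                   linarith) (h2 m)
  rw [h1]
  have : (0:ℝ) < 2 ^ (n*n) := by positivity
  nlinarith

abbrev Au (f s : ℕ) := {g : W f s ≃ₗ[K] W f s // ∀ u, DW f s (g u) = g (DW f s u)}

def mk0 (f s : ℕ) (A B : (Fin f → K) →ₗ[K] (Fin f → K)) (G : (Fin f → K) →ₗ[K] (Fin s → K))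
    (E : (Fin s → K) →ₗ[K] (Fin f → K)) (F : (Fin s → K) →ₗ[K] (Fin s → K)) :
    W f s →ₗ[K] W f s :=
  LinearMap.coprod (LinearMap.prod A (LinearMap.prod B G))
    (LinearMap.coprod (LinearMap.prod 0 (LinearMap.prod A 0))
      (LinearMap.prod 0 (LinearMap.prod E F)))

lemma mk0_apply (f s : ℕ) (A B G E F x y z) :
    mk0 f s A B G E F (x, y, z) = (A x, B x + (A y + E z), G x + F z) := by
  simp [mk0]

lemma mk0_inj (f s : ℕ) (A B : (Fin f → K) →ₗ[K] (Fin f → K)) (G : (Fin f → K) →ₗ[K] (Fin s → K))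
    (E : (Fin s → K) →ₗ[K] (Fin f → K)) (F : (Fin s → K) →ₗ[K] (Fin s → K)) (hA : Function.Injective A) (hF : Function.Injective F) :
    Function.Injective (mk0 f s A B G E F) := by
  rw [injective_iff_map_eq_zero] at *
  rintro ⟨x, y, z⟩ h
  rw [mk0_apply, Prod.mk_eq_zero, Prod.mk_eq_zero] at h
  obtain ⟨h1, h2, h3⟩ := h
  have hx := hA _ h1
  subst hx
  simp only [map_zero, zero_add] at h2 h3
  have hz := hF _ h3
  subst hz
  simp only [map_zero, add_zero] at h2
  have hy := hA _ h2
  subst hy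
  rfl

lemma GL_inj {n : ℕ} (A : GL (Fin n) K) : Function.Injective (Matrix.toLin' A.1) := by
  intro x y h
  simp only [Matrix.toLin'_apply] at h
  have := congrArg (fun v => (A⁻¹ : GL (Fin n) K).1 *ᵥ v) h
  simpa [Matrix.mulVec_mulVec, ← Units.val_mul] using this

noncomputable def mkA (f s : ℕ)
    (p : GL (Fin f) K × GL (Fin s) K × ((Fin f → K) →ₗ[K] (Fin f → K)) ×
      ((Fin f → K) →ₗ[K] (Fin s → K)) × ((Fin s → K) →ₗ[K] (Fin f → K))) : Au f s :=
  ⟨LinearEquiv.ofInjectiveEndo (mk0 f s (Matrix.toLin' p.1.1) p.2.2.1 p.2.2.2.1 p.2.2.2.2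
      (Matrix.toLin' p.2.1.1)) (mk0_inj _ _ _ _ _ _ _ (GL_inj _) (GL_inj _)), by
    rintro ⟨x, y, z⟩
    simp only [LinearEquiv.coe_ofInjectiveEndo, DW_apply, mk0_apply]
    simp⟩

lemma mkA_inj (f s : ℕ) : Function.Injective (mkA f s) := by
  rintro ⟨A, F, B, G, E⟩ ⟨A', F', B', G', E'⟩ h
  have h0 : ∀ x y z, mk0 f s (Matrix.toLin' A.1) B G E (Matrix.toLin' F.1) (x, y, z)
      = mk0 f s (Matrix.toLin' A'.1) B' G' E' (Matrix.toLin' F'.1) (x, y, z) := by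
    intro x y z
    have := congrArg (fun g : Au f s => g.1 (x, y, z)) h
    simpa only [mkA, LinearEquiv.coe_ofInjectiveEndo] using this
  simp only [mk0_apply, Prod.mk.injEq] at h0
  have hA : A = A' := Units.ext (Matrix.toLin'.injective (LinearMap.ext fun x => (h0 x 0 0).1))
  have hF : F = F' := Units.ext (Matrix.toLin'.injective (LinearMap.ext fun z => by
    simpa using (h0 0 0 z).2.2))
  have hB : B = B' := LinearMap.ext fun x => by simpa using (h0 x 0 0).2.1
  have hG : G = G' := LinearMap.ext fun x => by simpa using (h0 x 0 0).2.2
  have hE : E = E' := LinearMap.ext fun z => by simpa using (h0 0 0 z).2.1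
  subst hA hF hB hG hE
  rfl

lemma finite_Au (f s : ℕ) : Finite (Au f s) := by
  have : Finite (W f s ≃ₗ[K] W f s) := 
    Finite.of_injective (fun g => (g : W f s → W f s)) DFunLike.coe_injective
  infer_instance

lemma card_Au (f s : ℕ) : (2:ℝ) ^ (2 * f * f + 2 * f * s + s * s) ≤ 16 * (Nat.card (Au f s) : ℝ) := by
  have := finite_Au f s
  have h := Nat.card_le_card_of_injective _ (mkA_inj f s)
  rw [Nat.card_prod, Nat.card_prod, Nat.card_prod, Nat.card_prod, natcard_pow ((Fin f → K) →ₗ[K] (Fin f → K)),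
    natcard_pow ((Fin f → K) →ₗ[K] (Fin s → K)), natcard_pow ((Fin s → K) →ₗ[K] (Fin f → K))] at h
  simp only [Module.finrank_linearMap, Module.finrank_fin_fun] at h
  have h' : (Nat.card (GL (Fin f) K) : ℝ) * ((Nat.card (GL (Fin s) K) : ℝ) *
      (2 ^ (f * f) * (2 ^ (f * s) * 2 ^ (s * f)))) ≤ (Nat.card (Au f s) : ℝ) := by exact_mod_cast h
  have hf := card_GL f
  have hs := card_GL s
  calc (2:ℝ) ^ (2 * f * f + 2 * f * s + s * s)
      = (2 ^ (f * f) * 2 ^ (s * s)) * (2 ^ (f * f) * (2 ^ (f * s) * 2 ^ (s * f))) := by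
        simp only [← pow_add]; congr 1; ring
    _ ≤ ((4 * (Nat.card (GL (Fin f) K) : ℝ)) * (4 * (Nat.card (GL (Fin s) K) : ℝ)))
          * (2 ^ (f * f) * (2 ^ (f * s) * 2 ^ (s * f))) := by gcongr
    _ ≤ _ := by linarith

section
variable {U V : Type*} [AddCommGroup U] [Module K U] [FiniteDimensional K U]
  [AddCommGroup V] [Module K V] [FiniteDimensional K V]

abbrev Zf (DU : U →ₗ[K] U) (DV : V →ₗ[K] V) (r f : ℕ) :=
  {h : U →ₗ[K] V // (Module.finrank K (LinearMap.range h) = r ∧ ∀ u, DV (h u) = h (DU u)) ∧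
    Module.finrank K (LinearMap.range (DV ∘ₗ h)) = f}

lemma restr (DU : U →ₗ[K] U) (DV : V →ₗ[K] V) (hV : ∀ v, DV (DV v) = 0) (h : U →ₗ[K] V)
    (hc : ∀ u, DV (h u) = h (DU u)) :
    ∃ D : LinearMap.range h →ₗ[K] LinearMap.range h, (∀ x, (D x : V) = DV x) ∧
      (∀ x, D (D x) = 0) ∧
      Module.finrank K (LinearMap.range D) = Module.finrank K (LinearMap.range (DV ∘ₗ h)) := by
  have hinv : ∀ x ∈ LinearMap.range h, DV x ∈ LinearMap.range h := by
    rintro _ ⟨u, rfl⟩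
    exact ⟨DU u, (hc u).symm⟩
  refine ⟨DV.restrict hinv, fun x => rfl, fun x => Subtype.ext (hV x), ?_⟩
  have : LinearMap.range (DV ∘ₗ h) =
      (LinearMap.range (DV.restrict hinv)).map (LinearMap.range h).subtype := by
    ext v
    simp only [LinearMap.mem_range, Submodule.mem_map, LinearMap.comp_apply, Submodule.subtype_apply]
    constructor
    · rintro ⟨u, rfl⟩
      exact ⟨_, ⟨⟨h u, u, rfl⟩, rfl⟩, rfl⟩
    · rintro ⟨_, ⟨⟨_, u, rfl⟩, rfl⟩, rfl⟩
      exact ⟨u, rfl⟩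
  rw [this]
  exact (LinearEquiv.finrank_eq (Submodule.equivMapOfInjective _ (Submodule.subtype_injective _) _))

lemma factor (DU : U →ₗ[K] U) (DV : V →ₗ[K] V) (hV : ∀ v, DV (DV v) = 0) (f s : ℕ)
    (h : Zf DU DV (2 * f + s) f) :
    ∃ p : Hm (DW f s) DV × Hm DU (DW f s), Function.Injective p.1.1 ∧ p.1.1 ∘ₗ p.2.1 = h.1 := by
  obtain ⟨h, ⟨hr, hc⟩, hf⟩ := h
  obtain ⟨D, hD1, hD2, hD3⟩ := restr DU DV hV h hc
  obtain ⟨e, he⟩ := std D hD2 f s (hD3.trans hf) hr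
  refine ⟨⟨⟨(LinearMap.range h).subtype ∘ₗ e.toLinearMap, ?_⟩,
    ⟨e.symm.toLinearMap ∘ₗ h.rangeRestrict, ?_⟩⟩, ?_, ?_⟩
  · intro w
    change DV (e w : V) = (e (DW f s w) : V)
    rw [← he, hD1]
  · intro u
    change DW f s (e.symm (h.rangeRestrict u)) = e.symm (h.rangeRestrict (DU u))
    rw [LinearEquiv.eq_symm_apply, ← he, LinearEquiv.apply_symm_apply]
    apply Subtype.ext
    rw [hD1]
    exact hc u
  · exact (Submodule.subtype_injective _).comp e.injective
  · ext u
    change ((e (e.symm (h.rangeRestrict u)) : LinearMap.range h) : V) = h u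
    rw [LinearEquiv.apply_symm_apply]; rfl

lemma card_Zf_mul (DU : U →ₗ[K] U) (DV : V →ₗ[K] V) (hV : ∀ v, DV (DV v) = 0) (f s : ℕ) :
    Nat.card (Zf DU DV (2 * f + s) f) * Nat.card (Au f s) ≤
      Nat.card (Hm (DW f s) DV) * Nat.card (Hm DU (DW f s)) := by
  choose p hp1 hp2 using factor DU DV hV f s
  rw [← Nat.card_prod, ← Nat.card_prod]
  have : Finite (W f s →ₗ[K] V) := finite_fd _
  have : Finite (U →ₗ[K] W f s) := finite_fd _
  refine Nat.card_le_card_of_injective (fun q : Zf DU DV (2 * f + s) f × Au f s =>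
    ((⟨(p q.1).1.1 ∘ₗ q.2.1.toLinearMap, ?_⟩, ⟨q.2.1.symm.toLinearMap ∘ₗ (p q.1).2.1, ?_⟩) :
      Hm (DW f s) DV × Hm DU (DW f s))) ?_
  · intro u
    change DV ((p q.1).1.1 (q.2.1 u)) = (p q.1).1.1 (q.2.1 _)
    rw [(p q.1).1.2, q.2.2]
  · intro u
    change DW f s (q.2.1.symm ((p q.1).2.1 u)) = q.2.1.symm ((p q.1).2.1 (DU u))
    rw [LinearEquiv.eq_symm_apply, ← q.2.2, LinearEquiv.apply_symm_apply, (p q.1).2.2]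
  · rintro ⟨h, g⟩ ⟨h', g'⟩ heq
    rw [Prod.mk.injEq, Subtype.mk.injEq, Subtype.mk.injEq] at heq
    obtain ⟨h1, h2⟩ := heq
    dsimp only at h1 h2
    have hh : h = h' := by
      apply Subtype.ext
      rw [← hp2 h, ← hp2 h']
      ext u
      have e1 := LinearMap.congr_fun h1 (g.1.symm ((p h).2.1 u))
      have e2 := LinearMap.congr_fun h2 u
      simp only [LinearMap.comp_apply, LinearEquiv.coe_coe, LinearEquiv.apply_symm_apply] at e1 e2 ⊢
      rw [e1, e2, LinearEquiv.apply_symm_apply]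
    subst hh
    congr 1
    apply Subtype.ext
    ext1 w
    exact hp1 h (LinearMap.congr_fun h1 w)

lemma ker_DW (f s : ℕ) : Module.finrank K (LinearMap.ker (DW f s)) = f + s := by
  have : LinearMap.ker (DW f s) = LinearMap.ker (LinearMap.fst K (Fin f → K) ((Fin f → K) × (Fin s → K))) := by
    ext w
    simp [LinearMap.mem_ker, DW_apply]
  rw [this]
  have h := (LinearMap.fst K (Fin f → K) ((Fin f → K) × (Fin s → K))).finrank_range_add_finrank_ker
  rw [LinearMap.range_eq_top.2 LinearMap.fst_surjective, finrank_top, finrank_W] at h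
  rw [Module.finrank_fin_fun] at h
  change _ + Module.finrank K (LinearMap.ker _) = _ at h
  linarith

lemma bound_f (DU : U →ₗ[K] U) (DV : V →ₗ[K] V) (hU : ∀ v, DU (DU v) = 0)
    (hV : ∀ v, DV (DV v) = 0) (L H : ℕ)
    (rU : Module.finrank K (LinearMap.range DU) = L) (rV : Module.finrank K (LinearMap.range DV) = L)
    (dU : Module.finrank K U = 2 * L + H) (dV : Module.finrank K V = 2 * L + H) (f s : ℕ) :
    (Nat.card (Zf DU DV (2 * f + s) f) : ℝ) * 2 ^ (2 * f * f + 2 * f * s + s * s) ≤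
      16 * 2 ^ (((2 * L + H) * f + (L + H) * s) + ((2 * f + s) * L + (f + s) * H)) := by
  obtain ⟨e, he⟩ := std DU hU L H rU dU
  have h1 := card_Hm_le (DW f s) DV f s (LinearEquiv.refl K _) (fun w => rfl)
  have h2 := card_Hm_le DU (DW f s) L H e he
  have hk := DV.finrank_range_add_finrank_ker
  have hk' : Module.finrank K (LinearMap.ker DV) = L + H := by omega
  rw [hk', dV] at h1
  rw [ker_DW, finrank_W] at h2
  have h3 := (card_Zf_mul DU DV hV f s).trans (Nat.mul_le_mul h1 h2)
  rw [← pow_add] at h3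
  have h3' : (Nat.card (Zf DU DV (2 * f + s) f) : ℝ) * (Nat.card (Au f s) : ℝ) ≤
    2 ^ (((2 * L + H) * f + (L + H) * s) + ((2 * f + s) * L + (f + s) * H)) := by exact_mod_cast h3
  calc _ ≤ (Nat.card (Zf DU DV (2 * f + s) f) : ℝ) * (16 * (Nat.card (Au f s) : ℝ)) := by
        gcongr; exact card_Au f s
    _ ≤ _ := by linarith

abbrev Zt (DU : U →ₗ[K] U) (DV : V →ₗ[K] V) (r : ℕ) :=
  {h : U →ₗ[K] V // Module.finrank K (LinearMap.range h) = r ∧ ∀ u, DV (h u) = h (DU u)}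

lemma bound_t (DU : U →ₗ[K] U) (DV : V →ₗ[K] V) (hU : ∀ v, DU (DU v) = 0)
    (hV : ∀ v, DV (DV v) = 0) (L H : ℕ)
    (rU : Module.finrank K (LinearMap.range DU) = L) (rV : Module.finrank K (LinearMap.range DV) = L)
    (dU : Module.finrank K U = 2 * L + H) (dV : Module.finrank K V = 2 * L + H) (r : ℕ) :
    (Nat.card (Zt DU DV r) : ℝ) ≤
          16 * (2 : ℝ) ^ (2 * ((H : ℝ) + (L : ℝ)) * (r : ℝ) - (r : ℝ) ^ 2) *
            ∑ f ∈ Finset.range (min (r / 2) L + 1),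
              (2 : ℝ) ^ (-2 * (f : ℝ) ^ 2 + 2 * (f : ℝ) * ((r : ℝ) - (H : ℝ))) := by
  have hlt : ∀ h : Zt DU DV r,
      Module.finrank K (LinearMap.range (DV ∘ₗ h.1)) < min (r / 2) L + 1 := by
    rintro ⟨h, hr, hc⟩
    obtain ⟨D, hD1, hD2, hD3⟩ := restr DU DV hV h hc
    have h1 := two_mul_le D hD2
    have h2 := Submodule.finrank_mono (LinearMap.range_comp_le_range h DV)
    dsimp only
    omega
  have : Finite (U →ₗ[K] V) := finite_fd _
  have hsum : Nat.card (Zt DU DV r) ≤ ∑ f : Fin (min (r / 2) L + 1), Nat.card (Zf DU DV r f) := by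
    rw [← Nat.card_sigma]
    refine Nat.card_le_card_of_injective (fun h : Zt DU DV r =>
      (⟨⟨_, hlt h⟩, ⟨h.1, h.2, rfl⟩⟩ : Σ f : Fin (min (r / 2) L + 1), Zf DU DV r f)) ?_
    intro h h' heq
    apply Subtype.ext
    exact congrArg (fun q : (Σ f : Fin (min (r / 2) L + 1), Zf DU DV r f) => q.2.1) heq
  rw [Fin.sum_univ_eq_sum_range (fun f => Nat.card (Zf DU DV r f))] at hsum
  have hsum' : (Nat.card (Zt DU DV r) : ℝ) ≤
      ∑ f ∈ Finset.range (min (r / 2) L + 1), (Nat.card (Zf DU DV r f) : ℝ) := by exact_mod_cast hsum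
  refine hsum'.trans ?_
  rw [Finset.mul_sum]
  apply Finset.sum_le_sum
  intro f hf
  have hf := Finset.mem_range.1 hf
  obtain ⟨s, rfl⟩ : ∃ s, r = 2 * f + s := ⟨r - 2 * f, by omega⟩
  have hb := bound_f DU DV hU hV L H rU rV dU dV f s
  rw [← le_div_iff₀ (by positivity)] at hb
  refine hb.trans (le_of_eq ?_)
  rw [mul_assoc (16:ℝ), ← Real.rpow_add (by norm_num), mul_div_assoc, ← Real.rpow_natCast,
    ← Real.rpow_natCast, ← Real.rpow_sub (by norm_num)]
  congr 2
  push_cast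
  ring

end

section
variable {V : Type*} [AddCommGroup V] [Module K V] [FiniteDimensional K V]

lemma conj (D D' : V →ₗ[K] V) (hD : ∀ v, D (D v) = 0) (hD' : ∀ v, D' (D' v) = 0) (f s : ℕ)
    (hf : Module.finrank K (LinearMap.range D) = f) (hf' : Module.finrank K (LinearMap.range D') = f)
    (hs : Module.finrank K V = 2 * f + s) :
    ∃ P : V ≃ₗ[K] V, ∀ v, D' (P v) = P (D v) := by
  obtain ⟨e, he⟩ := std D hD f s hf hs
  obtain ⟨e', he'⟩ := std D' hD' f s hf' hs
  refine ⟨e.symm.trans e', fun v => ?_⟩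
  obtain ⟨w, rfl⟩ := e.surjective v
  simp [he, he']

lemma card_Zt_le (DU DV DU' DV' : V →ₗ[K] V) (P Q : V ≃ₗ[K] V) (hP : ∀ v, DU' (P v) = P (DU v))
    (hQ : ∀ v, DV' (Q v) = Q (DV v)) (r : ℕ) :
    Nat.card (Zt DU DV r) = Nat.card (Zt DU' DV' r) := by
  refine Nat.card_congr (Equiv.subtypeEquiv (LinearEquiv.arrowCongr P Q).toEquiv ?_)
  intro h
  have hr : LinearMap.range (LinearEquiv.arrowCongr P Q h) = (LinearMap.range h).map Q.toLinearMap := by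
    ext v
    simp only [LinearMap.mem_range, Submodule.mem_map, LinearEquiv.arrowCongr_apply]
    constructor
    · rintro ⟨u, rfl⟩
      exact ⟨_, ⟨_, rfl⟩, rfl⟩
    · rintro ⟨_, ⟨u, rfl⟩, rfl⟩
      exact ⟨P u, by simp⟩
  change _ ↔ Module.finrank K (LinearMap.range (LinearEquiv.arrowCongr P Q h)) = r ∧ 
    ∀ u, DV' (LinearEquiv.arrowCongr P Q h u) = LinearEquiv.arrowCongr P Q h (DU' u)
  rw [hr, LinearEquiv.finrank_map_eq, P.toEquiv.forall_congr_left]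
  simp only [LinearEquiv.arrowCongr_apply, hQ]
  refine and_congr Iff.rfl ?_
  refine forall_congr' fun a => ?_
  have : P.symm (DU' a) = DU (P.symm a) := by
    rw [LinearEquiv.symm_apply_eq, ← hP, LinearEquiv.apply_symm_apply]
  rw [this, Q.injective.eq_iff]
  rfl

end

lemma card_mat (M r : ℕ) (δ₁ δ₂ : Matrix (Fin M) (Fin M) (ZMod 2)) :
    Nat.card {h : Matrix (Fin M) (Fin M) (ZMod 2) // h.rank = r ∧ δ₁ * h + h * δ₂ᵀ = 0} =
      Nat.card (Zt (Matrix.toLin' δ₂ᵀ) (Matrix.toLin' δ₁) r) := by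
  refine Nat.card_congr (Equiv.subtypeEquiv Matrix.toLin'.toEquiv ?_)
  intro h
  refine and_congr Iff.rfl ?_
  have h1 : δ₁ * h + h * δ₂ᵀ = 0 ↔ δ₁ * h = h * δ₂ᵀ := by
    rw [add_eq_zero_iff_eq_neg]
    have : -(h * δ₂ᵀ) = h * δ₂ᵀ := by
      ext i j; simp [ZMod.neg_eq_self_mod_two]
    rw [this]
  rw [h1, ← Matrix.toLin'.injective.eq_iff, Matrix.toLin'_mul, Matrix.toLin'_mul, LinearMap.ext_iff]
  rfl

lemma sqz {M : ℕ} {δ : Matrix (Fin M) (Fin M) (ZMod 2)} (h : δ * δ = 0) (v) :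
    Matrix.toLin' δ (Matrix.toLin' δ v) = 0 := by
  simp [Matrix.mulVec_mulVec, h]

lemma sqzT {M : ℕ} {δ : Matrix (Fin M) (Fin M) (ZMod 2)} (h : δ * δ = 0) : δᵀ * δᵀ = 0 := by
  rw [← Matrix.transpose_mul, h, Matrix.transpose_zero]

end PK

/-- Counting rank-`r` matrices in the kernel of the product boundary map: the number
`Z(r)` of `M×M` matrices `h` of rank `r` with `δ₁h + hδ₂ᵀ = 0` depends only on
`r, L, H` (for boundary operators of rank `L` with `M = 2L + H`), and satisfies
`Z(r) ≤ C·2^{2(H+L)r − r²}·Σ_{f=0}^{min(⌊r/2⌋,L)} 2^{−2f² + 2f(r−H)}`. -/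
theorem product_kernel_rank_count :
    ∃ C : ℝ, 0 < C ∧
    ∀ (M L H : ℕ), M = 2 * L + H →
    ∀ δ₁ δ₂ : Matrix (Fin M) (Fin M) (ZMod 2),
      δ₁ * δ₁ = 0 → δ₂ * δ₂ = 0 → δ₁.rank = L → δ₂.rank = L →
      ∀ r : ℕ,
        (∀ δ₁' δ₂' : Matrix (Fin M) (Fin M) (ZMod 2),
          δ₁' * δ₁' = 0 → δ₂' * δ₂' = 0 → δ₁'.rank = L → δ₂'.rank = L →
          Nat.card {h : Matrix (Fin M) (Fin M) (ZMod 2) //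
              h.rank = r ∧ δ₁ * h + h * δ₂ᵀ = 0} =
            Nat.card {h : Matrix (Fin M) (Fin M) (ZMod 2) //
              h.rank = r ∧ δ₁' * h + h * δ₂'ᵀ = 0}) ∧
        (Nat.card {h : Matrix (Fin M) (Fin M) (ZMod 2) //
            h.rank = r ∧ δ₁ * h + h * δ₂ᵀ = 0} : ℝ) ≤
          C * (2 : ℝ) ^ (2 * ((H : ℝ) + (L : ℝ)) * (r : ℝ) - (r : ℝ) ^ 2) *
            ∑ f ∈ Finset.range (min (r / 2) L + 1),
              (2 : ℝ) ^ (-2 * (f : ℝ) ^ 2 + 2 * (f : ℝ) * ((r : ℝ) - (H : ℝ))) := by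
  refine ⟨16, by norm_num, ?_⟩
  intro M L H hM δ₁ δ₂ h1 h2 r1 r2 r
  have hd : Module.finrank (ZMod 2) (Fin M → ZMod 2) = 2 * L + H := by simp [hM]
  refine ⟨?_, ?_⟩
  · intro δ₁' δ₂' h1' h2' r1' r2'
    rw [PK.card_mat, PK.card_mat]
    obtain ⟨P, hP⟩ := PK.conj (Matrix.toLin' δ₂ᵀ) (Matrix.toLin' δ₂'ᵀ) (PK.sqz (PK.sqzT h2))
      (PK.sqz (PK.sqzT h2')) L H ((Matrix.rank_transpose δ₂).trans r2)
      ((Matrix.rank_transpose δ₂').trans r2') hd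
    obtain ⟨Q, hQ⟩ := PK.conj (Matrix.toLin' δ₁) (Matrix.toLin' δ₁') (PK.sqz h1)
      (PK.sqz h1') L H r1 r1' hd
    exact PK.card_Zt_le _ _ _ _ P Q hP hQ r
  · rw [PK.card_mat]
    exact PK.bound_t _ _ (PK.sqz (PK.sqzT h2)) (PK.sqz h1) L H
      ((Matrix.rank_transpose δ₂).trans r2) r1 hd hd r
end

section
/- For every ε > 0 there exist constants c > 0 and C > 0 such that for all natural numbers M and all R with 1 ≤ R ≤ M the following holds. Let N_R be the number of M×M matrices over ZMod 2 of rank R. Then the number of M×M matrices Z over ZMod 2 with rank(Z) = R such that every row and every column of Z has at most c·M nonzero entries is at most C · (2:ℝ)^(R² − 2(1−ε)·M·R) · N_R. -/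
open Matrix

lemma ulw_exI {M R : ℕ} (Z : Matrix (Fin M) (Fin M) (ZMod 2)) (h : Z.rank = R) :
    ∃ I : Fin R → Fin M, ∀ i, Z i ∈ Submodule.span (ZMod 2) (Set.range fun k => Z (I k)) := by
  rw [Matrix.rank_eq_finrank_span_row] at h
  obtain ⟨f, hf, hs, -⟩ := Submodule.exists_fun_fin_finrank_span_eq (ZMod 2) (Set.range Z.row)
  subst h
  choose I hI using hf
  refine ⟨I, fun i => ?_⟩
  have e : (fun k => Z (I k)) = f := funext hI
  rw [e, hs]
  exact Submodule.subset_span ⟨i, rfl⟩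

lemma ulw_inj {M R : ℕ} (Z Z' : Matrix (Fin M) (Fin M) (ZMod 2)) (I J : Fin R → Fin M)
    (h1 : ∀ i, Z i ∈ Submodule.span (ZMod 2) (Set.range fun k => Z (I k)))
    (h2 : ∀ i, Z' i ∈ Submodule.span (ZMod 2) (Set.range fun k => Z' (I k)))
    (h3 : ∀ i, Zᵀ i ∈ Submodule.span (ZMod 2) (Set.range fun k => Zᵀ (J k)))
    (hI : ∀ k, Z (I k) = Z' (I k)) (hJ : ∀ k, Zᵀ (J k) = Z'ᵀ (J k)) : Z = Z' := by
  have e : (fun k => Z' (I k)) = fun k => Z (I k) := funext fun k => (hI k).symm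
  rw [e] at h2
  ext i j
  obtain ⟨a, ha⟩ := (Submodule.mem_span_range_iff_exists_fun _).1 (Submodule.sub_mem _ (h1 i) (h2 i))
  obtain ⟨b, hb⟩ := (Submodule.mem_span_range_iff_exists_fun _).1 (h3 j)
  have hb' : ∀ p, Z p j = ∑ l, b l * Z p (J l) := fun p => by
    have := congrFun hb p
    simpa [Finset.sum_apply] using this.symm
  have ha' : ∀ q, Z i q - Z' i q = ∑ k, a k * Z (I k) q := fun q => by
    have := congrFun ha q
    simpa [Finset.sum_apply] using this.symm
  have h0 : ∀ l, ∑ k, a k * Z (I k) (J l) = 0 := fun l => by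
    rw [← ha']
    have := congrFun (hJ l) i
    simp only [Matrix.transpose_apply] at this
    rw [this, sub_self]
  have : Z i j - Z' i j = 0 := by
    rw [ha']
    simp_rw [hb', Finset.mul_sum]
    rw [Finset.sum_comm]
    apply Finset.sum_eq_zero
    intro l _
    rw [← mul_zero (b l), ← h0 l, Finset.mul_sum]
    exact Finset.sum_congr rfl fun k _ => by ring
  exact sub_eq_zero.1 this

lemma ulw_upper (M R : ℕ) (P : (Fin M → ZMod 2) → Prop) :
    Nat.card {Z : Matrix (Fin M) (Fin M) (ZMod 2) // Z.rank = R ∧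
            (∀ i : Fin M, P (Z i)) ∧ (∀ j : Fin M, P (Zᵀ j))} ≤
      (M * Nat.card {v : Fin M → ZMod 2 // P v}) ^ (2 * R) := by
  have h : ∀ Z : {Z : Matrix (Fin M) (Fin M) (ZMod 2) // Z.rank = R ∧
            (∀ i : Fin M, P (Z i)) ∧ (∀ j : Fin M, P (Zᵀ j))}, ∃ I J : Fin R → Fin M, 
      (∀ i, Z.1 i ∈ Submodule.span (ZMod 2) (Set.range fun k => Z.1 (I k))) ∧
      (∀ i, Z.1ᵀ i ∈ Submodule.span (ZMod 2) (Set.range fun k => Z.1ᵀ (J k))) := fun Z => by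
    obtain ⟨I, hI⟩ := ulw_exI Z.1 Z.2.1
    obtain ⟨J, hJ⟩ := ulw_exI Z.1ᵀ ((Matrix.rank_transpose _).trans Z.2.1)
    exact ⟨I, J, hI, hJ⟩
  choose I J hI hJ using h
  let f : {Z : Matrix (Fin M) (Fin M) (ZMod 2) // Z.rank = R ∧
            (∀ i : Fin M, P (Z i)) ∧ (∀ j : Fin M, P (Zᵀ j))} →
      ((Fin R → Fin M) × (Fin R → Fin M)) × 
      ((Fin R → {v : Fin M → ZMod 2 // P v}) × (Fin R → {v : Fin M → ZMod 2 // P v})) :=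
    fun Z => ((I Z, J Z), (fun k => ⟨Z.1 (I Z k), Z.2.2.1 _⟩, fun k => ⟨Z.1ᵀ (J Z k), Z.2.2.2 _⟩))
  have hf : Function.Injective f := by
    intro Z Z' e
    simp only [f, Prod.mk.injEq] at e
    obtain ⟨⟨e1, e2⟩, e3, e4⟩ := e
    apply Subtype.ext
    apply ulw_inj Z.1 Z'.1 (I Z) (J Z) (hI Z) (e1 ▸ hI Z') (hJ Z)
    · intro k
      have := congrArg Subtype.val (congrFun e3 k)
      simpa [e1] using this
    · intro k
      have := congrArg Subtype.val (congrFun e4 k)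
      simpa [e2] using this
  refine (Nat.card_le_card_of_injective f hf).trans (le_of_eq ?_)
  simp only [Nat.card_prod, Nat.card_fun, Nat.card_fin]
  ring

lemma ulw_lower (R k : ℕ) :
    2 ^ ((R + k) * R + k * R) ≤ 2 ^ R * 
      Nat.card {Z : Matrix (Fin (R + k)) (Fin (R + k)) (ZMod 2) // Z.rank = R} := by
  let mk : (Fin R → (Fin (R + k) → ZMod 2)) → (Fin k → Fin R → ZMod 2) →
      Matrix (Fin (R + k)) (Fin (R + k)) (ZMod 2) := fun s B =>
    Fin.addCases (motive := fun _ => Fin (R + k) → ZMod 2) s (fun i => ∑ l, B i l • s l)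
  have hl : ∀ s B i, mk s B (Fin.castAdd k i) = s i := fun s B i => by simp [mk]
  have hr : ∀ s B i, mk s B (Fin.natAdd R i) = ∑ l, B i l • s l := fun s B i => by simp [mk]
  have hrank : ∀ s B, LinearIndependent (ZMod 2) s → (mk s B).rank = R := fun s B hs => by
    rw [Matrix.rank_eq_finrank_span_row]
    have : Submodule.span (ZMod 2) (Set.range (mk s B).row) = Submodule.span (ZMod 2) (Set.range s) := by
      apply le_antisymm
      · rw [Submodule.span_le]
        rintro _ ⟨i, rfl⟩
        change mk s B i ∈ _
        refine Fin.addCases (fun i => ?_) (fun i => ?_) i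
        · rw [hl]; exact Submodule.subset_span ⟨i, rfl⟩
        · rw [hr]
          exact Submodule.sum_mem _ fun l _ => Submodule.smul_mem _ _ (Submodule.subset_span ⟨l, rfl⟩)
      · apply Submodule.span_mono
        rintro _ ⟨i, rfl⟩
        exact ⟨Fin.castAdd k i, hl s B i⟩
    rw [this, finrank_span_eq_card hs, Fintype.card_fin]
  let f : {s : Fin R → (Fin (R + k) → ZMod 2) // LinearIndependent (ZMod 2) s} ×
      (Fin k → Fin R → ZMod 2) → {Z : Matrix (Fin (R + k)) (Fin (R + k)) (ZMod 2) // Z.rank = R} :=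
    fun p => ⟨mk p.1.1 p.2, hrank _ _ p.1.2⟩
  have hf : Function.Injective f := by
    rintro ⟨⟨s, hs⟩, B⟩ ⟨⟨s', hs'⟩, B'⟩ e
    have e := congrArg Subtype.val e
    simp only [f] at e
    have e1 : s = s' := by
      funext i
      rw [← hl s B, ← hl s' B', e]
    subst e1
    have e2 : B = B' := by
      funext i l
      have h := congrFun e (Fin.natAdd R i)
      rw [hr, hr, ← sub_eq_zero, ← Finset.sum_sub_distrib] at h
      simp_rw [← sub_smul] at h
      exact sub_eq_zero.1 (Fintype.linearIndependent_iff.1 hs _ h l)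
    subst e2
    rfl
  have h := Nat.card_le_card_of_injective f hf
  have hc := card_linearIndependent (K := ZMod 2) (V := Fin (R + k) → ZMod 2) (k := R) (by simp)
  rw [Nat.card_prod, hc] at h
  simp only [Nat.card_eq_fintype_card, Fintype.card_fun, Fintype.card_fin, ZMod.card, Module.finrank_fintype_fun_eq_card] at h
  rw [Nat.card_eq_fintype_card]
  refine le_trans ?_ (Nat.mul_le_mul_left _ h)
  have hp : (2 ^ (R + k)) ^ R ≤ 2 ^ R * ∏ i : Fin R, (2 ^ (R + k) - 2 ^ (i : ℕ)) := by
    have : ∏ i : Fin R, 2 ^ (R + k) ≤ ∏ i : Fin R, (2 * (2 ^ (R + k) - 2 ^ (i : ℕ))) := by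
      apply Finset.prod_le_prod' 
      intro i _
      have : 2 ^ ((i : ℕ) + 1) ≤ 2 ^ (R + k) := Nat.pow_le_pow_right (by norm_num) (by omega)
      rw [pow_succ] at this
      omega
    simpa [Finset.prod_mul_distrib] using this
  calc 2 ^ ((R + k) * R + k * R) = (2 ^ (R + k)) ^ R * (2 ^ R) ^ k := by
        rw [pow_add, pow_mul, ← pow_mul 2 R k, mul_comm k R]
    _ ≤ _ := by
        rw [← mul_assoc]
        exact Nat.mul_le_mul_right _ hp

lemma ulw_low (M : ℕ) (x t : ℝ) (hx : 0 < x) (hx1 : x ≤ 1) :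
    (Nat.card {v : Fin M → ZMod 2 // ((Finset.univ.filter fun j => v j ≠ 0).card : ℝ) ≤ t} : ℝ)
      * x ^ t ≤ (1 + x) ^ M := by
  classical
  have h1 : ∑ v : Fin M → ZMod 2, x ^ (Finset.univ.filter fun j => v j ≠ 0).card = (1 + x) ^ M := by
    have : ∀ v : Fin M → ZMod 2, x ^ (Finset.univ.filter fun j => v j ≠ 0).card =
        ∏ j, (fun a : ZMod 2 => if a ≠ 0 then x else 1) (v j) := fun v => by
      rw [Finset.prod_ite]; simp
    simp_rw [this]
    have h := Finset.sum_pow' (Finset.univ : Finset (ZMod 2)) (fun a => if a ≠ 0 then x else 1) M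
    rw [Fintype.piFinset_univ] at h
    rw [← h]
    congr 1
    have hu : (Finset.univ : Finset (ZMod 2)) = {0, 1} := by decide
    rw [hu, Finset.sum_pair (by decide)]
    simp
  rw [← h1, Nat.card_eq_fintype_card, Fintype.card_subtype, ← nsmul_eq_mul, ← Finset.sum_const]
  refine le_trans (Finset.sum_le_sum (g := fun v : Fin M → ZMod 2 => x ^ (Finset.univ.filter fun j => v j ≠ 0).card) ?_) (Finset.sum_le_sum_of_subset_of_nonneg (Finset.filter_subset _ _) fun _ _ _ => by positivity)
  intro v hv
  rw [← Real.rpow_natCast]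
  exact Real.rpow_le_rpow_of_exponent_ge hx hx1 (Finset.mem_filter.1 hv).2

lemma ulw_const (ε : ℝ) (hε : 0 < ε) : ∃ c : ℝ, 0 < c ∧ ∀ M : ℕ, 1 ≤ c * M →
    2 * (M : ℝ) * (Nat.card {v : Fin M → ZMod 2 //
      ((Finset.univ.filter fun j => v j ≠ 0).card : ℝ) ≤ c * M} : ℝ) ≤ 2 ^ (ε * M) := by
  set δ := ε / 3 with hδ
  have hδ0 : 0 < δ := by positivity
  have hq : (1 : ℝ) < 2 ^ δ := Real.one_lt_rpow (by norm_num) hδ0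
  obtain ⟨x, hx, hx1, hxq⟩ : ∃ x : ℝ, 0 < x ∧ x < 1 ∧ 1 + x ≤ 2 ^ δ := by
    refine ⟨min (2 ^ δ - 1) (1 / 2), lt_min (by linarith) (by norm_num), ?_, ?_⟩
    · exact (min_le_right _ _).trans_lt (by norm_num)
    · linarith [min_le_left ((2 : ℝ) ^ δ - 1) (1 / 2)]
  have hlx : Real.log x < 0 := Real.log_neg hx hx1
  have hl2 : 0 < Real.log 2 := Real.log_pos (by norm_num)
  have ht := tendsto_pow_const_div_const_pow_of_one_lt 1 hq
  obtain ⟨M0, hM0⟩ := Filter.eventually_atTop.1 (ht.eventually (gt_mem_nhds (show (0:ℝ) < 1 / 2 by norm_num)))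
  refine ⟨min (δ * Real.log 2 / (-Real.log x)) (1 / (M0 + 1)), lt_min (div_pos (by positivity) (by linarith)) (by positivity), ?_⟩
  set c := min (δ * Real.log 2 / (-Real.log x)) (1 / ((M0 : ℝ) + 1)) with hc
  intro M hM
  have hM1 : M0 ≤ M := by
    have : c * M ≤ 1 / ((M0 : ℝ) + 1) * M := mul_le_mul_of_nonneg_right (min_le_right _ _) (by positivity)
    have h2 : (1 : ℝ) ≤ 1 / ((M0 : ℝ) + 1) * M := hM.trans this
    rw [one_div, inv_mul_eq_div, le_div_iff₀ (by positivity)] at h2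
    have : (M0 : ℝ) ≤ M := by linarith
    exact_mod_cast this
  have hA : 2 * (M : ℝ) ≤ (2 ^ δ) ^ M := by
    have := hM0 M hM1
    rw [pow_one, div_lt_iff₀ (by positivity)] at this
    linarith
  have hxc : 1 ≤ x ^ (c * M) * (2 ^ δ) ^ M := by
    rw [Real.rpow_mul hx.le, Real.rpow_natCast, ← mul_pow]
    apply one_le_pow₀
    rw [Real.rpow_def_of_pos hx, Real.rpow_def_of_pos (by norm_num : (0:ℝ) < 2), ← Real.exp_add]
    apply Real.one_le_exp
    have : c ≤ δ * Real.log 2 / (-Real.log x) := min_le_left _ _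
    rw [le_div_iff₀ (by linarith)] at this
    linarith
  have hL := ulw_low M x (c * M) hx hx1.le
  set L := (Nat.card {v : Fin M → ZMod 2 //
      ((Finset.univ.filter fun j => v j ≠ 0).card : ℝ) ≤ c * M} : ℝ) with hLdef
  have hL0 : 0 ≤ L := Nat.cast_nonneg _
  have hL2 : L ≤ (2 ^ δ) ^ M * (2 ^ δ) ^ M := by
    calc L ≤ L * (x ^ (c * M) * (2 ^ δ) ^ M) := le_mul_of_one_le_right hL0 hxc
      _ = (L * x ^ (c * M)) * (2 ^ δ) ^ M := by ring
      _ ≤ _ := by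
        gcongr
        exact hL.trans (pow_le_pow_left₀ (by positivity) hxq M)
  calc 2 * (M : ℝ) * L ≤ (2 ^ δ) ^ M * ((2 ^ δ) ^ M * (2 ^ δ) ^ M) := by gcongr
    _ = 2 ^ (ε * M) := by
      rw [← Real.rpow_natCast, ← Real.rpow_mul (by norm_num), ← Real.rpow_add (by norm_num), ← Real.rpow_add (by norm_num), hδ]
      congr 1; ring

theorem uniform_low_weight_probability_bound :
    ∀ ε : ℝ, 0 < ε → ∃ c : ℝ, 0 < c ∧ ∃ C : ℝ, 0 < C ∧
      ∀ M R : ℕ, 1 ≤ R → R ≤ M →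
        (Nat.card {Z : Matrix (Fin M) (Fin M) (ZMod 2) // Z.rank = R ∧
            (∀ i : Fin M, ((Finset.univ.filter fun j => Z i j ≠ 0).card : ℝ) ≤ c * M) ∧
            (∀ j : Fin M, ((Finset.univ.filter fun i => Z i j ≠ 0).card : ℝ) ≤ c * M)} :
          ℝ) ≤
        C * (2 : ℝ) ^ ((R : ℝ) ^ 2 - 2 * (1 - ε) * (M : ℝ) * (R : ℝ)) *
          (Nat.card {Z : Matrix (Fin M) (Fin M) (ZMod 2) // Z.rank = R} : ℝ) := by
  intro ε hε
  obtain ⟨c, hc, H⟩ := ulw_const ε hε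
  refine ⟨c, hc, 1, one_pos, fun M R hR hRM => ?_⟩
  by_cases hM : 1 ≤ c * M
  · have hH := H M hM
    have hU := ulw_upper M R (fun v => ((Finset.univ.filter fun j => v j ≠ 0).card : ℝ) ≤ c * M)
    set L := Nat.card {v : Fin M → ZMod 2 //
      ((Finset.univ.filter fun j => v j ≠ 0).card : ℝ) ≤ c * M} with hLdef
    have hU' := (Nat.cast_le (α := ℝ)).2 hU
    refine le_trans hU' ?_
    obtain ⟨k, rfl⟩ := Nat.exists_eq_add_of_le hRM
    have hLow := (Nat.cast_le (α := ℝ)).2 (ulw_lower R k)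
    set N := Nat.card {Z : Matrix (Fin (R + k)) (Fin (R + k)) (ZMod 2) // Z.rank = R}
    push_cast at hLow hH ⊢
    set m : ℝ := (R : ℝ) + k with hm
    have h1 : (2 * (m * L)) ^ (2 * R) ≤ (2 ^ (ε * m)) ^ (2 * R) :=
      pow_le_pow_left₀ (by positivity) (by linarith) _
    have h2 : (2 : ℝ) ^ (2 * R) * (m * L) ^ (2 * R) ≤ (2 : ℝ) ^ (2 * ε * m * R) := by
      rw [← mul_pow]
      refine h1.trans (le_of_eq ?_)
      rw [← Real.rpow_natCast, ← Real.rpow_mul (by norm_num)]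
      congr 1; push_cast; ring
    have h3 : (2 : ℝ) ^ R * (m * L) ^ (2 * R) ≤ (2 : ℝ) ^ (2 * ε * m * R) := by
      refine le_trans ?_ h2
      gcongr
      · norm_num
      · omega
    have h4 : (2 : ℝ) ^ (2 * ε * m * R) ≤ 2 ^ ((R:ℝ) ^ 2 - 2 * (1 - ε) * m * R) * (2 ^ R * N) := by
      refine le_trans (le_of_eq ?_) (mul_le_mul_of_nonneg_left hLow (by positivity))
      rw [← Real.rpow_natCast 2 ((R + k) * R + k * R), ← Real.rpow_add (by norm_num)]
      congr 1; push_cast; rw [hm]; ring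
    have h5 := h3.trans h4
    have : (0:ℝ) < 2 ^ R := by positivity
    refine le_of_mul_le_mul_left (h5.trans (le_of_eq ?_)) this
    ring
  · have : Nat.card {Z : Matrix (Fin M) (Fin M) (ZMod 2) // Z.rank = R ∧
            (∀ i : Fin M, ((Finset.univ.filter fun j => Z i j ≠ 0).card : ℝ) ≤ c * M) ∧
            (∀ j : Fin M, ((Finset.univ.filter fun i => Z i j ≠ 0).card : ℝ) ≤ c * M)} = 0 := by
      rw [Nat.card_eq_zero]
      left
      constructor
      rintro ⟨Z, h1, h2, -⟩
      have : Z = 0 := by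
        ext i j
        by_contra hne
        have h3 : 1 ≤ (Finset.univ.filter fun j => Z i j ≠ 0).card :=
          Finset.card_pos.2 ⟨j, Finset.mem_filter.2 ⟨Finset.mem_univ _, hne⟩⟩
        have h4 : (1:ℝ) ≤ ((Finset.univ.filter fun j => Z i j ≠ 0).card : ℝ) := by exact_mod_cast h3
        exact hM (h4.trans (h2 i))
      rw [this, Matrix.rank_zero] at h1
      omega
    rw [this]
    push_cast
    positivity
end
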